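/- Suppose p = 2. Then for every 'odd' integer n ≥ 1 (i.e., q−1 does not divide n), the three elements π̃, ζ(n) and ζ(n,n) are algebraically independent over k̄. -/

import Mathlib

/-!
Write `q = #𝔽_q`, a power of `2`. The proof realizes the three numbers, up to factors in `k̄`, as
values of formal series satisfying difference equations, shows that these series are algebraically
independent, and transfers the independence to the values.

*The series.* By the Anderson–Thakur interpolation (`good_powerSum`) the power sums
`S_d(n) = ∑ a ^ (-n)`, over monic `a` of degree `d`, have the form
`Γ(θ) ℓ_d ^ n S_d(n) = h(θ, θ ^ (q ^ d))` for a two-variable polynomial `h` of small degree. Let `H`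
be the reverse of `h` in its second variable. There are series `u, f, g ∈ 𝔽_q[t][[y]]` with
`u(y ^ q) = (1 + t y ^ q) u`, `y ^ e f(y ^ q) = (1 + t y ^ q) ^ n (f - H)` and
`y ^ (2 e) g(y ^ q) = (1 + t y ^ q) ^ (2 n) (g - H (f + H))`, whose coefficients have so small a
`t`-degree that they can be evaluated at `t = θ`, `y = θ ^ (-q ^ d)` (`bdd`, `ev`). The value of `u`
at `y = 1/θ` is the product defining `π̃` (`tprod_eq_ev_u`). The values of `f` and `g` at `y = 1/θ`
are found by telescoping (`tendsto_telescope`, `tendsto_telescope_two`): after normalization the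
values `φ_d`, `γ_d` at `y = θ ^ (-q ^ d)` satisfy `φ_{d+1} = φ_d - s_d` and
`γ_{d+1} = γ_d - s_d (φ_d + s_d)` with `s_d = Γ(θ) S_d(n)`. In characteristic two
`φ_d + s_d = φ_{d+1}`, so that one obtains `Γ(θ) ζ(n)` and `Γ(θ)² ζ(n, n)`.

*Independence of the series.* Over `K = 𝔽_q(t, y)`, with the endomorphism `y ↦ y ^ q`, the
equations say that `f` generates an extension by the additive group, `g` a further one above it, and
`u` an independent multiplicative one; `tower_algebraicIndependent` reduces the algebraic
independence of `u, f, g` to the absence of nontrivial solutions in `K` of a few difference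
equations. In characteristic two the algebraicity of `g` over `K(f)` would produce a solution of the
equation of some `f ^ (2 ^ e)` in `K` (`no_quadratic_solution`). Such a solution in `K` is excluded
in `base_algebraicIndependent`: it is a polynomial in `1/y` vanishing at `1/y = t`; it agrees with
`f ^ (2 ^ e)`, up to a power of `y`, since the homogeneous equation has no nonzero Laurent series
solution when `q - 1 ∤ n` (`hord_laurent`); and this contradicts `ζ(n) ≠ 0` (`hval_laurent`).

*From series to values.* Given a relation between the monomials in the values at `y = 1/θ`, the
functional equations express the values at `y = θ ^ (-q ^ d)` linearly through those at `1/θ`, with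
coefficients of degree `O(q ^ d)`. Siegel's lemma (`exists_small_solution`) gives a nonzero
combination of the series, with coefficients in `𝔽_q[t, y]` of small degree, that vanishes at
`y = θ ^ (-q ^ d)`; but for large `d` such a series has a nonzero value there (`ev_ne_zero`). This is
`lifting`, and `algIndep_values` is its consequence for algebraic relations. Finally independence
over `𝔽_q[θ]` gives independence over `k̄` (`algIndep_kbar`), and factors in `k̄` do not matter
(`algIndep_smul`).
-/

/-!
Setting: `Fq` is a finite field with `q = Fintype.card Fq` elements and characteristic
`p = ringChar Fq`.  The field `k_∞ = 𝔽_q((1/θ))` is realized as `Kinf Fq`, the field of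
formal Laurent series over `Fq` in the variable `u = θ⁻¹`; thus `theta Fq = u⁻¹` plays
the role of `θ` (it is the single Hahn series supported in degree `-1`), and polynomials
in `θ` are evaluated in `Kinf Fq` via `Polynomial.aeval (theta Fq)`.  `KinfBar Fq` is a
fixed algebraic closure `k̄_∞` of `k_∞`.
-/

set_option synthInstance.maxHeartbeats 1000000
set_option maxHeartbeats 1000000

noncomputable section

variable (Fq : Type) [Field Fq] [Fintype Fq]

/-- `k_∞ = 𝔽_q((1/θ))`, with its `1/θ`-adic (valued) topology. -/
abbrev Kinf := LaurentSeries Fq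

/-- `θ ∈ k_∞`, the inverse of the Laurent-series variable. -/
def theta : Kinf Fq := HahnSeries.single (-1 : ℤ) (1 : Fq)

/-- The multizeta value `ζ(n 0, …, n (d-1))`: the sum, over all `d`-tuples of monic
polynomials `a i ∈ 𝔽_q[θ]` with `deg (a 0) > deg (a 1) > … > deg (a (d-1)) ≥ 0`, of
`1 / (a 0 ^ n 0 ⋯ a (d-1) ^ n (d-1))`, computed in `k_∞`. -/
def mzv (d : ℕ) (n : Fin d → ℕ) : Kinf Fq :=
  ∑' a : {a : Fin d → Polynomial Fq //
      (∀ i, (a i).Monic) ∧ ∀ i j : Fin d, i < j → (a j).degree < (a i).degree},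
    (∏ i, Polynomial.aeval (theta Fq) (a.1 i) ^ n i)⁻¹

/-- A fixed algebraic closure `k̄_∞` of `k_∞`. -/
abbrev KinfBar := AlgebraicClosure (Kinf Fq)

/-- The image of `θ` in `k̄_∞`. -/
def thetaBar : KinfBar Fq := algebraMap (Kinf Fq) (KinfBar Fq) (theta Fq)

/-- The fundamental period `π̃ = (−θ)^{q/(q−1)} ∏_{i≥1} (1−θ^{1−qⁱ})⁻¹` of the Carlitz
module, relative to a chosen `(q−1)`-st root `η` of `−θ` (so `(−θ)^{q/(q−1)} = η ^ q`);
the convergent product is computed in `k_∞` and mapped into `k̄_∞`. -/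
def pitilde (η : KinfBar Fq) : KinfBar Fq :=
  η ^ Fintype.card Fq *
    algebraMap (Kinf Fq) (KinfBar Fq)
      (∏' i : ℕ, (1 - theta Fq ^ ((1 : ℤ) - (Fintype.card Fq : ℤ) ^ (i + 1)))⁻¹)

/-- `k = 𝔽_q(θ)`, as a subfield of `k̄_∞`. -/
def kSub : Subfield (KinfBar Fq) :=
  Subfield.closure
    (Set.range (fun a : Fq => algebraMap (Kinf Fq) (KinfBar Fq) (algebraMap Fq (Kinf Fq) a)) ∪
      {thetaBar Fq})

/-- `k̄`, the algebraic closure of `k` inside `k̄_∞`. -/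
def kbar : IntermediateField (kSub Fq) (KinfBar Fq) :=
  algebraicClosure (kSub Fq) (KinfBar Fq)

/-! ### Semi-invariant polynomials in characteristic two -/

section
open Polynomial

namespace DiffAlg

section Twist

variable {E : Type*} [Field E]

/-- The `σ`-semilinear endomorphism of `E[Z]` with `Z ↦ α (Z + η)`. -/
noncomputable def twist (σ : E →+* E) (α η : E) : E[X] →+* E[X] :=
  (compRingHom (C α * (X + C η))).comp (mapRingHom σ)

variable (σ : E →+* E) {α η : E}

theorem twist_apply (P : E[X]) : twist σ α η P = (P.map σ).comp (C α * (X + C η)) := rfl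

theorem twist_C (c : E) : twist σ α η (C c) = C (σ c) := by simp [twist_apply]

theorem twist_X : twist σ α η X = C α * (X + C η) := by simp [twist_apply]

theorem natDegree_affine (hα : α ≠ 0) : (C α * (X + C η)).natDegree = 1 := by
  rw [natDegree_C_mul hα, natDegree_X_add_C]

theorem natDegree_twist (hα : α ≠ 0) (P : E[X]) :
    (twist σ α η P).natDegree = P.natDegree := by
  rw [twist_apply, natDegree_comp, natDegree_affine hα, natDegree_map, mul_one]

theorem coeff_twist (hα : α ≠ 0) {P : E[X]} {d : ℕ} (hd : P.natDegree ≤ d) :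
    (twist σ α η P).coeff d = σ (P.coeff d) * α ^ d := by
  rcases hd.lt_or_eq with h | rfl
  · rw [coeff_eq_zero_of_natDegree_lt h, coeff_eq_zero_of_natDegree_lt]
    · simp
    · rwa [natDegree_twist σ hα]
  · have h := leadingCoeff_comp (p := P.map σ) (q := C α * (X + C η))
      (by rw [natDegree_affine hα]; exact one_ne_zero)
    rw [← twist_apply, leadingCoeff, natDegree_twist σ hα] at h
    rw [h]
    simp [leadingCoeff_mul]

theorem twist_ne_zero (hα : α ≠ 0) {P : E[X]} (hP : P ≠ 0) : twist σ α η P ≠ 0 := by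
  intro h
  have := coeff_twist (η := η) σ hα (le_refl P.natDegree)
  rw [h, coeff_zero, eq_comm, mul_eq_zero] at this
  rcases this with h1 | h1
  · rw [map_eq_zero] at h1
    exact hP (leadingCoeff_eq_zero.1 h1)
  · exact pow_ne_zero _ hα h1

/-- In characteristic two, if `r` is the exact power of two dividing `k = r * m`, then the first
nonleading term of `(Z + η) ^ k` is `η ^ r Z ^ (k - r)`. -/
theorem coeff_X_add_C_pow_two [CharP E 2] (e m d : ℕ) (hm : Odd m) (hd1 : 2 ^ e * m ≤ d + 2 ^ e)
    (hd2 : d < 2 ^ e * m) :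
    ((X + C η : E[X]) ^ (2 ^ e * m)).coeff d = if d + 2 ^ e = 2 ^ e * m then η ^ 2 ^ e else 0 := by
  have : Fact (Nat.Prime 2) := ⟨Nat.prime_two⟩
  have hr : 0 < 2 ^ e := by positivity
  have h1 : (X + C η : E[X]) ^ (2 ^ e * m) = expand E (2 ^ e) ((X + C (η ^ 2 ^ e)) ^ m) := by
    rw [pow_mul, add_pow_char_pow]
    simp
  rw [h1, coeff_expand hr]
  split_ifs with h2 h3 h3
  · obtain ⟨j, rfl⟩ := h2
    rw [Nat.mul_div_cancel_left _ hr, coeff_X_add_C_pow]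
    have : m = j + 1 := by
      have : 2 ^ e * (j + 1) = 2 ^ e * m := by rw [← h3]; ring
      exact (Nat.eq_of_mul_eq_mul_left hr this).symm
    subst this
    obtain ⟨i, hi⟩ := hm
    have h4 : ((j + 1).choose j : E) = 1 := by
      rw [Nat.choose_succ_self_right, hi]
      push_cast
      rw [CharTwo.two_eq_zero]
      ring
    rw [h4]; simp
  · obtain ⟨j, rfl⟩ := h2
    exfalso
    have h5 : j < m := lt_of_mul_lt_mul_left hd2 (Nat.zero_le _)
    have h6 : m ≤ j + 1 := by
      have : 2 ^ e * m ≤ 2 ^ e * (j + 1) := by rw [mul_add, mul_one]; exact hd1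
      exact le_of_mul_le_mul_left this hr
    apply h3
    have : m = j + 1 := by omega
    rw [this]; ring
  · exfalso
    apply h2
    have : 2 ^ e ∣ d + 2 ^ e := by rw [h3]; exact dvd_mul_right _ _
    exact (Nat.dvd_add_left (dvd_refl _)).1 this
  · rfl

/-- If `σ p = α ^ r p` (`r > 0`) and `σ p = α ^ (2 ^ e) (p + η ^ (2 ^ e))` have no nontrivial
solutions in `E`, a monic polynomial spanning a `twist`-stable line is constant. -/
theorem semiinvariant_natDegree [CharP E 2] (hα : α ≠ 0)
    (H : ∀ r : ℕ, 0 < r → ∀ p : E, σ p = α ^ r * p → p = 0)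
    (S : ∀ e : ℕ, ∀ p : E, σ p ≠ α ^ 2 ^ e * (p + η ^ 2 ^ e))
    {P : E[X]} (hP : P.Monic) (hT : twist σ α η P = C (α ^ P.natDegree) * P) :
    P.natDegree = 0 := by
  by_contra hk
  obtain ⟨e, m, hm, hkm⟩ := Nat.exists_eq_two_pow_mul_odd hk
  set k := P.natDegree with hkdef
  have hr : 0 < 2 ^ e := by positivity
  have hrk : 2 ^ e ≤ k := by
    rw [hkm]; exact Nat.le_mul_of_pos_right _ hm.pos
  set P1 := P - X ^ k with hP1
  have hdeg : P1.degree < k := by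
    have h := degree_sub_lt_left (p := P) (q := X ^ k)
      (by rw [degree_X_pow, degree_eq_natDegree hP.ne_zero]) hP.ne_zero
      (by rw [hP.leadingCoeff, (monic_X_pow k).leadingCoeff])
    rwa [degree_eq_natDegree hP.ne_zero] at h
  have hPe : P = X ^ k + P1 := by rw [hP1]; ring
  have hEq : twist σ α η P1 + C (α ^ k) * (X + C η) ^ k = C (α ^ k) * X ^ k + C (α ^ k) * P1 := by
    have h := hT
    rw [hPe, map_add, map_pow, twist_X, mul_pow, ← C_pow, mul_add] at h
    rw [← h]; ring
  have hlow : ∀ d, d < k → P1.natDegree ≤ d → k ≤ d + 2 ^ e →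
      σ (P1.coeff d) * α ^ d + α ^ k * (if d + 2 ^ e = k then η ^ 2 ^ e else 0)
        = α ^ k * P1.coeff d := by
    intro d hd1 hd2 hd3
    have h := congrArg (fun Q => coeff Q d) hEq
    simp only [coeff_add, coeff_C_mul, coeff_X_pow, hd1.ne, if_false, mul_zero, zero_add] at h
    rw [coeff_twist σ hα hd2, hkm, coeff_X_add_C_pow_two e m d hm (hkm ▸ hd3) (hkm ▸ hd1),
      ← hkm] at h
    exact h
  have hαd : ∀ d, d ≤ k → α ^ k = α ^ d * α ^ (k - d) := fun d hd => by
    rw [← pow_add]; congr 1; omega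
  have hle : P1.natDegree ≤ k - 2 ^ e := by
    by_contra hcon
    push Not at hcon
    have hne : P1 ≠ 0 := by rintro h; rw [h] at hcon; simp at hcon
    have hlt : P1.natDegree < k := by
      rw [degree_eq_natDegree hne] at hdeg; exact_mod_cast hdeg
    have h := hlow _ hlt le_rfl (by omega)
    rw [if_neg (by omega), mul_zero, add_zero, hαd _ hlt.le] at h
    have := H (k - P1.natDegree) (by omega) (P1.coeff P1.natDegree) (by
      apply mul_right_cancel₀ (pow_ne_zero P1.natDegree hα)
      rw [h]; ring)
    exact hne (leadingCoeff_eq_zero.1 this)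
  have h := hlow (k - 2 ^ e) (by omega) hle (by omega)
  rw [if_pos (by omega), hαd (k - 2 ^ e) (by omega), show k - (k - 2 ^ e) = 2 ^ e by omega] at h
  apply S e (P1.coeff (k - 2 ^ e))
  apply mul_right_cancel₀ (pow_ne_zero (k - 2 ^ e) hα)
  have h2 : σ (P1.coeff (k - 2 ^ e)) * α ^ (k - 2 ^ e) =
      α ^ (k - 2 ^ e) * α ^ 2 ^ e * P1.coeff (k - 2 ^ e)
        - α ^ (k - 2 ^ e) * α ^ 2 ^ e * η ^ 2 ^ e := by rw [← h]; ring
  rw [h2, CharTwo.sub_eq_add]; ring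

/-- The inhomogeneous equation governing the second step of the tower has no polynomial
solution: squaring in the two-step unipotent group is nonzero in characteristic two, so the
coefficient of `Z ^ (2 ^ e)` would solve the equation excluded by `S`. -/
theorem no_quadratic_solution [CharP E 2] (hα : α ≠ 0)
    (H : ∀ r : ℕ, 0 < r → ∀ p : E, σ p = α ^ r * p → p = 0)
    (S : ∀ e : ℕ, ∀ p : E, σ p ≠ α ^ 2 ^ e * (p + η ^ 2 ^ e)) (e : ℕ) (p : E[X])
    (hp : twist σ α η p = C ((α ^ 2) ^ 2 ^ e) * (p + (C η * X + C (η ^ 2)) ^ 2 ^ e)) : False := by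
  have : Fact (Nat.Prime 2) := ⟨Nat.prime_two⟩
  set r := 2 ^ e with hrdef
  have hr : 0 < r := by positivity
  have hpw : (C η * X + C (η ^ 2)) ^ r = C (η ^ r) * X ^ r + C (η ^ (2 * r)) := by
    rw [hrdef, add_pow_char_pow, mul_pow, C_pow, C_pow, C_pow, pow_mul]
  rw [hpw, ← pow_mul] at hp
  have hα2 : ∀ d, d ≤ 2 * r → α ^ (2 * r) = α ^ d * α ^ (2 * r - d) := fun d hd => by
    rw [← pow_add]; congr 1; omega
  have hd2 : p.natDegree ≤ 2 * r := by
    by_contra hcon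
    push Not at hcon
    have hne : p ≠ 0 := by rintro h; rw [h] at hcon; simp at hcon
    have h := congrArg (fun Q => coeff Q p.natDegree) hp
    simp only [coeff_C_mul, coeff_add, coeff_X_pow, coeff_C] at h
    rw [coeff_twist σ hα le_rfl, if_neg (by omega), if_neg (by omega), mul_zero, add_zero,
      add_zero] at h
    have hc : p.coeff p.natDegree ≠ 0 := fun h0 => hne (leadingCoeff_eq_zero.1 h0)
    have hs : α ^ p.natDegree = α ^ (2 * r) * α ^ (p.natDegree - 2 * r) := by
      rw [← pow_add]; congr 1; omega
    have := H (p.natDegree - 2 * r) (by omega) (p.coeff p.natDegree)⁻¹ (by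
      rw [map_inv₀]
      have hσ : σ (p.coeff p.natDegree) ≠ 0 := (_root_.map_ne_zero σ).2 hc
      have hz : σ (p.coeff p.natDegree) * α ^ (p.natDegree - 2 * r) = p.coeff p.natDegree := by
        apply mul_left_cancel₀ (pow_ne_zero (2 * r) hα)
        rw [← h, hs]; ring
      rw [inv_eq_iff_eq_inv, mul_inv, inv_inv]
      rw [eq_inv_mul_iff_mul_eq₀ (pow_ne_zero _ hα), mul_comm]
      exact hz)
    exact inv_ne_zero hc this
  set c := p.coeff (2 * r) with hc
  have hσc : σ c = c := by
    have h := congrArg (fun Q => coeff Q (2 * r)) hp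
    simp only [coeff_C_mul, coeff_add, coeff_X_pow, coeff_C] at h
    rw [coeff_twist σ hα hd2, if_neg (by omega), if_neg (by omega), mul_zero, add_zero,
      add_zero] at h
    apply mul_left_cancel₀ (pow_ne_zero (2 * r) hα)
    rw [← h]; ring
  set p2 := p + C c * X ^ (2 * r) with hp2
  have hT2 : twist σ α η p2 =
      C (α ^ (2 * r)) * (p2 + (C (η ^ r) * X ^ r + C (η ^ (2 * r)) + C (c * η ^ (2 * r)))) := by
    rw [hp2, map_add, hp, map_mul, twist_C, map_pow (twist σ α η), twist_X, hσc, mul_pow, ← C_pow]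
    have : (X + C η : E[X]) ^ (2 * r) = X ^ (2 * r) + C (η ^ (2 * r)) := by
      have h2 : 2 * r = 2 ^ (e + 1) := by rw [hrdef]; ring
      rw [h2, add_pow_char_pow, C_pow]
    rw [this, C_mul]
    ring
  have hd3 : p2.natDegree ≤ r := by
    by_contra hcon
    push Not at hcon
    have hne : p2 ≠ 0 := by rintro h; rw [h] at hcon; simp at hcon
    have hle : p2.natDegree ≤ 2 * r :=
      (natDegree_add_le_of_degree_le hd2 (natDegree_C_mul_X_pow_le _ _))
    have hlt : p2.natDegree < 2 * r := by
      refine lt_of_le_of_ne hle fun h => hne (leadingCoeff_eq_zero.1 ?_)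
      rw [leadingCoeff, h, hp2]
      simp [← hc, CharTwo.add_self_eq_zero]
    have h := congrArg (fun Q => coeff Q p2.natDegree) hT2
    simp only [coeff_C_mul, coeff_add, coeff_X_pow, coeff_C] at h
    rw [coeff_twist σ hα le_rfl, if_neg (by omega), if_neg (by omega), if_neg (by omega),
      mul_zero, add_zero, add_zero, add_zero, hα2 _ hle] at h
    have := H (2 * r - p2.natDegree) (by omega) (p2.coeff p2.natDegree) (by
      apply mul_right_cancel₀ (pow_ne_zero p2.natDegree hα)
      rw [h]; ring)
    exact hne (leadingCoeff_eq_zero.1 this)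
  have h := congrArg (fun Q => coeff Q r) hT2
  simp only [coeff_C_mul, coeff_add, coeff_X_pow, coeff_C] at h
  rw [coeff_twist σ hα hd3, if_pos trivial, if_neg (by omega), if_neg (by omega), add_zero, add_zero,
    mul_one, hα2 r (by omega), show 2 * r - r = r by omega] at h
  apply S e (p2.coeff r)
  apply mul_right_cancel₀ (pow_ne_zero r hα)
  rw [h, ← hrdef]; ring

end Twist

end DiffAlg

end

/-! ### Towers of difference field extensions -/

section
open Polynomial

namespace DiffAlg

theorem exists_coprime_fraction {E L : Type*} [Field E] [Field L] (φ : E[X] →+* L) (r0 s0 : E[X])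
    (hs0 : φ s0 ≠ 0) :
    ∃ r s : E[X], IsCoprime r s ∧ φ s ≠ 0 ∧ φ r0 / φ s0 = φ r / φ s := by
  classical
  have hs : s0 ≠ 0 := by rintro rfl; simp at hs0
  obtain ⟨a, ha⟩ := EuclideanDomain.gcd_dvd_left r0 s0
  obtain ⟨b, hb⟩ := EuclideanDomain.gcd_dvd_right r0 s0
  set d := EuclideanDomain.gcd r0 s0 with hd
  have hd0 : d ≠ 0 := by rintro h; rw [h, zero_mul] at hb; exact hs hb
  have hφd : φ d ≠ 0 := by rintro h; apply hs0; rw [hb, map_mul, h, zero_mul]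
  have hφb : φ b ≠ 0 := by rintro h; apply hs0; rw [hb, map_mul, h, mul_zero]
  refine ⟨a, b, ?_, hφb, ?_⟩
  · refine ⟨EuclideanDomain.gcdA r0 s0, EuclideanDomain.gcdB r0 s0, mul_left_cancel₀ hd0 ?_⟩
    have := EuclideanDomain.gcd_eq_gcd_ab r0 s0
    rw [← hd] at this
    calc _ = (d * a) * EuclideanDomain.gcdA r0 s0 + (d * b) * EuclideanDomain.gcdB r0 s0 := by ring
      _ = _ := by rw [← ha, ← hb, ← this, mul_one]
  · rw [ha, hb, map_mul, map_mul, mul_div_mul_left _ _ hφd]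

section Adjoin

variable {E : Type*} [Field E] (σ : E →+* E) {α η : E}

/-- A polynomial dividing its twist is constant. -/
theorem natDegree_eq_zero_of_dvd [CharP E 2] (hα : α ≠ 0)
    (H : ∀ r : ℕ, 0 < r → ∀ p : E, σ p = α ^ r * p → p = 0)
    (S : ∀ e : ℕ, ∀ p : E, σ p ≠ α ^ 2 ^ e * (p + η ^ 2 ^ e))
    {P : E[X]} (hP : P ≠ 0) (hd : P ∣ twist σ α η P) : P.natDegree = 0 := by
  obtain ⟨u, hu⟩ := hd
  have hl : P.leadingCoeff ≠ 0 := leadingCoeff_ne_zero.2 hP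
  have hT := twist_ne_zero (η := η) σ hα hP
  have hu0 : u ≠ 0 := by rintro rfl; simp at hu; exact hT hu
  have hdu : u.natDegree = 0 := by
    have h := congrArg natDegree hu
    rw [natDegree_twist σ hα, natDegree_mul hP hu0] at h
    omega
  obtain ⟨c, rfl⟩ := natDegree_eq_zero.1 hdu
  have hm := monic_mul_leadingCoeff_inv hP
  set Q := P * C P.leadingCoeff⁻¹ with hQ
  have hdQ : Q.natDegree = P.natDegree := natDegree_mul_leadingCoeff_inv P hP
  have hTQ : twist σ α η Q = C (c * σ (P.leadingCoeff)⁻¹ * P.leadingCoeff) * Q := by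
    rw [hQ, map_mul, twist_C, hu]
    have : (1 : E[X]) = C (P.leadingCoeff) * C (P.leadingCoeff⁻¹) := by
      rw [← C_mul, mul_inv_cancel₀ hl, C_1]
    rw [C_mul, C_mul]
    calc _ = P * C c * C (σ P.leadingCoeff⁻¹) * 1 := by rw [mul_one]
      _ = _ := by rw [this]; ring
  have hc : c * σ (P.leadingCoeff)⁻¹ * P.leadingCoeff = α ^ Q.natDegree := by
    have h := congrArg (fun R => coeff R Q.natDegree) hTQ
    simp only [coeff_C_mul] at h
    rw [coeff_twist σ hα le_rfl, hm.coeff_natDegree, map_one, one_mul, mul_one] at h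
    exact h.symm
  rw [hc] at hTQ
  rw [← hdQ]
  exact semiinvariant_natDegree σ hα H S hm hTQ

variable {L : Type*} [Field L] [Algebra E L] (τ : L →+* L)
  (hστ : ∀ x, algebraMap E L (σ x) = τ (algebraMap E L x)) {z : L}
  (hz : τ z = algebraMap E L α * (z + algebraMap E L η))

include hστ hz

theorem aeval_twist (P : E[X]) : aeval z (twist σ α η P) = τ (aeval z P) := by
  induction P using Polynomial.induction_on' with
  | add p q hp hq => simp [hp, hq]
  | monomial n a =>
    rw [← C_mul_X_pow_eq_monomial, map_mul, map_pow, twist_C, twist_X]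
    simp [hστ, hz]

/-- An element `z` with `τ z = α (z + η)` is transcendental over `E`: its minimal polynomial divides
its twist, hence is constant. -/
theorem transcendental_of_twist [CharP E 2] (hα : α ≠ 0)
    (H : ∀ r : ℕ, 0 < r → ∀ p : E, σ p = α ^ r * p → p = 0)
    (S : ∀ e : ℕ, ∀ p : E, σ p ≠ α ^ 2 ^ e * (p + η ^ 2 ^ e)) : Transcendental E z := by
  intro halg
  have hi := halg.isIntegral
  have h0 := minpoly.ne_zero hi
  have hd : minpoly E z ∣ twist σ α η (minpoly E z) := by
    apply minpoly.dvd
    rw [aeval_twist σ τ hστ hz, minpoly.aeval, map_zero]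
  have := natDegree_eq_zero_of_dvd σ hα H S h0 hd
  exact (minpoly.natDegree_pos hi).ne' this

/-- Solutions in `E(z)` of an equation `τ c = μ (c + w(z))` are polynomials in `z`: the reduced
denominator divides its twist. -/
theorem eq_aeval_of_twist [CharP E 2] (hα : α ≠ 0)
    (H : ∀ r : ℕ, 0 < r → ∀ p : E, σ p = α ^ r * p → p = 0)
    (S : ∀ e : ℕ, ∀ p : E, σ p ≠ α ^ 2 ^ e * (p + η ^ 2 ^ e))
    {c : L} (hc : c ∈ IntermediateField.adjoin E {z}) {μ : E} {w : E[X]}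
    (hcτ : τ c = algebraMap E L μ * (c + aeval z w)) : ∃ p : E[X], c = aeval z p := by
  have htr := transcendental_of_twist σ τ hστ hz hα H S
  have hinj : Function.Injective (aeval (R := E) z) := transcendental_iff_injective.1 htr
  obtain ⟨r0, s0, rfl⟩ := (IntermediateField.mem_adjoin_simple_iff E c).1 hc
  by_cases hs0 : s0 = 0
  · exact ⟨0, by simp [hs0]⟩
  have hs0' : aeval z s0 ≠ 0 := fun h => hs0 (hinj (by rw [h, map_zero]))
  obtain ⟨r, s, hco, hs, heq⟩ := exists_coprime_fraction (aeval (R := E) z).toRingHom r0 s0 hs0'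
  have heq' : aeval z r0 / aeval z s0 = aeval z r / aeval z s := heq
  have hs' : aeval z s ≠ 0 := hs
  have hs0 : s ≠ 0 := by rintro rfl; simp at hs'
  rw [heq'] at hcτ ⊢
  have hτs : τ (aeval z s) ≠ 0 := (_root_.map_ne_zero τ).2 hs'
  have hpoly : twist σ α η r * s = C μ * (r + w * s) * twist σ α η s := by
    apply hinj
    simp only [map_mul, map_add, aeval_twist σ τ hστ hz, aeval_C]
    rw [map_div₀] at hcτ
    field_simp at hcτ
    linear_combination hcτ
  have hdvd : twist σ α η s ∣ s := by
    have hco' : IsCoprime (twist σ α η s) (twist σ α η r) := (hco.map (twist σ α η)).symm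
    exact hco'.dvd_of_dvd_mul_left ⟨C μ * (r + w * s), by rw [hpoly]; ring⟩
  have hdvd' : s ∣ twist σ α η s := by
    obtain ⟨v, hv⟩ := hdvd
    have hv0 : v ≠ 0 := by rintro rfl; simp at hv; exact hs0 hv
    have hdv : v.natDegree = 0 := by
      have h := congrArg natDegree hv
      rw [natDegree_mul (twist_ne_zero σ hα hs0) hv0, natDegree_twist σ hα] at h
      omega
    obtain ⟨c, rfl⟩ := natDegree_eq_zero.1 hdv
    have hc0 : c ≠ 0 := by rintro rfl; simp at hv0
    refine ⟨C c⁻¹, ?_⟩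
    conv_rhs => rw [hv]
    rw [mul_assoc, ← C_mul, mul_inv_cancel₀ hc0, C_1, mul_one]
  have hdeg := natDegree_eq_zero_of_dvd σ hα H S hs0 hdvd'
  obtain ⟨c, rfl⟩ := natDegree_eq_zero.1 hdeg
  refine ⟨r * C c⁻¹, ?_⟩
  simp [div_eq_mul_inv]

/-- Eigenvectors of `τ` in `E(z)` with eigenvalue in `E` already lie in `E`. -/
theorem mem_range_of_eigen [CharP E 2] (hα : α ≠ 0)
    (H : ∀ r : ℕ, 0 < r → ∀ p : E, σ p = α ^ r * p → p = 0)
    (S : ∀ e : ℕ, ∀ p : E, σ p ≠ α ^ 2 ^ e * (p + η ^ 2 ^ e))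
    {c : L} (hc : c ∈ IntermediateField.adjoin E {z}) {μ : E}
    (hcτ : τ c = algebraMap E L μ * c) : ∃ p : E, c = algebraMap E L p := by
  have htr := transcendental_of_twist σ τ hστ hz hα H S
  have hinj : Function.Injective (aeval (R := E) z) := transcendental_iff_injective.1 htr
  obtain ⟨p, rfl⟩ := eq_aeval_of_twist σ τ hστ hz hα H S hc (μ := μ) (w := 0) (by simpa using hcτ)
  by_cases hp : p = 0
  · exact ⟨0, by simp [hp]⟩
  have hT : twist σ α η p = p * C μ := by
    apply hinj
    rw [aeval_twist σ τ hστ hz, hcτ, map_mul, aeval_C, mul_comm]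
  have := natDegree_eq_zero_of_dvd σ hα H S hp ⟨_, hT⟩
  obtain ⟨c, rfl⟩ := natDegree_eq_zero.1 this
  exact ⟨c, by simp⟩

/-- `E(z)` is stable under `τ`. -/
theorem adjoin_stable {c : L} (hc : c ∈ IntermediateField.adjoin E {z}) :
    τ c ∈ IntermediateField.adjoin E {z} := by
  rw [IntermediateField.mem_adjoin_simple_iff] at hc ⊢
  obtain ⟨r, s, rfl⟩ := hc
  exact ⟨twist σ α η r, twist σ α η s, by
    rw [map_div₀, aeval_twist σ τ hστ hz, aeval_twist σ τ hστ hz]⟩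

end Adjoin

section Tower

variable {K L : Type*} [Field K] [Field L] [Algebra K L] [CharP K 2]

/-- The three-step tower: `f`, an extension `g` of it, and an independent exponential `u` are
algebraically independent as soon as the relevant difference equations over `K` have only the
trivial solutions. -/
theorem tower_algebraicIndependent (σ : K →+* K) (τ : L →+* L)
    (hστ : ∀ x, algebraMap K L (σ x) = τ (algebraMap K L x)) {α η b : K} (hα : α ≠ 0)
    {f g u : L} (hf : τ f = algebraMap K L α * (f + algebraMap K L η))
    (hg : τ g = algebraMap K L α ^ 2 * (g + algebraMap K L η * f + algebraMap K L η ^ 2))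
    (hu : τ u = algebraMap K L b * u) (hu0 : u ≠ 0)
    (H : ∀ r : ℕ, 0 < r → ∀ p : K, σ p = α ^ r * p → p = 0)
    (S : ∀ e : ℕ, ∀ p : K, σ p ≠ α ^ 2 ^ e * (p + η ^ 2 ^ e))
    (U : ∀ r : ℕ, 0 < r → ∀ p : K, σ p = b ^ r * p → p = 0) :
    AlgebraicIndependent K ![u, f, g] := by
  have tf : Transcendental K f := transcendental_of_twist σ τ hστ hf hα H S
  have hfi : Function.Injective (aeval (R := K) f) := transcendental_iff_injective.1 tf
  -- over `E2 = K(f)`, the element `g` satisfies an equation of the same shape as `f` over `K`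
  let E2 := IntermediateField.adjoin K {f}
  have hst2 : ∀ c ∈ E2, τ c ∈ E2 := fun c hc => adjoin_stable σ τ hστ hf hc
  let σ2 : E2 →+* E2 := RingHom.restrict τ E2 E2 hst2
  have hσ2 : ∀ x : E2, algebraMap E2 L (σ2 x) = τ (algebraMap E2 L x) := fun x => rfl
  have hfm : f ∈ E2 := IntermediateField.mem_adjoin_simple_self K f
  let f2 : E2 := ⟨f, hfm⟩
  let α2 : E2 := algebraMap K E2 α ^ 2
  let η2 : E2 := algebraMap K E2 η * f2 + algebraMap K E2 η ^ 2
  have hα2 : α2 ≠ 0 := pow_ne_zero _ (by simpa using hα)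
  have hαL2 : algebraMap E2 L α2 = algebraMap K L α ^ 2 := rfl
  have hηL2 : algebraMap E2 L η2 = algebraMap K L η * f + algebraMap K L η ^ 2 := rfl
  have hg2 : τ g = algebraMap E2 L α2 * (g + algebraMap E2 L η2) := by
    rw [hg, hαL2, hηL2]; ring
  have hc2 : CharP E2 2 := charP_of_injective_algebraMap (algebraMap K E2).injective 2
  have H2 : ∀ r : ℕ, 0 < r → ∀ p : E2, σ2 p = α2 ^ r * p → p = 0 := by
    intro r hr p hp
    have hp' : τ (p : L) = algebraMap K L (α ^ (2 * r)) * (p : L) := by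
      have h := congrArg (algebraMap E2 L) hp
      rw [hσ2, map_mul, map_pow, hαL2, ← pow_mul, ← map_pow] at h
      exact h
    obtain ⟨c, hc⟩ := mem_range_of_eigen σ τ hστ hf hα H S p.2 hp'
    rw [hc, ← hστ, ← map_mul] at hp'
    have := H (2 * r) (by omega) c ((algebraMap K L).injective hp')
    apply Subtype.ext
    rw [hc, this, map_zero]; rfl
  have S2 : ∀ e : ℕ, ∀ p : E2, σ2 p ≠ α2 ^ 2 ^ e * (p + η2 ^ 2 ^ e) := by
    intro e p hp
    have hp' : τ (p : L) = algebraMap K L ((α ^ 2) ^ 2 ^ e) *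
        ((p : L) + aeval f ((C η * X + C (η ^ 2)) ^ 2 ^ e)) := by
      have h := congrArg (algebraMap E2 L) hp
      rw [hσ2, map_mul, map_pow, hαL2, map_add, map_pow, hηL2] at h
      simp only [map_pow, map_add, map_mul, aeval_C, aeval_X]
      exact h
    obtain ⟨c, hc⟩ := eq_aeval_of_twist σ τ hστ hf hα H S p.2 hp'
    refine no_quadratic_solution σ hα H S e c (hfi ?_)
    rw [aeval_twist σ τ hστ hf, ← hc, hp', map_mul, aeval_C, map_add, ← hc]
  have tg : Transcendental E2 g := transcendental_of_twist σ2 τ hσ2 hg2 hα2 H2 S2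
  -- over `E3 = K(f, g)`, the constant coefficient of a minimal polynomial of `u` would be a nonzero
  -- eigenvector of `τ` with eigenvalue a power of `b`, hence would lie in `K`
  let E3 := IntermediateField.adjoin E2 {g}
  have hst3 : ∀ c ∈ E3, τ c ∈ E3 := fun c hc => adjoin_stable σ2 τ hσ2 hg2 hc
  let σ3 : E3 →+* E3 := RingHom.restrict τ E3 E3 hst3
  have hσ3 : ∀ x : E3, algebraMap E3 L (σ3 x) = τ (algebraMap E3 L x) := fun x => rfl
  have hb0 : b ≠ 0 := by
    rintro rfl
    rw [map_zero, zero_mul] at hu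
    exact hu0 ((map_eq_zero τ).1 hu)
  have U3 : ∀ r : ℕ, 0 < r → ∀ p : E3, τ (p : L) = algebraMap K L b ^ r * p → p = 0 := by
    intro r hr p hp
    obtain ⟨c, hc⟩ := mem_range_of_eigen σ2 τ hσ2 hg2 hα2 H2 S2 p.2
      (μ := algebraMap K E2 (b ^ r)) (by rw [hp, ← map_pow]; rfl)
    obtain ⟨d, hd⟩ := mem_range_of_eigen σ τ hστ hf hα H S c.2
      (μ := b ^ r) (by
        have : (c : L) = p := hc.symm
        rw [this, hp, map_pow])
    have hpd : (p : L) = algebraMap K L d := by rw [hc, ← hd]; rfl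
    rw [hpd, ← hστ, ← map_pow, ← map_mul] at hp
    have := U r hr d ((algebraMap K L).injective hp)
    apply Subtype.ext
    rw [hpd, this, map_zero]; rfl
  have tu : Transcendental E3 u := by
    intro halg
    have hi := halg.isIntegral
    let b3 : E3 := algebraMap E2 E3 (algebraMap K E2 b)
    have hb3 : algebraMap E3 L b3 = algebraMap K L b := rfl
    have hb30 : b3 ≠ 0 := fun h => hb0 ((algebraMap K L).injective (by rw [← hb3, h]; simp))
    set P := minpoly E3 u with hPdef
    set k := P.natDegree
    have hu3 : τ u = algebraMap E3 L b3 * (u + algebraMap E3 L 0) := by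
      rw [hu, hb3, map_zero, add_zero]
    have hTd : (twist σ3 b3 0 P).natDegree = k := natDegree_twist σ3 hb30 P
    have hT : twist σ3 b3 0 P = C (b3 ^ k) * P := by
      obtain ⟨v, hv⟩ : P ∣ twist σ3 b3 0 P := by
        apply minpoly.dvd
        rw [aeval_twist σ3 τ hσ3 hu3, minpoly.aeval, map_zero]
      have hT0 : twist σ3 b3 0 P ≠ 0 := twist_ne_zero σ3 hb30 (minpoly.ne_zero hi)
      have hv0 : v ≠ 0 := by rintro rfl; simp at hv; exact hT0 hv
      have hdv : v.natDegree = 0 := by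
        have h := congrArg natDegree hv
        rw [natDegree_mul (minpoly.ne_zero hi) hv0, hTd] at h
        exact Nat.left_eq_add.1 h
      obtain ⟨c, rfl⟩ := natDegree_eq_zero.1 hdv
      have hck : c = b3 ^ k := by
        have h := congrArg (fun R => coeff R k) hv
        simp only [coeff_mul_C] at h
        rw [coeff_twist σ3 hb30 le_rfl, (minpoly.monic hi).coeff_natDegree, map_one, one_mul,
          one_mul] at h
        exact h.symm
      rw [hv, hck, mul_comm]
    have h0 := congrArg (fun R => coeff R 0) hT
    simp only [coeff_C_mul, twist_apply, C_0, add_zero] at h0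
    rw [coeff_zero_eq_eval_zero, eval_comp] at h0
    simp only [eval_mul, eval_C, eval_X, mul_zero] at h0
    rw [← coeff_zero_eq_eval_zero, coeff_map] at h0
    have := U3 k (minpoly.natDegree_pos hi) (P.coeff 0) (by
      have h := congrArg (algebraMap E3 L) h0
      rw [hσ3, map_mul, map_pow, hb3] at h
      exact h)
    exact minpoly.coeff_zero_ne_zero hi hu0 this
  have a2 : AlgebraicIndependent K (Sum.elim (fun _ : Unit => g) (fun _ : Unit => f)) :=
    AlgebraicIndependent.sumElim_of_tower (S := E2) ((algebraicIndependent_unique_type_iff).2 tf)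
      (by rintro _ ⟨_, rfl⟩; exact ⟨f2, rfl⟩) ((algebraicIndependent_unique_type_iff).2 tg)
  have : IsScalarTower K E3 L := IsScalarTower.of_algebraMap_eq fun x => rfl
  have hgm : g ∈ E3 := IntermediateField.mem_adjoin_simple_self E2 g
  have a3 : AlgebraicIndependent K (Sum.elim (fun _ : Unit => u)
      (Sum.elim (fun _ : Unit => g) (fun _ : Unit => f))) :=
    AlgebraicIndependent.sumElim_of_tower (S := E3) a2 (by
      rintro _ ⟨_ | _, rfl⟩
      · exact ⟨⟨g, hgm⟩, rfl⟩
      · exact ⟨algebraMap E2 E3 f2, rfl⟩)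
      ((algebraicIndependent_unique_type_iff).2 tu)
  let ε : Fin 3 → Unit ⊕ (Unit ⊕ Unit) := ![Sum.inl (), Sum.inr (Sum.inr ()), Sum.inr (Sum.inl ())]
  have hε : Function.Injective ε := by decide
  have := a3.comp ε hε
  convert this using 1
  funext i
  fin_cases i <;> rfl

end Tower
end DiffAlg

end

/-! ### Difference equations over a rational function field -/

section
open Polynomial

namespace DiffAlg

section Base

variable {Cst L : Type*} [Field Cst] [Field L] [Algebra Cst L]

/-- A solution in `C(x)` of `τ c = m(x) (c + w(x))`, where `τ x = x ^ q`, is a polynomial: its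
denominator `s` would satisfy `s(X ^ q) ∣ s(X)`. -/
theorem exists_poly_of_mem_adjoin {q : ℕ} (hq : 2 ≤ q) (τ : L →ₐ[Cst] L) {x : L}
    (hx : Transcendental Cst x) (hτ : τ x = x ^ q) {c : L}
    (hc : c ∈ IntermediateField.adjoin Cst {x}) {m w : Cst[X]}
    (h : τ c = aeval x m * (c + aeval x w)) :
    ∃ p : Cst[X], c = aeval x p ∧ expand Cst q p = m * (p + w) := by
  have hinj : Function.Injective (aeval (R := Cst) x) := transcendental_iff_injective.1 hx
  have hexp : ∀ p : Cst[X], aeval x (expand Cst q p) = τ (aeval x p) := by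
    intro p
    rw [expand_aeval, ← hτ]
    exact aeval_algHom_apply τ x p
  suffices ∃ p : Cst[X], c = aeval x p by
    obtain ⟨p, rfl⟩ := this
    refine ⟨p, rfl, hinj ?_⟩
    rw [hexp, h, map_mul, map_add]
  obtain ⟨r0, s0, rfl⟩ := (IntermediateField.mem_adjoin_simple_iff Cst c).1 hc
  by_cases hs0 : s0 = 0
  · exact ⟨0, by simp [hs0]⟩
  have hs0' : aeval x s0 ≠ 0 := fun h => hs0 (hinj (by rw [h, map_zero]))
  obtain ⟨r, s, hco, hs, heq⟩ := exists_coprime_fraction (aeval (R := Cst) x).toRingHom r0 s0 hs0'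
  have heq' : aeval x r0 / aeval x s0 = aeval x r / aeval x s := heq
  have hs' : aeval x s ≠ 0 := hs
  have hs0 : s ≠ 0 := by rintro rfl; simp at hs'
  rw [heq'] at h ⊢
  have hτs : τ (aeval x s) ≠ 0 := (_root_.map_ne_zero τ).2 hs'
  have hpoly : expand Cst q r * s = m * (r + w * s) * expand Cst q s := by
    apply hinj
    simp only [map_mul, map_add, hexp]
    rw [map_div₀] at h
    field_simp at h
    linear_combination h
  have hdvd : expand Cst q s ∣ s := by
    have hco' : IsCoprime (expand Cst q s) (expand Cst q r) :=
      (hco.map (expand Cst q).toRingHom).symm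
    exact hco'.dvd_of_dvd_mul_left ⟨m * (r + w * s), by rw [hpoly]; ring⟩
  have hdeg : s.natDegree = 0 := by
    have h1 := natDegree_le_of_dvd hdvd hs0
    rw [natDegree_expand] at h1
    nlinarith
  obtain ⟨c, rfl⟩ := natDegree_eq_zero.1 hdeg
  refine ⟨r * C c⁻¹, ?_⟩
  simp [div_eq_mul_inv]

/-- The division by `X ^ q - β` of `p(X ^ q)` is the expansion of the division by `X - β` of `p`. -/
theorem eval_eq_zero_of_expand_dvd {q : ℕ} (hq : 0 < q) (β : Cst) {p : Cst[X]}
    (h : (X ^ q - C β) ∣ expand Cst q p) : p.eval β = 0 := by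
  have h1 : p = (X - C β) * (p /ₘ (X - C β)) + C (p.eval β) := by
    have := modByMonic_add_div p (X - C β)
    rw [modByMonic_X_sub_C_eq_C_eval] at this
    rw [add_comm]; exact this.symm
  have h2 : (X ^ q - C β) ∣ C (p.eval β) := by
    have h3 := congrArg (expand Cst q) h1
    simp only [map_add, map_mul, map_sub, expand_X, expand_C] at h3
    have : C (p.eval β) = expand Cst q p - (X ^ q - C β) * expand Cst q (p /ₘ (X - C β)) := by
      rw [h3]; ring
    rw [this]
    exact dvd_sub h (dvd_mul_right _ _)
  by_contra h0
  have h4 := natDegree_le_of_dvd h2 (C_ne_zero.2 h0)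
  rw [natDegree_X_pow_sub_C, natDegree_C] at h4
  omega

/-- The equation `p(X ^ q) = κ (X ^ q - β) ^ N p` forces `p` to vanish at `β`, and then at all
`β ^ (q ^ i)`. -/
theorem eq_zero_of_expand_eq {q : ℕ} (hq : 0 < q) {β κ : Cst}
    (hβ : Function.Injective fun i : ℕ => β ^ q ^ i) {N : ℕ} (hN : 0 < N) {p : Cst[X]}
    (h : expand Cst q p = C κ * (X ^ q - C β) ^ N * p) : p = 0 := by
  have h0 : p.eval β = 0 := eval_eq_zero_of_expand_dvd hq β
    (by rw [h]; exact ((dvd_pow_self _ hN.ne').mul_left _).mul_right _)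
  have hi : ∀ i, p.eval (β ^ q ^ i) = 0 := by
    intro i
    induction i with
    | zero => simpa using h0
    | succ i ih =>
      have := congrArg (eval (β ^ q ^ i)) h
      rw [expand_eval, eval_mul, ih, mul_zero, ← pow_mul, ← pow_succ] at this
      exact this
  classical
  by_contra hp
  refine (Set.infinite_range_of_injective hβ) (Set.Finite.subset (p.roots.toFinset.finite_toSet) ?_)
  rintro _ ⟨i, rfl⟩
  simp [hp, hi i]

/-- Algebraic independence over `C(x)` of the solutions of the tower of Frobenius difference
equations attached to a depth-two multizeta value and to the Carlitz period. Hypothesis `hord` says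
that the homogeneous equations of the powers `f ^ (2 ^ e)` have no nonzero solution, so that
`f ^ (2 ^ e)` is the only solution of its own equation; `hval` then excludes that it is rational,
because a rational solution is a polynomial vanishing at `x = t`. -/
theorem base_algebraicIndependent [CharP Cst 2] {q : ℕ} (hq : 2 ≤ q) (τ : L →ₐ[Cst] L) {x : L}
    (hx : Transcendental Cst x) (hτ : τ x = x ^ q) {t : Cst} (ht0 : t ≠ 0)
    (ht : Function.Injective fun i : ℕ => t ^ q ^ i) {n : ℕ} (hn : 1 ≤ n) (h : Cst[X]) {f g u : L}
    (hf : τ f = (x ^ q + algebraMap Cst L t) ^ n * (f + aeval x h))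
    (hg : τ g = (x ^ q + algebraMap Cst L t) ^ (2 * n) * (g + aeval x h * f + aeval x h ^ 2))
    (hu : τ u = (1 + algebraMap Cst L t * x⁻¹ ^ q) * u) (hu0 : u ≠ 0)
    (hord : ∀ e : ℕ, ∀ δ : L, τ δ = (x ^ q + algebraMap Cst L t) ^ (n * 2 ^ e) * δ → δ = 0)
    (hval : ∀ e : ℕ, ∀ A : Cst[X], f ^ 2 ^ e = aeval x A → A.eval t ≠ 0) :
    AlgebraicIndependent (IntermediateField.adjoin Cst {x}) ![u, f, g] := by
  have : Fact (Nat.Prime 2) := ⟨Nat.prime_two⟩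
  let K := IntermediateField.adjoin Cst {x}
  have hxm : x ∈ K := IntermediateField.mem_adjoin_simple_self Cst x
  have hx0 : x ≠ 0 := fun h => hx (h ▸ isAlgebraic_zero)
  have hst : ∀ c ∈ K, τ c ∈ K := by
    intro c hc
    obtain ⟨r, s, rfl⟩ := (IntermediateField.mem_adjoin_simple_iff Cst c).1 hc
    refine (IntermediateField.mem_adjoin_simple_iff Cst _).2 ⟨expand Cst q r, expand Cst q s, ?_⟩
    rw [map_div₀, expand_aeval, expand_aeval, ← hτ, aeval_algHom_apply, aeval_algHom_apply]
  let σ : K →+* K := RingHom.restrict τ.toRingHom K K hst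
  have hσ : ∀ y : K, algebraMap K L (σ y) = τ.toRingHom (algebraMap K L y) := fun y => rfl
  have hcC : CharP L 2 := charP_of_injective_algebraMap (algebraMap Cst L).injective 2
  have hcK : CharP K 2 := charP_of_injective_algebraMap (algebraMap Cst K).injective 2
  let x' : K := ⟨x, hxm⟩
  let α : K := (x' ^ q + algebraMap Cst K t) ^ n
  let η : K := aeval x' h
  let b : K := 1 + algebraMap Cst K t * x'⁻¹ ^ q
  have hαL : algebraMap K L α = (x ^ q + algebraMap Cst L t) ^ n := rfl
  have hηL : algebraMap K L η = aeval x h := by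
    change algebraMap K L (aeval x' h) = _
    rw [← aeval_algebraMap_apply]; rfl
  have hbL : algebraMap K L b = 1 + algebraMap Cst L t * x⁻¹ ^ q := rfl
  have hmul : x ^ q + algebraMap Cst L t = aeval x (X ^ q - C t) := by
    simp [CharTwo.sub_eq_add]
  have hinj : Function.Injective (aeval (R := Cst) x) := transcendental_iff_injective.1 hx
  have hα : α ≠ 0 := by
    intro h0
    have h1 := congrArg (algebraMap K L) h0
    rw [hαL, hmul, map_zero] at h1
    have h2 : (X ^ q - C t : Cst[X]) = 0 := hinj (by rw [pow_eq_zero_iff (by omega)] at h1; simp [h1])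
    have h3 := natDegree_X_pow_sub_C (R := Cst) (n := q) (r := t)
    rw [h2, natDegree_zero] at h3
    omega
  refine tower_algebraicIndependent (K := K) σ τ.toRingHom hσ (α := α) (η := η) (b := b) hα
    ?_ ?_ ?_ hu0 ?_ ?_ ?_
  · rw [hαL, hηL]; exact hf
  · rw [hαL, hηL, ← pow_mul, mul_comm n 2]; exact hg
  · rw [hbL]; exact hu
  · intro r hr p hp
    have hp' : τ (p : L) = aeval x ((X ^ q - C t) ^ (n * r)) * ((p : L) + aeval x (0 : Cst[X])) := by
      have h1 := congrArg (algebraMap K L) hp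
      rw [hσ, map_mul, map_pow, hαL, hmul, ← pow_mul, ← map_pow] at h1
      rw [map_zero, add_zero]; exact h1
    obtain ⟨P, hP, hPe⟩ := exists_poly_of_mem_adjoin hq τ hx hτ p.2 hp'
    have : P = 0 := eq_zero_of_expand_eq (by omega) ht (κ := 1) (N := n * r)
      (Nat.mul_pos hn hr) (by rw [hPe, C_1, one_mul, add_zero])
    apply Subtype.ext
    rw [hP, this, map_zero]; rfl
  · intro e p hp
    have hp' : τ (p : L) = aeval x ((X ^ q - C t) ^ (n * 2 ^ e)) *
        ((p : L) + aeval x (h ^ 2 ^ e)) := by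
      have h1 := congrArg (algebraMap K L) hp
      rw [hσ, map_mul, map_pow, hαL, hmul, ← pow_mul, ← map_pow, map_add, map_pow (algebraMap K L),
        hηL, ← map_pow] at h1
      exact h1
    obtain ⟨P, hP, hPe⟩ := exists_poly_of_mem_adjoin hq τ hx hτ p.2 hp'
    have hPt : P.eval t = 0 := eval_eq_zero_of_expand_dvd (q := q) (by omega) t (by
      rw [hPe]
      exact (dvd_pow_self _ (Nat.mul_pos hn (by positivity)).ne').mul_right _)
    -- the difference of two solutions (in characteristic two, their sum) solves the homogeneous
    -- equation, so `f ^ (2 ^ e) = P(x)`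
    have hδ := hord e (f ^ 2 ^ e + p) (by
      rw [map_add, map_pow, hf, hp', mul_pow, ← pow_mul, hmul, ← map_pow, add_pow_char_pow,
        map_pow (aeval x), map_pow (aeval x)]
      rw [show ∀ A B C D : L, A * (B + C) + A * (D + C) = A * (B + D) + A * (C + C) by
        intros; ring, CharTwo.add_self_eq_zero, mul_zero, add_zero])
    refine hval e P ?_ hPt
    rw [← hP]
    exact CharTwo.add_eq_zero.1 hδ
  · intro r hr p hp
    -- the equation of `u` has polynomial coefficients in `x⁻¹`, which generates the same field
    have hy : x⁻¹ ∈ K := K.inv_mem hxm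
    have hK : K = IntermediateField.adjoin Cst {x⁻¹} := by
      apply le_antisymm
      · rw [IntermediateField.adjoin_simple_le_iff]
        have := (IntermediateField.adjoin Cst {x⁻¹}).inv_mem
          (IntermediateField.mem_adjoin_simple_self Cst x⁻¹)
        rwa [inv_inv] at this
      · rw [IntermediateField.adjoin_simple_le_iff]; exact hy
    have hpm : (p : L) ∈ IntermediateField.adjoin Cst {x⁻¹} := hK ▸ p.2
    have htr : Transcendental Cst x⁻¹ := fun h => hx (by simpa using h.inv)
    have hp' : τ (p : L) = aeval x⁻¹ (C (t ^ r) * (X ^ q - C t⁻¹) ^ r) *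
        ((p : L) + aeval x⁻¹ (0 : Cst[X])) := by
      have h1 := congrArg (algebraMap K L) hp
      rw [hσ, map_mul, map_pow, hbL] at h1
      rw [map_zero, add_zero]
      refine h1.trans ?_
      congr 1
      have ht1 : algebraMap Cst L t ≠ 0 := by simpa using ht0
      rw [C_pow, ← mul_pow, map_pow]
      congr 1
      rw [map_mul, map_sub, map_pow, aeval_C, aeval_X, aeval_C, map_inv₀, CharTwo.sub_eq_add, mul_add,
        mul_inv_cancel₀ ht1, add_comm]
    obtain ⟨P, hP, hPe⟩ := exists_poly_of_mem_adjoin hq τ htr (by rw [map_inv₀, hτ, inv_pow])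
      hpm hp'
    have : P = 0 := eq_zero_of_expand_eq (q := q) (by omega) (β := t⁻¹) (κ := t ^ r) (N := r)
      (fun i j hij => ht (by simpa using hij)) hr (by rw [hPe, add_zero])
    apply Subtype.ext
    rw [hP, this, map_zero]; rfl

end Base
end DiffAlg

end

/-! ### Carlitz polynomials -/

section
open Polynomial

namespace AndersonThakur

variable {Fq : Type} [Field Fq] [Fintype Fq] {F : Type*} [Field F] [Algebra Fq F]

variable (Fq) in
theorem sub_pow_card (a b : F) (i : ℕ) : (a - b) ^ Fintype.card Fq ^ i = a ^ Fintype.card Fq ^ i - b ^ Fintype.card Fq ^ i := by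
  induction i with
  | zero => simp
  | succ i ih =>
    rw [pow_succ, pow_mul, ih, pow_mul, pow_mul]
    exact map_sub (FiniteField.frobeniusAlgHom Fq F) _ _

/-- Carlitz's polynomials `e_d(z) / D_d`, as `𝔽_q`-linear functions: the unique ones killing the
polynomials in `θ` of degree `< d` and taking the value `1` at `θ ^ d`. -/
noncomputable def carl (Fq : Type) [Field Fq] [Fintype Fq] {F : Type*} [Field F] [Algebra Fq F]
    (θ : F) : ℕ → (F →ₗ[Fq] F)
  | 0 => LinearMap.id
  | d + 1 => (θ ^ Fintype.card Fq ^ (d + 1) - θ)⁻¹ •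
      ((FiniteField.frobeniusAlgHom Fq F).toLinearMap ∘ₗ carl Fq θ d - carl Fq θ d)

variable {θ : F} (hθ : ∀ i : ℕ, θ ^ Fintype.card Fq ^ (i + 1) - θ ≠ 0)

theorem carl_zero (z : F) : carl Fq θ 0 z = z := rfl

theorem carl_succ (d : ℕ) (z : F) : carl Fq θ (d + 1) z =
    (θ ^ Fintype.card Fq ^ (d + 1) - θ)⁻¹ * ((carl Fq θ d z) ^ Fintype.card Fq - carl Fq θ d z) := rfl

include hθ in
theorem carl_succ' (d : ℕ) (z : F) : (θ ^ Fintype.card Fq ^ (d + 1) - θ) * carl Fq θ (d + 1) z =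
    (carl Fq θ d z) ^ Fintype.card Fq - carl Fq θ d z := by
  rw [carl_succ, mul_inv_cancel_left₀ (hθ d)]

variable (Fq) in
theorem add_pow_q (a b : F) : (a + b) ^ Fintype.card Fq = a ^ Fintype.card Fq + b ^ Fintype.card Fq :=
  map_add (FiniteField.frobeniusAlgHom Fq F) a b

variable (Fq) in
theorem sub_pow_q (a b : F) : (a - b) ^ Fintype.card Fq = a ^ Fintype.card Fq - b ^ Fintype.card Fq :=
  map_sub (FiniteField.frobeniusAlgHom Fq F) a b

include hθ in
/-- The recursion of Carlitz's polynomials under multiplication by `θ`, which determines their values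
at the powers of `θ`. -/
theorem carl_theta (d : ℕ) (z : F) : carl Fq θ (d + 1) (θ * z) =
    θ * carl Fq θ (d + 1) z + (carl Fq θ d z) ^ Fintype.card Fq := by
  induction d with
  | zero =>
    apply mul_left_cancel₀ (hθ 0)
    rw [mul_add, mul_left_comm, carl_succ' hθ, carl_succ' hθ, carl_zero, carl_zero]
    simp only [zero_add, pow_one, mul_pow]
    ring
  | succ d ih =>
    apply mul_left_cancel₀ (hθ (d + 1))
    rw [mul_add, mul_left_comm, carl_succ' hθ (d + 1), carl_succ' hθ (d + 1), ih, add_pow_q Fq,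
      mul_pow]
    have h := congrArg (fun w => w ^ Fintype.card Fq) (carl_succ' hθ d z)
    simp only [mul_pow, sub_pow_q Fq] at h
    rw [← pow_mul, ← pow_succ] at h
    linear_combination (-1 : F) * h

include hθ in
theorem carl_pow (d : ℕ) : (∀ j, j < d → carl Fq θ d (θ ^ j) = 0) ∧ carl Fq θ d (θ ^ d) = 1 := by
  induction d with
  | zero => simp [carl_zero]
  | succ d ih =>
    have h0 : carl Fq θ (d + 1) 1 = 0 := by
      rw [carl_succ]
      rcases Nat.eq_zero_or_pos d with rfl | hd
      · simp [carl_zero]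
      · have := ih.1 0 hd
        rw [pow_zero] at this
        rw [this, zero_pow Fintype.card_ne_zero]; simp
    have hj : ∀ j, j < d + 1 → carl Fq θ (d + 1) (θ ^ j) = 0 := by
      intro j
      induction j with
      | zero => intro _; simpa using h0
      | succ j ihj =>
        intro hj
        rw [pow_succ', carl_theta hθ, ihj (by omega), ih.1 j (by omega)]
        simp [Fintype.card_ne_zero]
    refine ⟨hj, ?_⟩
    rw [pow_succ', carl_theta hθ, hj d (by omega), ih.2]
    simp

include hθ in
theorem carl_monic {a : Fq[X]} (ha : a.Monic) : carl Fq θ a.natDegree (aeval θ a) = 1 := by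
  rw [aeval_eq_sum_range, map_sum, Finset.sum_range_succ, Finset.sum_eq_zero]
  · rw [map_smul, (carl_pow hθ _).2, ha.coeff_natDegree, one_smul, zero_add]
  · intro j hj
    rw [map_smul, (carl_pow hθ _).1 j (Finset.mem_range.1 hj), smul_zero]

variable (Fq) in
/-- The product `D_i` of all monic polynomials of degree `i`, defined by its recursion
`D_{i+1} = (X ^ (q ^ (i+1)) - X) D_i ^ q`. -/
noncomputable def Dp : ℕ → Fq[X]
  | 0 => 1
  | i + 1 => (X ^ Fintype.card Fq ^ (i + 1) - X) * Dp i ^ Fintype.card Fq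

variable (Fq) (θ) in
/-- `ℓ_d = ∏_{1 ≤ j ≤ d} (θ - θ ^ (q ^ j))`. -/
noncomputable def ell (d : ℕ) : F := ∏ j ∈ Finset.range d, (θ - θ ^ Fintype.card Fq ^ (j + 1))

variable (Fq) (θ) in
/-- The coefficient of `z ^ (q ^ i)` in Carlitz's polynomial `e_d(z) / D_d`. -/
noncomputable def pc (d i : ℕ) : F := (aeval θ (Dp Fq i) * ell Fq θ (d - i) ^ Fintype.card Fq ^ i)⁻¹

include hθ in
theorem aeval_Dp_ne_zero (i : ℕ) : aeval θ (Dp Fq i) ≠ 0 := by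
  induction i with
  | zero => simp [Dp]
  | succ i ih =>
    rw [Dp, map_mul, map_pow]
    refine mul_ne_zero ?_ (pow_ne_zero _ ih)
    simpa using hθ i

include hθ in
theorem ell_ne_zero (d : ℕ) : ell Fq θ d ≠ 0 := by
  rw [ell, Finset.prod_ne_zero_iff]
  intro j _ h
  exact hθ j (by linear_combination (-1 : F) * h)

include hθ in
/-- Carlitz's polynomial `e_d(z) / D_d` as an explicit `q`-linear polynomial in `z`. -/
theorem carl_expansion (d : ℕ) (z : F) :
    carl Fq θ d z = ∑ i ∈ Finset.range (d + 1), pc Fq θ d i * z ^ Fintype.card Fq ^ i := by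
  induction d with
  | zero => simp [carl_zero, pc, Dp, ell]
  | succ d ih =>
    apply mul_left_cancel₀ (hθ d)
    rw [carl_succ' hθ, ih]
    have hfrob : (∑ i ∈ Finset.range (d + 1), pc Fq θ d i * z ^ Fintype.card Fq ^ i) ^ Fintype.card Fq =
        ∑ i ∈ Finset.range (d + 1), pc Fq θ d i ^ Fintype.card Fq * z ^ Fintype.card Fq ^ (i + 1) := by
      have := map_sum (FiniteField.frobeniusAlgHom Fq F) (fun i => pc Fq θ d i * z ^ Fintype.card Fq ^ i)
        (Finset.range (d + 1))
      rw [FiniteField.coe_frobeniusAlgHom] at this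
      refine this.trans ?_
      refine Finset.sum_congr rfl fun i _ => ?_
      simp only [mul_pow, ← pow_mul, ← pow_succ]
    have hD := aeval_Dp_ne_zero hθ
    have hl := ell_ne_zero hθ
    have hstep : ∀ i, i < d → pc Fq θ d i ^ Fintype.card Fq - pc Fq θ d (i + 1) =
        (θ ^ Fintype.card Fq ^ (d + 1) - θ) * pc Fq θ (d + 1) (i + 1) := by
      intro i hi
      obtain ⟨m, rfl⟩ : ∃ m, d = i + 1 + m := ⟨d - (i + 1), by omega⟩
      simp only [pc]
      rw [show i + 1 + m - i = m + 1 by omega, show i + 1 + m - (i + 1) = m by omega,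
        show i + 1 + m + 1 - (i + 1) = m + 1 by omega]
      have e1 : ell Fq θ (m + 1) = ell Fq θ m * (θ - θ ^ Fintype.card Fq ^ (m + 1)) := by
        rw [ell, Finset.prod_range_succ, ell]
      have e2 : aeval θ (Dp Fq (i + 1)) = (θ ^ Fintype.card Fq ^ (i + 1) - θ) * aeval θ (Dp Fq i) ^ Fintype.card Fq := by
        rw [Dp]; simp
      have h1 := hD (i + 1)
      have h2 := hD i
      have h3 := hl m
      have h4 := hl (m + 1)
      have h5 := hθ i
      have h6 : ell Fq θ (m + 1) ^ Fintype.card Fq ^ (i + 1) =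
          ell Fq θ m ^ Fintype.card Fq ^ (i + 1) * (θ ^ Fintype.card Fq ^ (i + 1) - θ ^ Fintype.card Fq ^ (i + 1 + m + 1)) := by
        rw [e1, mul_pow, sub_pow_card Fq, ← pow_mul, ← pow_add]
        congr 4; ring_nf
      have h7 : θ ^ Fintype.card Fq ^ (i + 1) - θ ^ Fintype.card Fq ^ (i + 1 + m + 1) ≠ 0 := by
        intro h; rw [h, mul_zero] at h6
        exact pow_ne_zero _ h4 h6
      rw [inv_pow, mul_pow, ← pow_mul, ← pow_succ, h6, e2]
      field_simp
      ring
    have h0 : - pc Fq θ d 0 = (θ ^ Fintype.card Fq ^ (d + 1) - θ) * pc Fq θ (d + 1) 0 := by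
      simp only [pc, Dp, map_one, pow_zero, pow_one, one_mul, Nat.sub_zero]
      have e1 : ell Fq θ (d + 1) = ell Fq θ d * (θ - θ ^ Fintype.card Fq ^ (d + 1)) := by
        rw [ell, Finset.prod_range_succ, ell]
      have h3 := hl d
      have h4 := hθ d
      have h5 : θ - θ ^ Fintype.card Fq ^ (d + 1) ≠ 0 := fun h => h4 (by linear_combination (-1 : F) * h)
      rw [e1]
      field_simp
      ring
    have hlast : pc Fq θ d d ^ Fintype.card Fq = (θ ^ Fintype.card Fq ^ (d + 1) - θ) * pc Fq θ (d + 1) (d + 1) := by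
      simp only [pc, Nat.sub_self, ell, Finset.range_zero, Finset.prod_empty, one_pow, mul_one]
      have e2 : aeval θ (Dp Fq (d + 1)) = (θ ^ Fintype.card Fq ^ (d + 1) - θ) * aeval θ (Dp Fq d) ^ Fintype.card Fq := by
        rw [Dp]; simp
      rw [e2, mul_inv, mul_inv_cancel_left₀ (hθ d), inv_pow]
    rw [hfrob, Finset.sum_range_succ' (fun i => pc Fq θ d i * z ^ Fintype.card Fq ^ i),
      Finset.sum_range_succ (fun i => pc Fq θ d i ^ Fintype.card Fq * z ^ Fintype.card Fq ^ (i + 1)),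
      Finset.sum_range_succ', Finset.sum_range_succ, mul_add, mul_add, Finset.mul_sum]
    have hs : ∑ i ∈ Finset.range d, (θ ^ Fintype.card Fq ^ (d + 1) - θ) * (pc Fq θ (d + 1) (i + 1) * z ^ Fintype.card Fq ^ (i + 1))
        = ∑ i ∈ Finset.range d, pc Fq θ d i ^ Fintype.card Fq * z ^ Fintype.card Fq ^ (i + 1) -
          ∑ i ∈ Finset.range d, pc Fq θ d (i + 1) * z ^ Fintype.card Fq ^ (i + 1) := by
      rw [← Finset.sum_sub_distrib]
      refine Finset.sum_congr rfl fun i hi => ?_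
      rw [← mul_assoc, ← hstep i (Finset.mem_range.1 hi)]; ring
    rw [hs, ← mul_assoc _ _ (z ^ Fintype.card Fq ^ 0), ← h0, ← mul_assoc _ _ (z ^ Fintype.card Fq ^ (d + 1)), ← hlast]
    ring

end AndersonThakur

end

/-! ### Power sums of monic polynomials -/

section
open Polynomial

namespace AndersonThakur

variable {Fq : Type} [Field Fq] [Fintype Fq] {F : Type*} [Field F] [Algebra Fq F]

variable (Fq) in
/-- The monic polynomials of degree `d`. -/
abbrev Mon (d : ℕ) : Type := {a : Fq[X] // a.Monic ∧ a.natDegree = d}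

noncomputable instance (d : ℕ) : Fintype (Mon Fq d) :=
  Fintype.ofEquiv (Fin d → Fq) ((monicEquivDegreeLT d).trans (degreeLTEquiv Fq d).toEquiv).symm

theorem card_Mon (d : ℕ) : Fintype.card (Mon Fq d) = Fintype.card Fq ^ d := by
  rw [Fintype.card_congr ((monicEquivDegreeLT d).trans (degreeLTEquiv Fq d).toEquiv)]
  simp

variable (Fq) in
/-- The power sum of exponent `-n` over the monic polynomials of degree `d`. -/
noncomputable def powerSum (θ : F) (d n : ℕ) : F := ∑ a : Mon Fq d, ((aeval θ a.1) ^ n)⁻¹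

variable {θ : F} (hθ : ∀ i : ℕ, θ ^ Fintype.card Fq ^ (i + 1) - θ ≠ 0)
  (htr : Transcendental Fq θ)

variable (Fq) (θ) in
/-- `1 - e_d(z) / D_d`, whose roots are the monic polynomials of degree `d`. -/
noncomputable def Pd (d : ℕ) : F[X] :=
  1 - ∑ i ∈ Finset.range (d + 1), C (pc Fq θ d i) * X ^ Fintype.card Fq ^ i

include hθ in
theorem eval_Pd (d : ℕ) (z : F) : (Pd Fq θ d).eval z = 1 - carl Fq θ d z := by
  rw [carl_expansion hθ, Pd]
  simp [eval_finsetSum]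

theorem derivative_Pd (d : ℕ) : derivative (Pd Fq θ d) = - C (ell Fq θ d)⁻¹ := by
  have hq0 : (Fintype.card Fq : F) = 0 := by
    have := congrArg (algebraMap Fq F) (FiniteField.cast_card_eq_zero Fq)
    rw [map_natCast, map_zero] at this
    exact this
  rw [Pd, derivative_sub, derivative_one, zero_sub, derivative_sum, Finset.sum_range_succ',
    Finset.sum_eq_zero]
  · simp [pc, Dp]
  · intro i _
    rw [derivative_C_mul_X_pow, Nat.cast_pow, hq0]
    simp

theorem natDegree_Pd_le (d : ℕ) : (Pd Fq θ d).natDegree ≤ Fintype.card Fq ^ d := by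
  rw [Pd]
  refine (natDegree_sub_le _ _).trans (max_le (by simp) ?_)
  refine natDegree_sum_le_of_forall_le _ _ fun i hi => ?_
  refine (natDegree_C_mul_X_pow_le _ _).trans ?_
  exact Nat.pow_le_pow_right Fintype.card_pos (by simp at hi; omega)

include hθ htr in
theorem Pd_eq_prod (d : ℕ) : ∃ c : F, Pd Fq θ d = C c * ∏ a : Mon Fq d, (X - C (aeval θ a.1)) := by
  have hne : Pd Fq θ d ≠ 0 := by
    intro h
    have := derivative_Pd (Fq := Fq) (θ := θ) d
    rw [h, derivative_zero, eq_comm, neg_eq_zero, C_eq_zero, inv_eq_zero] at this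
    exact ell_ne_zero hθ d this
  have hinj : Function.Injective (fun a : Mon Fq d => aeval θ a.1) := fun a b hab =>
    Subtype.ext (transcendental_iff_injective.1 htr hab)
  have hdvd : ∏ a : Mon Fq d, (X - C (aeval θ a.1)) ∣ Pd Fq θ d := by
    apply Finset.prod_dvd_of_coprime
    · intro a _ b _ hab
      exact isCoprime_X_sub_C_of_isUnit_sub (sub_ne_zero.2 (hinj.ne hab)).isUnit
    · intro a _
      rw [dvd_iff_isRoot, IsRoot.def, eval_Pd hθ]
      have := carl_monic hθ a.2.1
      rw [a.2.2] at this
      rw [this, sub_self]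
  obtain ⟨v, hv⟩ := hdvd
  have hv0 : v ≠ 0 := by rintro rfl; simp at hv; exact hne hv
  have hm : (∏ a : Mon Fq d, (X - C (aeval θ a.1))).Monic :=
    monic_prod_of_monic _ _ fun a _ => monic_X_sub_C _
  have hd : v.natDegree = 0 := by
    have h := natDegree_Pd_le (Fq := Fq) (θ := θ) d
    rw [hv, natDegree_mul hm.ne_zero hv0, natDegree_prod_of_monic _ _ fun a _ => monic_X_sub_C _] at h
    simp only [natDegree_X_sub_C, Finset.sum_const, Finset.card_univ, smul_eq_mul, mul_one,
      card_Mon] at h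
    omega
  obtain ⟨c, rfl⟩ := natDegree_eq_zero.1 hd
  exact ⟨c, by rw [hv, mul_comm]⟩

include hθ htr in
/-- Logarithmic derivative of `1 - e_d(z) / D_d`. -/
theorem Pd_mul_generating (d : ℕ) :
    (Pd Fq θ d : PowerSeries F) * PowerSeries.mk (fun n => powerSum Fq θ d (n + 1)) =
      PowerSeries.C (ell Fq θ d)⁻¹ := by
  classical
  obtain ⟨c, hc⟩ := Pd_eq_prod hθ htr d
  have hmk : PowerSeries.mk (fun n => powerSum Fq θ d (n + 1)) =
      ∑ a : Mon Fq d, PowerSeries.mk (fun n => ((aeval θ a.1) ^ (n + 1))⁻¹) := by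
    ext n
    rw [PowerSeries.coeff_mk, map_sum]
    simp only [PowerSeries.coeff_mk, powerSum]
  have hone : ∀ a : Mon Fq d, ((X - C (aeval θ a.1) : F[X]) : PowerSeries F) *
      PowerSeries.mk (fun n => ((aeval θ a.1) ^ (n + 1))⁻¹) = -1 := by
    intro a
    have ha : aeval θ a.1 ≠ 0 := fun h => a.2.1.ne_zero
      (transcendental_iff_injective.1 htr (by rw [h, map_zero]))
    ext n
    rw [coe_sub, coe_X, coe_C, sub_mul, map_sub, PowerSeries.coeff_C_mul, PowerSeries.coeff_mk]
    cases n with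
    | zero => simp [ha]
    | succ n =>
      rw [PowerSeries.coeff_succ_X_mul, PowerSeries.coeff_mk]
      simp only [map_neg, PowerSeries.coeff_one, Nat.succ_ne_zero, if_false, neg_zero]
      field_simp
      ring
  have hder := derivative_Pd (Fq := Fq) (θ := θ) d
  rw [hc, derivative_C_mul, derivative_prod_finset] at hder
  rw [hmk, Finset.mul_sum, hc]
  have : ∀ a : Mon Fq d, (((C c * ∏ a : Mon Fq d, (X - C (aeval θ a.1)) : F[X])) : PowerSeries F) *
      PowerSeries.mk (fun n => ((aeval θ a.1) ^ (n + 1))⁻¹) =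
      -((C c * ∏ b ∈ Finset.univ.erase a, (X - C (aeval θ b.1)) : F[X]) : PowerSeries F) := by
    intro a
    rw [← Finset.prod_erase_mul _ _ (Finset.mem_univ a), ← mul_assoc, coe_mul, mul_assoc, hone,
      mul_neg_one]
  rw [Finset.sum_congr rfl fun a _ => this a, Finset.sum_neg_distrib]
  have h2 := congrArg (Polynomial.coeToPowerSeries.ringHom (R := F)) hder
  simp only [Finset.mul_sum, map_sum, map_neg] at h2
  simp only [coeToPowerSeries.ringHom_apply] at h2
  rw [neg_eq_iff_eq_neg, ← coe_C, ← h2]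
  refine Finset.sum_congr rfl fun a _ => ?_
  simp

include hθ htr in
/-- The recursion for the power sums obtained by comparing coefficients in the logarithmic
derivative of `1 - e_d(z) / D_d`. -/
theorem powerSum_rec (d n : ℕ) : powerSum Fq θ d (n + 1) = (if n = 0 then (ell Fq θ d)⁻¹ else 0) +
    ∑ i ∈ Finset.range (d + 1), if Fintype.card Fq ^ i ≤ n then
      pc Fq θ d i * powerSum Fq θ d (n - Fintype.card Fq ^ i + 1) else 0 := by
  have h := congrArg (PowerSeries.coeff n) (Pd_mul_generating hθ htr d)
  have hP : ((Pd Fq θ d : F[X]) : PowerSeries F) =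
      1 - ∑ i ∈ Finset.range (d + 1), PowerSeries.C (pc Fq θ d i) * PowerSeries.X ^ Fintype.card Fq ^ i := by
    rw [Pd, coe_sub, coe_one, ← coeToPowerSeries.ringHom_apply, map_sum]
    simp [coeToPowerSeries.ringHom_apply]
  rw [hP, sub_mul, one_mul, map_sub, PowerSeries.coeff_mk, PowerSeries.coeff_C, Finset.sum_mul,
    map_sum, sub_eq_iff_eq_add] at h
  rw [h]
  congr 1
  refine Finset.sum_congr rfl fun i _ => ?_
  rw [mul_assoc, PowerSeries.coeff_C_mul, PowerSeries.coeff_X_pow_mul']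
  split_ifs <;> simp

end AndersonThakur

end

/-! ### Anderson–Thakur interpolation of power sums -/

section
open Polynomial

namespace AndersonThakur

variable {Fq : Type} [Field Fq] [Fintype Fq] {F : Type*} [Field F] [Algebra Fq F]

variable (Fq) in
/-- The two-variable polynomial `∏_{m < i} (t ^ q ^ i - X ^ q ^ (m + 1))`; the inner variable is
`t`. -/
noncomputable def Gp (i : ℕ) : Fq[X][X] :=
  ∏ m ∈ Finset.range i, (C (X ^ Fintype.card Fq ^ i) - X ^ Fintype.card Fq ^ (m + 1))

variable (Fq) in
/-- Evaluation of a two-variable polynomial at `t = θ`, `X = θ ^ q ^ d`. -/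
noncomputable def evd (θ : F) (d : ℕ) : Fq[X][X] →+* F :=
  eval₂RingHom (aeval θ : Fq[X] →ₐ[Fq] F).toRingHom (θ ^ Fintype.card Fq ^ d)

theorem evd_C (θ : F) (d : ℕ) (r : Fq[X]) : evd Fq θ d (C r) = aeval θ r := by
  simp [evd]

theorem evd_X (θ : F) (d : ℕ) : evd Fq θ d X = θ ^ Fintype.card Fq ^ d := by
  simp [evd]

theorem evd_Gp (θ : F) (d i : ℕ) : evd Fq θ d (Gp Fq i) = ∏ m ∈ Finset.range i,
    (θ ^ Fintype.card Fq ^ i - θ ^ Fintype.card Fq ^ (d + m + 1)) := by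
  rw [Gp, map_prod]
  refine Finset.prod_congr rfl fun m _ => ?_
  rw [map_sub, evd_C, map_pow, aeval_X, map_pow, evd_X, ← pow_mul, ← pow_add, add_assoc]

theorem evd_Gp_eq_zero (θ : F) {d i : ℕ} (h : d < i) : evd Fq θ d (Gp Fq i) = 0 := by
  rw [evd_Gp]
  refine Finset.prod_eq_zero (i := i - d - 1) (by simp; omega) ?_
  rw [show d + (i - d - 1) + 1 = i by omega, sub_self]

theorem ell_pow (θ : F) (d i : ℕ) : ell Fq θ d ^ Fintype.card Fq ^ i =
    ∏ j ∈ Finset.range d, (θ ^ Fintype.card Fq ^ i - θ ^ Fintype.card Fq ^ (j + 1 + i)) := by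
  rw [ell, ← Finset.prod_pow]
  refine Finset.prod_congr rfl fun j _ => ?_
  rw [sub_pow_card Fq, ← pow_mul, ← pow_add]

/-- The ratio `ℓ_d ^ (q ^ i) / ℓ_{d-i} ^ (q ^ i)` is a polynomial in `θ ^ (q ^ d)` independent of `d`. -/
theorem ell_pow_eq (θ : F) {d i : ℕ} (h : i ≤ d) : ell Fq θ d ^ Fintype.card Fq ^ i =
    ell Fq θ (d - i) ^ Fintype.card Fq ^ i * evd Fq θ d (Gp Fq i) := by
  rw [ell_pow, ell_pow, evd_Gp]
  conv_lhs => rw [show d = (d - i) + i by omega]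
  rw [Finset.prod_range_add]
  congr 1
  refine Finset.prod_congr rfl fun m _ => ?_
  rw [show d - i + m + 1 + i = d + m + 1 by omega]

theorem natDegree_Gp (i : ℕ) :
    (Fintype.card Fq - 1) * (Gp Fq i).natDegree ≤ Fintype.card Fq * (Fintype.card Fq ^ i - 1) := by
  have h1 : (Gp Fq i).natDegree ≤ ∑ m ∈ Finset.range i, Fintype.card Fq ^ (m + 1) := by
    refine (natDegree_prod_le _ _).trans (Finset.sum_le_sum fun m _ => ?_)
    refine (natDegree_sub_le _ _).trans (max_le ?_ ?_)
    · rw [natDegree_C]; exact Nat.zero_le _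
    · exact natDegree_X_pow_le _
  have h2 : ∀ i : ℕ, (Fintype.card Fq - 1) * ∑ m ∈ Finset.range i, Fintype.card Fq ^ (m + 1) =
      Fintype.card Fq * (Fintype.card Fq ^ i - 1) := by
    intro i
    have := Nat.geomSum_eq (Fintype.one_lt_card (α := Fq)) i
    have h3 := Nat.sub_one_dvd_pow_sub_one (Fintype.card Fq) i
    rw [Finset.sum_congr rfl fun m _ => pow_succ' (Fintype.card Fq) m, ← Finset.mul_sum, this,
      mul_left_comm, Nat.mul_div_cancel' h3]
  exact (Nat.mul_le_mul_left _ h1).trans (h2 i).le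

variable (Fq) in
/-- The sequence `σ` is, up to a constant, the sequence of values at `X = θ ^ q ^ d` of a
polynomial in `X` over `𝔽_q[θ]` whose degree, times `q - 1`, is at most `b`. -/
def Good (θ : F) (b : ℕ) (σ : ℕ → F) : Prop :=
  ∃ (Γ : Fq[X]) (h : Fq[X][X]), Γ ≠ 0 ∧ (Fintype.card Fq - 1) * h.natDegree ≤ b ∧
    ∀ d, aeval θ Γ * σ d = evd Fq θ d h

variable {θ : F}

theorem Good.zero (b : ℕ) : Good Fq θ b 0 := ⟨1, 0, one_ne_zero, by simp, by simp⟩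

theorem Good.one (b : ℕ) : Good Fq θ b 1 := ⟨1, 1, one_ne_zero, by simp, by simp⟩

theorem Good.mono {b b' : ℕ} {σ : ℕ → F} (h : Good Fq θ b σ) (hb : b ≤ b') : Good Fq θ b' σ := by
  obtain ⟨Γ, h, h0, h1, h2⟩ := h
  exact ⟨Γ, h, h0, h1.trans hb, h2⟩

theorem Good.add {b : ℕ} {σ σ' : ℕ → F} (h : Good Fq θ b σ) (h' : Good Fq θ b σ') :
    Good Fq θ b (σ + σ') := by
  obtain ⟨Γ, h, h0, h1, h2⟩ := h
  obtain ⟨Γ', h', h0', h1', h2'⟩ := h'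
  refine ⟨Γ * Γ', C Γ' * h + C Γ * h', mul_ne_zero h0 h0', ?_, fun d => ?_⟩
  · have : (C Γ' * h + C Γ * h').natDegree ≤ max h.natDegree h'.natDegree :=
      (natDegree_add_le _ _).trans (max_le_max (natDegree_C_mul_le _ _) (natDegree_C_mul_le _ _))
    rcases le_max_iff.1 this with h | h
    · exact (Nat.mul_le_mul_left _ h).trans h1
    · exact (Nat.mul_le_mul_left _ h).trans h1'
  · simp only [map_add, map_mul, evd_C, Pi.add_apply, ← h2, ← h2']
    ring

theorem Good.mul {b b' : ℕ} {σ σ' : ℕ → F} (h : Good Fq θ b σ) (h' : Good Fq θ b' σ') :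
    Good Fq θ (b + b') (σ * σ') := by
  obtain ⟨Γ, h, h0, h1, h2⟩ := h
  obtain ⟨Γ', h', h0', h1', h2'⟩ := h'
  refine ⟨Γ * Γ', h * h', mul_ne_zero h0 h0', ?_, fun d => ?_⟩
  · refine (Nat.mul_le_mul_left _ natDegree_mul_le).trans ?_
    rw [mul_add]
    omega
  · simp only [map_mul, Pi.mul_apply, ← h2, ← h2']
    ring

theorem Good.sum {b : ℕ} {ι : Type*} (s : Finset ι) (σ : ι → ℕ → F)
    (h : ∀ i ∈ s, Good Fq θ b (σ i)) : Good Fq θ b (∑ i ∈ s, σ i) := by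
  classical
  induction s using Finset.induction_on with
  | empty => exact Good.zero b
  | insert a s ha ih =>
    rw [Finset.sum_insert ha]
    exact (h a (by simp)).add (ih fun i hi => h i (by simp [hi]))

theorem good_Gp (hθ : ∀ i : ℕ, θ ^ Fintype.card Fq ^ (i + 1) - θ ≠ 0) (i : ℕ) :
    Good Fq θ (Fintype.card Fq * (Fintype.card Fq ^ i - 1))
      (fun d => evd Fq θ d (Gp Fq i) / aeval θ (Dp Fq i)) :=
  ⟨Dp Fq i, Gp Fq i, fun h => aeval_Dp_ne_zero hθ i (by rw [h, map_zero]), natDegree_Gp i,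
    fun d => mul_div_cancel₀ _ (aeval_Dp_ne_zero hθ i)⟩

/-- The recursion `powerSum_rec` after multiplication by `ℓ_d ^ (n+1)`: its coefficients become
polynomials in `θ ^ (q ^ d)`, and the range of summation no longer depends on `d`, since `Gp i`
vanishes at `X = θ ^ (q ^ d)` for `i > d`. -/
theorem powerSum_ell_rec (hθ : ∀ i : ℕ, θ ^ Fintype.card Fq ^ (i + 1) - θ ≠ 0)
    (htr : Transcendental Fq θ) (d n : ℕ) :
    powerSum Fq θ d (n + 1) * ell Fq θ d ^ (n + 1) = (if n = 0 then 1 else 0) +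
      ∑ i ∈ Finset.range (n + 1), if Fintype.card Fq ^ i ≤ n then
        evd Fq θ d (Gp Fq i) / aeval θ (Dp Fq i) *
          (powerSum Fq θ d (n - Fintype.card Fq ^ i + 1) *
            ell Fq θ d ^ (n - Fintype.card Fq ^ i + 1)) else 0 := by
  have hl := ell_ne_zero (Fq := Fq) hθ d
  rw [powerSum_rec hθ htr, add_mul, Finset.sum_mul]
  congr 1
  · split_ifs with h
    · subst h; simp [hl]
    · simp
  have key : ∀ i, i ≤ d → (if Fintype.card Fq ^ i ≤ n then
      pc Fq θ d i * powerSum Fq θ d (n - Fintype.card Fq ^ i + 1) else 0) * ell Fq θ d ^ (n + 1) =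
      if Fintype.card Fq ^ i ≤ n then
        evd Fq θ d (Gp Fq i) / aeval θ (Dp Fq i) *
          (powerSum Fq θ d (n - Fintype.card Fq ^ i + 1) *
            ell Fq θ d ^ (n - Fintype.card Fq ^ i + 1)) else 0 := by
    intro i hi
    split_ifs with h
    · have h1 : n + 1 = Fintype.card Fq ^ i + (n - Fintype.card Fq ^ i + 1) := by omega
      conv_lhs => rw [h1]
      rw [pow_add (ell Fq θ d), ell_pow_eq θ hi, pc]
      have := aeval_Dp_ne_zero (Fq := Fq) hθ i
      have := ell_ne_zero (Fq := Fq) hθ (d - i)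
      field_simp
    · rw [zero_mul]
  rw [Finset.sum_congr rfl fun i hi => key i (by simp at hi; omega)]
  have e1 := Finset.sum_subset (Finset.range_subset_range.2 (show d + 1 ≤ d + n + 1 by omega))
    (f := fun i => if Fintype.card Fq ^ i ≤ n then
        evd Fq θ d (Gp Fq i) / aeval θ (Dp Fq i) *
          (powerSum Fq θ d (n - Fintype.card Fq ^ i + 1) *
            ell Fq θ d ^ (n - Fintype.card Fq ^ i + 1)) else 0) (by
      intro i _ hi
      rw [evd_Gp_eq_zero θ (by simp at hi; omega)]
      simp)
  have e2 := Finset.sum_subset (Finset.range_subset_range.2 (show n + 1 ≤ d + n + 1 by omega))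
    (f := fun i => if Fintype.card Fq ^ i ≤ n then
        evd Fq θ d (Gp Fq i) / aeval θ (Dp Fq i) *
          (powerSum Fq θ d (n - Fintype.card Fq ^ i + 1) *
            ell Fq θ d ^ (n - Fintype.card Fq ^ i + 1)) else 0) (by
      intro i _ hi
      refine if_neg ?_
      have := Nat.lt_pow_self (Fintype.one_lt_card (α := Fq)) (n := i)
      simp at hi
      omega)
  rw [e1, e2]

/-- The Anderson–Thakur interpolation: `ℓ_d ^ n S_d(n)` is a polynomial in `θ ^ q ^ d`, of small
degree. -/
theorem good_powerSum (hθ : ∀ i : ℕ, θ ^ Fintype.card Fq ^ (i + 1) - θ ≠ 0)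
    (htr : Transcendental Fq θ) (n : ℕ) :
    Good Fq θ (Fintype.card Fq * n) (fun d => powerSum Fq θ d (n + 1) * ell Fq θ d ^ (n + 1)) := by
  induction n using Nat.strong_induction_on with
  | _ n ih =>
  have : (fun d => powerSum Fq θ d (n + 1) * ell Fq θ d ^ (n + 1)) =
      (if n = 0 then 1 else 0) + ∑ i ∈ Finset.range (n + 1), if Fintype.card Fq ^ i ≤ n then
        (fun d => evd Fq θ d (Gp Fq i) / aeval θ (Dp Fq i)) *
          (fun d => powerSum Fq θ d (n - Fintype.card Fq ^ i + 1) *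
            ell Fq θ d ^ (n - Fintype.card Fq ^ i + 1)) else 0 := by
    funext d
    rw [powerSum_ell_rec hθ htr, Pi.add_apply, Finset.sum_apply]
    congr 1
    · split_ifs <;> simp
    · refine Finset.sum_congr rfl fun i _ => ?_
      split_ifs <;> simp
  rw [this]
  refine Good.add ?_ (Good.sum _ _ fun i _ => ?_)
  · split_ifs
    · exact Good.one _
    · exact Good.zero _
  · split_ifs with h
    · have hpos : 0 < Fintype.card Fq ^ i := pow_pos Fintype.card_pos _
      refine ((good_Gp hθ i).mul (ih _ (by omega))).mono ?_
      rw [← mul_add]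
      exact Nat.mul_le_mul_left _ (by omega)
    · exact Good.zero _

end AndersonThakur

end

/-! ### The valuation topology of `k_∞` -/

section
set_option linter.unusedSectionVars false

namespace KinfVal
open Polynomial Filter Topology WithZero

variable {Fq : Type} [Field Fq] [Fintype Fq]

variable (Fq) in
/-- The elements of `k_∞` of valuation at least `D`, i.e. the multiples of `θ ^ (-D)` in
`𝔽_q[[1/θ]]`. -/
def ordGe (D : ℤ) : AddSubgroup (Kinf Fq) where
  carrier := {x | Valued.v x ≤ exp (-D)}
  add_mem' {x y} hx hy := by
    rw [Set.mem_ofPred_eq] at *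
    exact (Valuation.map_add _ x y).trans (max_le hx hy)
  zero_mem' := by simp
  neg_mem' {x} hx := by
    have : Valued.v (-x) = Valued.v x := Valuation.map_neg _ _
    simpa [this] using hx

theorem mem_ordGe {D : ℤ} {x : Kinf Fq} : x ∈ ordGe Fq D ↔ Valued.v x ≤ exp (-D) := by
  change x ∈ {x | Valued.v x ≤ exp (-D)} ↔ _
  rw [Set.mem_ofPred_eq]

theorem ordGe_anti {D D' : ℤ} (h : D ≤ D') : ordGe Fq D' ≤ ordGe Fq D := fun _ hx =>
  mem_ordGe.2 (le_trans (mem_ordGe.1 hx) (exp_le_exp.2 (by omega)))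

theorem mul_mem_ordGe {D D' : ℤ} {x y : Kinf Fq} (hx : x ∈ ordGe Fq D) (hy : y ∈ ordGe Fq D') :
    x * y ∈ ordGe Fq (D + D') := by
  rw [mem_ordGe, map_mul, neg_add, exp_add]
  exact mul_le_mul' (mem_ordGe.1 hx) (mem_ordGe.1 hy)

theorem v_theta : Valued.v (theta Fq) = exp (1 : ℤ) := by
  rw [theta, LaurentSeries.valuation_single_zpow, neg_neg]

theorem theta_ne_zero : theta Fq ≠ 0 := by
  intro h
  have := v_theta (Fq := Fq)
  rw [h, map_zero] at this
  exact exp_ne_zero this.symm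

theorem v_theta_zpow (k : ℤ) : Valued.v (theta Fq ^ k) = exp k := by
  rw [map_zpow₀, v_theta, ← exp_zsmul, smul_eq_mul, mul_one]

instance : (Valued.v : Valuation (Kinf Fq) _).IsTrivialOn Fq where
  eq_one a ha := by
    refine le_antisymm ?_ ?_
    · have := (LaurentSeries.valuation_le_iff_coeff_lt_eq_zero Fq (D := 0)
        (f := algebraMap Fq (Kinf Fq) a)).2 ?_
      · simp
      · intro n hn
        rw [LaurentSeries.algebraMap_apply, HahnSeries.C_apply, HahnSeries.coeff_single_of_ne hn.ne]
    · have := (LaurentSeries.valuation_le_iff_coeff_lt_eq_zero Fq (D := 0)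
        (f := algebraMap Fq (Kinf Fq) a⁻¹)).2 ?_
      · rw [map_inv₀, map_inv₀, neg_zero, exp_zero] at this
        refine (inv_le_one₀ ?_).1 this
        rw [Valuation.pos_iff]
        exact (_root_.map_ne_zero _).2 ha
      · intro n hn
        rw [LaurentSeries.algebraMap_apply, HahnSeries.C_apply, HahnSeries.coeff_single_of_ne hn.ne]

theorem v_aeval {a : Fq[X]} (ha : a ≠ 0) : Valued.v (aeval (theta Fq) a) = exp (a.natDegree : ℤ) := by
  rw [Polynomial.valuation_aeval_eq_valuation_X_pow_natDegree_of_one_lt_valuation_X _ _ ha, v_theta,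
    ← exp_nsmul, nsmul_one]
  rw [v_theta, ← exp_zero, exp_lt_exp]
  exact one_pos

theorem aeval_mem_ordGe (a : Fq[X]) : aeval (theta Fq) a ∈ ordGe Fq (-a.natDegree) := by
  by_cases ha : a = 0
  · rw [ha, map_zero]; exact zero_mem _
  · rw [mem_ordGe, v_aeval ha, neg_neg]

theorem transcendental_theta : Transcendental Fq (theta Fq) := by
  rw [transcendental_iff]
  intro p hp
  by_contra h
  have := v_aeval h
  rw [hp, map_zero] at this
  exact exp_ne_zero this.symm

theorem zpow_mem_ordGe (k : ℤ) : theta Fq ^ k ∈ ordGe Fq (-k) := by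
  rw [mem_ordGe, v_theta_zpow, neg_neg]

theorem hasBasis_nhds_zero : (𝓝 (0 : Kinf Fq)).HasBasis (fun _ : ℤ => True)
    (fun D => (ordGe Fq D : Set (Kinf Fq))) := by
  refine ⟨fun s => ?_⟩
  simp only [true_and]
  constructor
  · intro hs
    obtain ⟨γ, hγ⟩ := Valued.mem_nhds_zero.1 hs
    refine ⟨-(log (MonoidWithZeroHom.ValueGroup₀.embedding γ.1) - 1), fun x hx => hγ ?_⟩
    rw [Set.mem_ofPred_eq, Valued.v.restrict_lt_iff_lt_embedding]
    refine lt_of_le_of_lt (mem_ordGe.1 hx) ?_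
    rw [← lt_log_iff_exp_lt (by simp)]
    simp
  · rintro ⟨D, hD⟩
    have hne : Valued.v.restrict (theta Fq ^ (-D)) ≠ 0 := by
      simp [theta_ne_zero, zpow_ne_zero]
    refine Valued.mem_nhds_zero.2 ⟨Units.mk0 _ hne, fun x hx => hD ?_⟩
    rw [Set.mem_ofPred_eq, Units.val_mk0, Valued.v.restrict_lt_iff, v_theta_zpow] at hx
    exact mem_ordGe.2 hx.le

theorem ordGe_mem_nhds (D : ℤ) : (ordGe Fq D : Set (Kinf Fq)) ∈ 𝓝 (0 : Kinf Fq) :=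
  hasBasis_nhds_zero.mem_of_mem trivial

theorem isOpen_ordGe (D : ℤ) : IsOpen (ordGe Fq D : Set (Kinf Fq)) :=
  AddSubgroup.isOpen_of_mem_nhds _ (ordGe_mem_nhds D)

theorem isClosed_ordGe (D : ℤ) : IsClosed (ordGe Fq D : Set (Kinf Fq)) :=
  AddSubgroup.isClosed_of_isOpen _ (isOpen_ordGe D)

instance : NonarchimedeanRing (Kinf Fq) where
  is_nonarchimedean U hU := by
    obtain ⟨D, -, hD⟩ := hasBasis_nhds_zero.mem_iff.1 hU
    exact ⟨⟨ordGe Fq D, isOpen_ordGe D⟩, hD⟩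

theorem tendsto_zero_iff {α : Type*} {f : α → Kinf Fq} {l : Filter α} :
    Tendsto f l (𝓝 0) ↔ ∀ D : ℤ, ∀ᶠ i in l, f i ∈ ordGe Fq D := by
  rw [hasBasis_nhds_zero.tendsto_right_iff]
  simp

theorem summable_of {α : Type*} {f : α → Kinf Fq} (h : ∀ D : ℤ, {i | f i ∉ ordGe Fq D}.Finite) :
    Summable f :=
  NonarchimedeanAddGroup.summable_of_tendsto_cofinite_zero (tendsto_zero_iff.2 h)

theorem tsum_mem_ordGe {α : Type*} {f : α → Kinf Fq} {D : ℤ} (h : ∀ i, f i ∈ ordGe Fq D) :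
    ∑' i, f i ∈ ordGe Fq D := by
  by_cases hf : Summable f
  · exact (isClosed_ordGe D).mem_of_tendsto hf.hasSum
      (Eventually.of_forall fun s => sum_mem fun i _ => h i)
  · rw [tsum_eq_zero_of_not_summable hf]; exact zero_mem _

end KinfVal

end

/-! ### Series with coefficients of bounded degree and their values -/

section
set_option linter.unusedSectionVars false

namespace TwoVar
open Polynomial Filter Topology KinfVal

/-- The substitution `y ↦ y ^ q` on power series, as a ring homomorphism. -/
def yExpand (R : Type*) [CommRing R] (q : ℕ) (hq : q ≠ 0) : PowerSeries R →+* PowerSeries R :=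
  (PowerSeries.expand q hq : PowerSeries R →ₐ[R] PowerSeries R).toRingHom

section

variable {R : Type*} [CommRing R] (q : ℕ) (hq : q ≠ 0)

theorem yExpand_C (r : R) : yExpand R q hq (PowerSeries.C r) = PowerSeries.C r :=
  PowerSeries.expand_C _ _ _

theorem yExpand_X : yExpand R q hq PowerSeries.X = PowerSeries.X ^ q := PowerSeries.expand_X _ _

theorem coeff_yExpand_mul (m : ℕ) (F : PowerSeries R) :
    PowerSeries.coeff (q * m) (yExpand R q hq F) = PowerSeries.coeff m F :=
  PowerSeries.coeff_expand_mul _ _ _ _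

theorem coeff_yExpand_of_not_dvd {m : ℕ} (F : PowerSeries R) (h : ¬ q ∣ m) :
    PowerSeries.coeff m (yExpand R q hq F) = 0 :=
  PowerSeries.coeff_expand_of_not_dvd _ _ _ h

end

variable {Fq : Type} [Field Fq] [Fintype Fq]

variable (Fq) in
/-- The substitution `y ↦ y ^ q` on `𝔽_q[t][[y]]`. -/
def tau : PowerSeries Fq[X] →+* PowerSeries Fq[X] :=
  yExpand Fq[X] (Fintype.card Fq) Fintype.card_ne_zero

theorem tau_C (r : Fq[X]) : tau Fq (PowerSeries.C r) = PowerSeries.C r := yExpand_C _ _ _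

theorem tau_X : tau Fq PowerSeries.X = PowerSeries.X ^ Fintype.card Fq := yExpand_X _ _

theorem coeff_tau_mul (m : ℕ) (F : PowerSeries Fq[X]) :
    PowerSeries.coeff (Fintype.card Fq * m) (tau Fq F) = PowerSeries.coeff m F :=
  coeff_yExpand_mul _ _ _ _

theorem coeff_tau_of_not_dvd {m : ℕ} (F : PowerSeries Fq[X]) (h : ¬ Fintype.card Fq ∣ m) :
    PowerSeries.coeff m (tau Fq F) = 0 :=
  coeff_yExpand_of_not_dvd _ _ _ h

/-- The `t`-degree of the coefficient of `y ^ m` is at most `(m + b) / q`. -/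
def Deg (b : ℕ) (F : PowerSeries Fq[X]) : Prop :=
  ∀ m, Fintype.card Fq * (PowerSeries.coeff m F).natDegree ≤ m + b

theorem Deg.mono {b b' : ℕ} {F : PowerSeries Fq[X]} (h : Deg b F) (hb : b ≤ b') : Deg b' F :=
  fun m => (h m).trans (by omega)

theorem Deg.zero (b : ℕ) : Deg b (0 : PowerSeries Fq[X]) := fun m => by simp

theorem Deg.add {b : ℕ} {F G : PowerSeries Fq[X]} (hF : Deg b F) (hG : Deg b G) : Deg b (F + G) := by
  intro m
  rw [map_add]
  rcases le_max_iff.1 (natDegree_add_le (PowerSeries.coeff m F) (PowerSeries.coeff m G)) with h | h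
  · exact (Nat.mul_le_mul_left _ h).trans (hF m)
  · exact (Nat.mul_le_mul_left _ h).trans (hG m)

theorem Deg.neg {b : ℕ} {F : PowerSeries Fq[X]} (hF : Deg b F) : Deg b (-F) := by
  intro m
  rw [map_neg, natDegree_neg]
  exact hF m

theorem card_mul_natDegree_sum_le {ι : Type*} (s : Finset ι) (f : ι → Fq[X]) (B : ℕ)
    (h : ∀ i ∈ s, Fintype.card Fq * (f i).natDegree ≤ B) :
    Fintype.card Fq * (∑ i ∈ s, f i).natDegree ≤ B := by
  have hq : 0 < Fintype.card Fq := Fintype.card_pos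
  rw [mul_comm, ← Nat.le_div_iff_mul_le hq]
  refine natDegree_sum_le_of_forall_le _ _ fun i hi => ?_
  rw [Nat.le_div_iff_mul_le hq, mul_comm]
  exact h i hi

theorem Deg.mul {b c : ℕ} {F G : PowerSeries Fq[X]} (hF : Deg b F) (hG : Deg c G) :
    Deg (b + c) (F * G) := by
  intro m
  rw [PowerSeries.coeff_mul]
  refine card_mul_natDegree_sum_le _ _ _ fun p hp => ?_
  have h1 := hF p.1
  have h2 := hG p.2
  rw [Finset.HasAntidiagonal.mem_antidiagonal] at hp
  refine (Nat.mul_le_mul_left _ natDegree_mul_le).trans ?_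
  rw [mul_add]
  omega

theorem Deg.tau {b : ℕ} {F : PowerSeries Fq[X]} (hF : Deg b F) : Deg b (tau Fq F) := by
  intro m
  by_cases h : Fintype.card Fq ∣ m
  · obtain ⟨k, rfl⟩ := h
    rw [coeff_tau_mul]
    have := Nat.le_mul_of_pos_left k (Fintype.card_pos (α := Fq))
    exact (hF k).trans (by omega)
  · simp [coeff_tau_of_not_dvd F h]

theorem Deg.coe (P : Fq[X][X]) :
    ∃ b, Deg b (P : PowerSeries Fq[X]) := by
  refine ⟨∑ i ∈ P.support, Fintype.card Fq * (P.coeff i).natDegree, fun m => ?_⟩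
  rw [coeff_coe]
  by_cases h : P.coeff m = 0
  · simp [h]
  · have := Finset.single_le_sum (f := fun i => Fintype.card Fq * (P.coeff i).natDegree)
      (fun _ _ => Nat.zero_le _) (mem_support_iff.2 h)
    exact this.trans (by omega)

theorem Deg.one (b : ℕ) : Deg b (1 : PowerSeries Fq[X]) := by
  intro m
  rw [PowerSeries.coeff_one]
  split_ifs <;> simp

theorem Deg.X_pow (e : ℕ) : Deg 0 (PowerSeries.X ^ e : PowerSeries Fq[X]) := by
  intro m
  rw [PowerSeries.coeff_X_pow]
  split_ifs <;> simp

theorem Deg.pow {F : PowerSeries Fq[X]} (hF : Deg 0 F) (n : ℕ) : Deg 0 (F ^ n) := by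
  induction n with
  | zero => rw [pow_zero]; exact Deg.one 0
  | succ n ih => rw [pow_succ]; exact ih.mul hF

theorem card_ge_two : 2 ≤ Fintype.card Fq := Fintype.one_lt_card

/-- The equation `F = H + B * F(y ^ q)` has a solution when `B` is divisible by `y`. -/
theorem exists_fixed {b : ℕ} {H B : PowerSeries Fq[X]} (hX : PowerSeries.X ∣ B) (hB : Deg 0 B)
    (hH : Deg b H) : ∃ F, Deg b F ∧ F = H + B * tau Fq F := by
  let G : ℕ → PowerSeries Fq[X] := fun k => (fun F => H + B * tau Fq F)^[k] 0
  have hG : ∀ k, G (k + 1) = H + B * tau Fq (G k) := fun k => by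
    simp only [G, Function.iterate_succ_apply']
  have hdeg : ∀ k, Deg b (G k) := by
    intro k
    induction k with
    | zero => exact Deg.zero b
    | succ k ih =>
      rw [hG]
      refine hH.add ?_
      have := hB.mul ih.tau
      rwa [zero_add] at this
  have hstep : ∀ k, ∀ A : PowerSeries Fq[X], PowerSeries.X ^ k ∣ A →
      PowerSeries.X ^ (k + 1) ∣ B * tau Fq A := by
    rintro k A ⟨A', rfl⟩
    rw [pow_succ', map_mul, map_pow, tau_X, ← pow_mul]
    refine mul_dvd_mul hX (Dvd.dvd.mul_right (pow_dvd_pow _ ?_) _)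
    exact Nat.le_mul_of_pos_left k Fintype.card_pos
  have hsucc : ∀ k, PowerSeries.X ^ k ∣ G (k + 1) - G k := by
    intro k
    induction k with
    | zero => simp
    | succ k ih =>
      rw [hG (k + 1), hG k, add_sub_add_left_eq_sub, ← mul_sub, ← map_sub]
      have := hstep k _ ih
      rwa [hG k] at this
  have hadd : ∀ k j, PowerSeries.X ^ k ∣ G (k + j) - G k := by
    intro k j
    induction j with
    | zero => simp
    | succ j ih =>
      have := ((pow_dvd_pow _ (Nat.le_add_right k j)).trans (hsucc (k + j))).add ih
      rwa [sub_add_sub_cancel] at this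
  refine ⟨PowerSeries.mk fun m => PowerSeries.coeff m (G (m + 1)), fun m => ?_, ?_⟩
  · rw [PowerSeries.coeff_mk]; exact hdeg _ m
  · set F := PowerSeries.mk fun m => PowerSeries.coeff m (G (m + 1)) with hF
    have hlim : ∀ k, PowerSeries.X ^ k ∣ F - G k := by
      intro k
      rw [PowerSeries.X_pow_dvd_iff]
      intro m hm
      rw [map_sub, hF, PowerSeries.coeff_mk, sub_eq_zero]
      have := hadd (m + 1) (k - (m + 1))
      rw [show m + 1 + (k - (m + 1)) = k by omega, PowerSeries.X_pow_dvd_iff] at this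
      have := this m (Nat.lt_succ_self m)
      rw [map_sub, sub_eq_zero] at this
      exact this.symm
    rw [← sub_eq_zero]
    ext1 k
    have h1 := (hlim (k + 2)).sub (hstep _ _ (hlim (k + 1)))
    rw [hG (k + 1), map_sub, show F - (H + B * tau Fq (G (k + 1))) -
      B * (tau Fq F - tau Fq (G (k + 1))) = F - (H + B * tau Fq F) by ring,
      PowerSeries.X_pow_dvd_iff] at h1
    rw [h1 k (by omega), map_zero]

/-- The series `1 / (1 + t y ^ q)`. -/
theorem exists_inv_one_add : ∃ b : PowerSeries Fq[X], Deg 0 b ∧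
    (1 + PowerSeries.C X * PowerSeries.X ^ Fintype.card Fq) * b = 1 := by
  let G : PowerSeries Fq[X] := PowerSeries.mk fun k => (-X) ^ k
  have hG : (1 + PowerSeries.C X * PowerSeries.X) * G = 1 := by
    ext1 m
    rw [add_mul, one_mul, mul_assoc, map_add, PowerSeries.coeff_C_mul, PowerSeries.coeff_mk]
    cases m with
    | zero => simp
    | succ m =>
      rw [PowerSeries.coeff_succ_X_mul, PowerSeries.coeff_mk, PowerSeries.coeff_one, if_neg (by omega)]
      ring
  refine ⟨tau Fq G, fun m => ?_, ?_⟩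
  · by_cases h : Fintype.card Fq ∣ m
    · obtain ⟨k, rfl⟩ := h
      rw [coeff_tau_mul, PowerSeries.coeff_mk, add_zero]
      refine Nat.mul_le_mul_left _ ?_
      refine natDegree_pow_le.trans ?_
      rw [natDegree_neg, natDegree_X, mul_one]
    · simp [coeff_tau_of_not_dvd G h]
  · have := congrArg (tau Fq) hG
    rwa [map_mul, map_add, map_one, map_mul, tau_C, tau_X] at this

variable (Fq) in
/-- The ring of series in `𝔽_q[t][[y]]` for which the `t`-degree of the coefficient of `y ^ m` is
at most `m / q + O(1)`. -/
def bdd : Subring (PowerSeries Fq[X]) where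
  carrier := {F | ∃ b, Deg b F}
  mul_mem' := by
    simp only [Set.mem_ofPred_eq]
    rintro F G ⟨b, hF⟩ ⟨c, hG⟩
    exact ⟨_, hF.mul hG⟩
  one_mem' := by simp only [Set.mem_ofPred_eq]; exact ⟨0, Deg.one 0⟩
  add_mem' := by
    simp only [Set.mem_ofPred_eq]
    rintro F G ⟨b, hF⟩ ⟨c, hG⟩
    exact ⟨max b c, (hF.mono (le_max_left _ _)).add (hG.mono (le_max_right _ _))⟩
  zero_mem' := by simp only [Set.mem_ofPred_eq]; exact ⟨0, Deg.zero 0⟩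
  neg_mem' := by
    simp only [Set.mem_ofPred_eq]
    rintro F ⟨b, hF⟩
    exact ⟨b, hF.neg⟩

theorem mem_bdd {F : PowerSeries Fq[X]} : F ∈ bdd Fq ↔ ∃ b, Deg b F := by
  change F ∈ {F | ∃ b, Deg b F} ↔ _
  rw [Set.mem_ofPred_eq]

theorem Deg.mem {b : ℕ} {F : PowerSeries Fq[X]} (h : Deg b F) : F ∈ bdd Fq := mem_bdd.2 ⟨b, h⟩

theorem coe_mem (P : Fq[X][X]) : (P : PowerSeries Fq[X]) ∈ bdd Fq := mem_bdd.2 (Deg.coe P)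

theorem tau_mem {F : PowerSeries Fq[X]} (h : F ∈ bdd Fq) : tau Fq F ∈ bdd Fq := by
  obtain ⟨b, h⟩ := mem_bdd.1 h
  exact h.tau.mem

/-- The terms of the value of a series at `t = θ`, `y = θ ^ (-q ^ d)`. -/
def term (d : ℕ) (F : PowerSeries Fq[X]) (m : ℕ) : Kinf Fq :=
  aeval (theta Fq) (PowerSeries.coeff m F) * theta Fq ^ (-((Fintype.card Fq ^ d * m : ℕ) : ℤ))

theorem term_mem (d : ℕ) (F : PowerSeries Fq[X]) (m : ℕ) :
    term d F m ∈ ordGe Fq ((Fintype.card Fq ^ d * m : ℕ) - (PowerSeries.coeff m F).natDegree) := by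
  have := mul_mem_ordGe (aeval_mem_ordGe (PowerSeries.coeff m F))
    (zpow_mem_ordGe (-((Fintype.card Fq ^ d * m : ℕ) : ℤ)))
  rw [neg_neg, neg_add_eq_sub] at this
  exact this

theorem summable_term (d : ℕ) {F : PowerSeries Fq[X]} (hF : F ∈ bdd Fq) : Summable (term d F) := by
  obtain ⟨b, hF⟩ := mem_bdd.1 hF
  refine summable_of fun D => (Set.finite_lt_nat (2 * D.toNat + b)).subset fun m hm => ?_
  rw [Set.mem_ofPred_eq] at hm ⊢
  by_contra h
  refine hm (ordGe_anti ?_ (term_mem d F m))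
  have h1 := (Nat.mul_le_mul_right _ card_ge_two).trans (hF m)
  have h2 : m ≤ Fintype.card Fq ^ d * m := Nat.le_mul_of_pos_left m (pow_pos Fintype.card_pos d)
  push_cast
  zify at h1 h2 h
  omega

/-- Evaluation of series at `t = θ`, `y = θ ^ (-q ^ d)`. -/
def ev (d : ℕ) : bdd Fq →+* Kinf Fq where
  toFun F := ∑' m, term d F.1 m
  map_one' := by
    rw [tsum_eq_single 0]
    · simp [term]
    · intro m hm
      simp [term, PowerSeries.coeff_one, hm]
  map_zero' := by simp [term]
  map_add' F G := by
    rw [← (summable_term d F.2).tsum_add (summable_term d G.2)]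
    refine tsum_congr fun m => ?_
    simp only [term, Subring.coe_add, map_add, add_mul]
  map_mul' F G := by
    rw [Summable.tsum_mul_tsum_eq_tsum_sum_antidiagonal (summable_term d F.2) (summable_term d G.2)
      ((summable_term d F.2).mul_of_nonarchimedean (summable_term d G.2))]
    refine tsum_congr fun m => ?_
    simp only [term, Subring.coe_mul, PowerSeries.coeff_mul, map_sum, Finset.sum_mul]
    refine Finset.sum_congr rfl fun p hp => ?_
    rw [Finset.HasAntidiagonal.mem_antidiagonal] at hp
    rw [← hp, map_mul, mul_add, Nat.cast_add, neg_add, zpow_add₀ theta_ne_zero]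
    ring

theorem ev_apply (d : ℕ) (F : bdd Fq) : ev d F = ∑' m, term d F.1 m := rfl

theorem ev_tau (d : ℕ) (F : bdd Fq) : ev d ⟨tau Fq F.1, tau_mem F.2⟩ = ev (d + 1) F := by
  rw [ev_apply, ev_apply]
  have hinj : Function.Injective fun m : ℕ => Fintype.card Fq * m :=
    fun a b h => Nat.eq_of_mul_eq_mul_left Fintype.card_pos h
  rw [← hinj.tsum_eq]
  · refine tsum_congr fun m => ?_
    simp only [term, coeff_tau_mul, pow_succ, mul_assoc]
  · intro m hm
    by_contra h
    refine hm ?_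
    have : ¬ Fintype.card Fq ∣ m := by
      rintro ⟨k, rfl⟩
      exact h ⟨k, rfl⟩
    simp [term, coeff_tau_of_not_dvd F.1 this]

variable (Fq) in
/-- Polynomials as series of bounded degree. -/
def ofPoly : Fq[X][X] →+* bdd Fq :=
  (Polynomial.coeToPowerSeries.ringHom (R := Fq[X])).codRestrict (bdd Fq) fun P => coe_mem P

theorem coe_ofPoly (P : Fq[X][X]) : ((ofPoly Fq P : bdd Fq) : PowerSeries Fq[X]) = P := rfl

theorem ev_ofPoly (d : ℕ) (P : Fq[X][X]) : ev d (ofPoly Fq P) =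
    eval₂ (aeval (theta Fq)).toRingHom ((theta Fq ^ Fintype.card Fq ^ d)⁻¹) P := by
  have : (ev d).comp (ofPoly Fq) =
      eval₂RingHom (aeval (theta Fq)).toRingHom ((theta Fq ^ Fintype.card Fq ^ d)⁻¹) := by
    refine Polynomial.ringHom_ext (fun a => ?_) ?_
    · rw [RingHom.comp_apply, ev_apply, tsum_eq_single 0]
      · simp [term, coe_ofPoly]
      · intro m hm
        simp [term, coe_ofPoly, PowerSeries.coeff_C, hm]
    · rw [RingHom.comp_apply, ev_apply, tsum_eq_single 1]
      · simp only [term, coe_ofPoly, coe_X, PowerSeries.coeff_one_X]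
        simp [zpow_neg]
        norm_cast
      · intro m hm
        simp [term, coe_ofPoly, PowerSeries.coeff_X, hm]
  exact congrArg (fun f => f P) this

end TwoVar

end

/-! ### Siegel's lemma and nonvanishing -/

section
set_option linter.unusedSectionVars false

namespace TwoVar
open Polynomial Filter Topology KinfVal

/-- Finitely many linearly independent sequences are already independent after truncation. -/
theorem exists_truncation {K κ : Type*} [Field K] [Fintype κ] (φ : κ → ℕ → K)
    (h : LinearIndependent K φ) :
    ∃ M : ℕ, ∀ c : κ → K, (∀ m ≤ M, ∑ k, c k * φ k m = 0) → c = 0 := by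
  let N : ℕ →o (Submodule K (κ → K))ᵒᵈ :=
    { toFun := fun M => OrderDual.toDual (⨅ m : Fin (M + 1), LinearMap.ker
        (∑ k, φ k m • (LinearMap.proj k : (κ → K) →ₗ[K] K)))
      monotone' := by
        intro M M' hM
        change (⨅ m : Fin (M' + 1), LinearMap.ker
          (∑ k, φ k m • (LinearMap.proj k : (κ → K) →ₗ[K] K))) ≤ ⨅ m : Fin (M + 1), LinearMap.ker
          (∑ k, φ k m • (LinearMap.proj k : (κ → K) →ₗ[K] K))
        exact le_iInf fun m => iInf_le_of_le (Fin.castLE (by omega) m) le_rfl }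
  have hN : ∀ M c, c ∈ OrderDual.ofDual (N M) ↔ ∀ m ≤ M, ∑ k, c k * φ k m = 0 := by
    intro M c
    change c ∈ (⨅ m : Fin (M + 1), LinearMap.ker
        (∑ k, φ k m • (LinearMap.proj k : (κ → K) →ₗ[K] K))) ↔ _
    rw [Submodule.mem_iInf]
    constructor
    · intro h m hm
      have := h ⟨m, by omega⟩
      rw [LinearMap.mem_ker] at this
      simpa [LinearMap.sum_apply, mul_comm] using this
    · intro h m
      rw [LinearMap.mem_ker]
      have := h m (by omega)
      simpa [LinearMap.sum_apply, mul_comm] using this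
  obtain ⟨M, hM⟩ := IsArtinian.monotone_stabilizes N
  refine ⟨M, fun c hc => ?_⟩
  have hall : ∀ m, ∑ k, c k * φ k m = 0 := by
    intro m
    have h1 : c ∈ OrderDual.ofDual (N (max M m)) := by
      rw [← hM _ (le_max_left M m)]
      exact (hN M c).2 hc
    exact (hN _ c).1 h1 m (le_max_right M m)
  funext k
  refine Fintype.linearIndependent_iff.1 h c ?_ k
  funext m
  simpa using hall m

variable {Fq : Type} [Field Fq] [Fintype Fq]

/-- A Siegel-type lemma over `𝔽_q[t]`. -/
theorem exists_small_solution {κ ι : Type*} [Fintype κ] [Fintype ι] (Z : κ → ι → Fq[X]) {T D : ℕ}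
    (hZ : ∀ k j, (Z k j).natDegree ≤ D) (hcard : Fintype.card ι * (T + D) < Fintype.card κ * T) :
    ∃ P : κ → Fq[X], P ≠ 0 ∧ (∀ k, (P k).natDegree < T) ∧ ∀ j, ∑ k, P k * Z k j = 0 := by
  have hT : 0 < T := by
    rcases Nat.eq_zero_or_pos T with h | h
    · subst h; simp at hcard
    · exact h
  let L : (κ → degreeLT Fq T) →ₗ[Fq] (ι × Fin (T + D) → Fq) :=
    LinearMap.pi fun p => ∑ k, (lcoeff Fq p.2.1) ∘ₗ (LinearMap.mulRight Fq (Z k p.1)) ∘ₗ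
      (degreeLT Fq T).subtype ∘ₗ (LinearMap.proj k)
  have hL : ∀ P p, L P p = (∑ k, (P k).1 * Z k p.1).coeff p.2.1 := by
    intro P p
    simp [L, LinearMap.sum_apply, finsetSum_coeff]
  have hfin : Module.finrank Fq (ι × Fin (T + D) → Fq) < Module.finrank Fq (κ → degreeLT Fq T) := by
    rw [Module.finrank_fintype_fun_eq_card, Fintype.card_prod, Fintype.card_fin,
      Module.finrank_pi_fintype]
    have : Module.finrank Fq (degreeLT Fq T) = T := by
      rw [(degreeLTEquiv Fq T).finrank_eq]; simp
    simp only [this, Finset.sum_const, Finset.card_univ, smul_eq_mul]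
    exact hcard
  have : Module.Finite Fq (degreeLT Fq T) := Module.Finite.equiv (degreeLTEquiv Fq T).symm
  obtain ⟨P, hP, hP0⟩ := Submodule.exists_mem_ne_zero_of_ne_bot
    (LinearMap.ker_ne_bot_of_finrank_lt (f := L) hfin)
  have hdeg : ∀ k, (P k).1.natDegree < T := fun k => by
    have := mem_degreeLT.1 (P k).2
    by_cases h0 : (P k).1 = 0
    · rw [h0]; simpa using hT
    · exact (natDegree_lt_iff_degree_lt h0).2 this
  refine ⟨fun k => (P k).1, fun h => hP0 ?_, hdeg, fun j => ?_⟩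
  · funext k
    exact Subtype.ext (congrFun h k)
  · ext w
    by_cases hw : w < T + D
    · have := congrFun (LinearMap.mem_ker.1 hP) (j, ⟨w, hw⟩)
      rw [hL] at this
      simpa using this
    · rw [coeff_zero]
      refine coeff_eq_zero_of_natDegree_lt (lt_of_lt_of_le (b := T + D) ?_ (by omega))
      refine Nat.lt_of_le_pred (by omega) (natDegree_sum_le_of_forall_le _ _ fun k _ => ?_)
      refine natDegree_mul_le.trans ?_
      have := hdeg k
      have := hZ k j
      rw [Nat.pred_eq_sub_one]
      change (P k).1.natDegree + (Z k j).natDegree ≤ _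
      omega

/-- A series of small degree whose low coefficients do not all vanish does not vanish at
`y = θ ^ (-q ^ d)`. -/
theorem ev_ne_zero {d M T b : ℕ} (E : bdd Fq)
    (hdeg : ∀ m, (PowerSeries.coeff m E.1).natDegree < T + m + b)
    (hM : ∃ m ≤ M, PowerSeries.coeff m E.1 ≠ 0) (hT : T + M + b + 2 ≤ Fintype.card Fq ^ d) :
    ev d E ≠ 0 := by
  classical
  set Q := Fintype.card Fq ^ d with hQ
  have hex : ∃ m, PowerSeries.coeff m E.1 ≠ 0 := by obtain ⟨m, -, h⟩ := hM; exact ⟨m, h⟩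
  let m0 := Nat.find hex
  have hm0 : PowerSeries.coeff m0 E.1 ≠ 0 := Nat.find_spec hex
  have hm0M : m0 ≤ M := by
    obtain ⟨m, hm, h⟩ := hM
    exact (Nat.find_min' hex h).trans hm
  have hlt : ∀ m < m0, PowerSeries.coeff m E.1 = 0 := fun m hm => by
    by_contra h
    exact Nat.find_min hex hm h
  intro h0
  rw [ev_apply, (summable_term d E.2).tsum_eq_add_tsum_ite m0] at h0
  have hrest : (∑' m, if m = m0 then 0 else term d E.1 m) ∈ ordGe Fq (Q * m0 + 1) := by
    refine tsum_mem_ordGe fun m => ?_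
    split_ifs with h
    · exact zero_mem _
    rcases lt_or_gt_of_ne h with h | h
    · rw [term, hlt m h]
      simp
    · refine ordGe_anti ?_ (term_mem d E.1 m)
      obtain ⟨s, rfl⟩ := Nat.exists_eq_add_of_lt h
      have h1 := hdeg (m0 + s + 1)
      have h2 : s ≤ s * Q := Nat.le_mul_of_pos_right s (by omega)
      rw [← hQ]
      push_cast
      have h3 : (Q : ℤ) * (m0 + s + 1) = Q * m0 + s * Q + Q := by ring
      rw [h3]
      zify at h1 h2 hT hm0M
      omega
  have hneg : term d E.1 m0 ∈ ordGe Fq (Q * m0 + 1) := by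
    rw [eq_neg_of_add_eq_zero_left h0]
    exact neg_mem hrest
  rw [mem_ordGe, term, map_mul, v_aeval hm0, v_theta_zpow, ← WithZero.exp_add, WithZero.exp_le_exp]
    at hneg
  rw [← hQ] at hneg
  push_cast at hneg
  omega

end TwoVar

end

/-! ### Lifting linear relations from values to series -/

section
set_option linter.unusedSectionVars false

namespace TwoVar
open Polynomial Filter Topology KinfVal

variable {Fq : Type} [Field Fq] [Fintype Fq]

/-- A linear relation over `𝔽_q[θ]` between the values at `y = θ⁻¹` of a family of series that is
linearly independent over `𝔽_q(t, y)` is trivial, provided that the values at `y = θ ^ (-q ^ d)` are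
linear combinations of those at `y = θ⁻¹` with coefficients of degree `O(q ^ d)`, up to a common
scalar. -/
theorem lifting {ι : Type*} [Fintype ι] (ψ : ι → bdd Fq)
    (hLI : ∀ N : ℕ, LinearIndependent (FractionRing Fq[X]) (fun k : ι × Fin (N + 1) => fun m : ℕ =>
      algebraMap Fq[X] (FractionRing Fq[X])
        (PowerSeries.coeff m (PowerSeries.X ^ (k.2 : ℕ) * (ψ k.1).1)))) (C : ℕ)
    (hstep : ∀ d, ∃ (s : Kinf Fq) (B : ι → ι → Fq[X]), s ≠ 0 ∧
      (∀ i j, (B i j).natDegree ≤ C * Fintype.card Fq ^ d) ∧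
      ∀ i, s * ev d (ψ i) = ∑ j, aeval (theta Fq) (B i j) * ev 0 (ψ j))
    (ρ : ι → Fq[X]) (hρ : ∑ j, aeval (theta Fq) (ρ j) * ev 0 (ψ j) = 0) : ρ = 0 := by
  classical
  by_contra hne
  obtain ⟨j0, hj0⟩ := Function.ne_iff.1 hne
  rw [Pi.zero_apply] at hj0
  obtain ⟨r, hr⟩ : ∃ r, ∀ j, (ρ j).natDegree ≤ r :=
    ⟨∑ j, (ρ j).natDegree, fun j => Finset.single_le_sum (f := fun j => (ρ j).natDegree)
      (fun _ _ => Nat.zero_le _) (Finset.mem_univ j)⟩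
  obtain ⟨b, hb⟩ : ∃ b, ∀ j, Deg b (ψ j).1 := by
    choose b hb using fun j => mem_bdd.1 (ψ j).2
    exact ⟨∑ j, b j, fun j => (hb j).mono (Finset.single_le_sum (f := b)
      (fun _ _ => Nat.zero_le _) (Finset.mem_univ j))⟩
  let L := Fintype.card {j // j ≠ j0}
  have hL : Fintype.card ι = L + 1 := by
    have h1 : L = Fintype.card ι - 1 := by
      simp [L]
    have : 0 < Fintype.card ι := Fintype.card_pos_iff.2 ⟨j0⟩
    omega
  -- `N` bounds the degree in `y`, and `L` counts the equations; with `N = L (C + r)` the number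
  -- `(L + 1) (N + 1) T` of unknown coefficients exceeds that of the conditions as soon as `T` is
  -- close enough to `Q = q ^ d`
  let N := L * (C + r)
  obtain ⟨M, hM⟩ := exists_truncation _ (hLI N)
  let S := L * N + L * (C + r)
  let K := M + b + 2
  obtain ⟨d, hd⟩ : ∃ d, (S + 1) * K < Fintype.card Fq ^ d :=
    ⟨_, Nat.lt_pow_self (Fintype.one_lt_card)⟩
  set Q := Fintype.card Fq ^ d with hQ
  have hKQ : K ≤ Q := by nlinarith
  obtain ⟨T, hT⟩ := Nat.exists_eq_add_of_le hKQ
  obtain ⟨s, B, hs0, hB, hBe⟩ := hstep d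
  rw [← hQ] at hB
  have hQ1 : 1 ≤ Q := by omega
  -- coefficients of the values at level `d`, after elimination of `ev 0 (ψ j0)` by the relation `ρ`
  -- and multiplication by `θ ^ (N Q)` to clear the negative powers of `θ`
  let Z : ι × Fin (N + 1) → {j // j ≠ j0} → Fq[X] := fun k j =>
    X ^ ((N - k.2) * Q) * (ρ j0 * B k.1 j - ρ j * B k.1 j0)
  obtain ⟨P, hP0, hPdeg, hPZ⟩ := exists_small_solution Z (T := T) (D := (N + C + r) * Q) (by
    intro k j
    refine natDegree_mul_le.trans ?_
    rw [natDegree_X_pow]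
    have h1 : (ρ j0 * B k.1 j - ρ j * B k.1 j0).natDegree ≤ r + C * Q := by
      refine (natDegree_sub_le _ _).trans (max_le ?_ ?_)
      · exact natDegree_mul_le.trans (add_le_add (hr _) (hB _ _))
      · exact natDegree_mul_le.trans (add_le_add (hr _) (hB _ _))
    have h2 : (N - k.2) * Q ≤ N * Q := Nat.mul_le_mul_right _ (Nat.sub_le _ _)
    have h3 : r ≤ r * Q := Nat.le_mul_of_pos_right _ hQ1
    rw [add_mul, add_mul]
    omega) (by
    rw [Fintype.card_prod, Fintype.card_fin, hL]
    change L * (T + (N + C + r) * Q) < (L + 1) * (N + 1) * T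
    have h1 : S * Q < (S + 1) * T := by
      rw [hT] at hd ⊢
      nlinarith
    have h2 : S * Q = L * (N + C + r) * Q := by simp only [S]; ring
    have h3 : (L + 1) * (N + 1) * T = L * T + (S + 1) * T := by simp only [S, N]; ring
    rw [h3, mul_add, ← mul_assoc, ← h2]
    omega)
  -- the auxiliary series: it vanishes at level `d` by construction, which `ev_ne_zero` forbids
  let E : bdd Fq := ∑ k : ι × Fin (N + 1),
    ofPoly Fq (Polynomial.C (P k) * X ^ (k.2 : ℕ)) * ψ k.1
  have hEcoe : E.1 = ∑ k : ι × Fin (N + 1),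
      PowerSeries.C (P k) * (PowerSeries.X ^ (k.2 : ℕ) * (ψ k.1).1) := by
    simp only [E, AddSubmonoidClass.coe_finsetSum, Subring.coe_mul, coe_ofPoly, coe_mul, coe_C,
      coe_pow, coe_X, mul_assoc]
  have hEc : ∀ m, PowerSeries.coeff m E.1 = ∑ k : ι × Fin (N + 1),
      P k * PowerSeries.coeff m (PowerSeries.X ^ (k.2 : ℕ) * (ψ k.1).1) := by
    intro m
    rw [hEcoe, map_sum]
    simp only [PowerSeries.coeff_C_mul]
  refine ev_ne_zero (d := d) (M := M) (T := T) (b := b) E ?_ ?_ (by omega) ?_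
  · intro m
    have hT0 : 0 < T := (Nat.zero_le _).trans_lt (hPdeg (j0, 0))
    rw [hEc]
    refine Nat.lt_of_le_pred (by omega) (natDegree_sum_le_of_forall_le _ _ fun k _ => ?_)
    refine natDegree_mul_le.trans ?_
    have h1 := hPdeg k
    have h2 := ((Deg.X_pow (k.2 : ℕ)).mul (hb k.1)) m
    have h3 := Nat.le_mul_of_pos_left
      (PowerSeries.coeff m (PowerSeries.X ^ (k.2 : ℕ) * (ψ k.1).1)).natDegree
      (Fintype.card_pos (α := Fq))
    rw [Nat.pred_eq_sub_one]
    omega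
  · by_contra hcon
    push Not at hcon
    have := hM (fun k => algebraMap _ _ (P k)) fun m hm => by
      have := congrArg (algebraMap Fq[X] (FractionRing Fq[X])) (hcon m hm)
      rw [hEc, map_sum, map_zero] at this
      simpa only [map_mul] using this
    refine hP0 (funext fun k => ?_)
    have hk := congrFun this k
    exact (IsFractionRing.injective Fq[X] (FractionRing Fq[X])) (by simpa using hk)
  · have hθ : theta Fq ≠ 0 := theta_ne_zero
    have hρ0 : aeval (theta Fq) (ρ j0) ≠ 0 := fun h =>
      hj0 (transcendental_iff.1 transcendental_theta _ h)
    have hψ : ∀ i, aeval (theta Fq) (ρ j0) * (s * ev d (ψ i)) =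
        ∑ j : {j // j ≠ j0}, aeval (theta Fq) (ρ j0 * B i j - ρ j * B i j0) * ev 0 (ψ j) := by
      intro i
      have hsub : ∑ j : {j // j ≠ j0}, aeval (theta Fq) (ρ j0 * B i j - ρ j * B i j0) * ev 0 (ψ j)
          = ∑ j, aeval (theta Fq) (ρ j0 * B i j - ρ j * B i j0) * ev 0 (ψ j) := by
        rw [← Finset.sum_erase Finset.univ (a := j0) (by simp)]
        rw [← Finset.sum_subtype_of_mem (p := fun j => j ≠ j0)]
        · refine Finset.sum_congr ?_ fun _ _ => rfl
          ext j; simp [j.2]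
        · intro j hj; exact Finset.ne_of_mem_erase hj
      rw [hsub, hBe i, Finset.mul_sum]
      have : ∀ j, aeval (theta Fq) (ρ j0 * B i j - ρ j * B i j0) * ev 0 (ψ j) =
          aeval (theta Fq) (ρ j0) * (aeval (theta Fq) (B i j) * ev 0 (ψ j)) -
          aeval (theta Fq) (B i j0) * (aeval (theta Fq) (ρ j) * ev 0 (ψ j)) := by
        intro j; rw [map_sub, map_mul, map_mul]; ring
      simp only [this]
      rw [Finset.sum_sub_distrib, ← Finset.mul_sum _ _ (aeval (theta Fq) (B i j0)), hρ, mul_zero,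
        sub_zero]
    have key : theta Fq ^ (N * Q) * (aeval (theta Fq) (ρ j0) * (s * ev d E)) = 0 := by
      simp only [E, map_sum, Finset.mul_sum]
      have hterm : ∀ k : ι × Fin (N + 1), theta Fq ^ (N * Q) * (aeval (theta Fq) (ρ j0) *
          (s * (eval₂ (aeval (theta Fq)).toRingHom ((theta Fq ^ Q)⁻¹)
            (Polynomial.C (P k) * X ^ (k.2 : ℕ)) * ev d (ψ k.1)))) =
          ∑ j : {j // j ≠ j0}, aeval (theta Fq) (P k * Z k j) * ev 0 (ψ j) := by
        intro k
        have hk : (k.2 : ℕ) ≤ N := by omega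
        have hpow : ∀ m n : ℕ, m ≤ n → theta Fq ^ (n * Q) * ((theta Fq ^ Q)⁻¹) ^ m =
            theta Fq ^ ((n - m) * Q) := by
          intro m n hmn
          obtain ⟨l, hl⟩ := Nat.exists_eq_add_of_le hmn
          rw [hl, Nat.add_sub_cancel_left, add_mul, pow_add, inv_pow, ← pow_mul, mul_comm Q]
          field_simp
        rw [eval₂_mul, eval₂_C, eval₂_pow, eval₂_X]
        change _ * (_ * (_ * (aeval (theta Fq) (P k) * _ * _))) = _
        calc _ = aeval (theta Fq) (P k) * (theta Fq ^ (N * Q) * ((theta Fq ^ Q)⁻¹) ^ (k.2 : ℕ)) *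
              (aeval (theta Fq) (ρ j0) * (s * ev d (ψ k.1))) := by ring
          _ = _ := by
            rw [hpow _ _ hk, hψ, Finset.mul_sum]
            refine Finset.sum_congr rfl fun j _ => ?_
            simp only [Z, map_mul, map_pow, aeval_X]
            ring
      have hsum := Finset.sum_congr (s₁ := Finset.univ) rfl fun k _ => hterm k
      simp only [hQ, ← ev_ofPoly, ← map_mul (ev d)] at hsum
      rw [hQ, hsum]
      rw [Finset.sum_comm]
      refine Finset.sum_eq_zero fun j _ => ?_
      rw [← Finset.sum_mul, ← map_sum, hPZ j, map_zero, zero_mul]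
    have h1 : theta Fq ^ (N * Q) ≠ 0 := pow_ne_zero _ hθ
    rcases mul_eq_zero.1 key with h | h
    · exact absurd h h1
    rcases mul_eq_zero.1 h with h | h
    · exact absurd h hρ0
    rcases mul_eq_zero.1 h with h | h
    · exact absurd h hs0
    exact h

end TwoVar

end

/-! ### Lifting algebraic relations -/

section
set_option linter.unusedSectionVars false

namespace TwoVar
open Polynomial Filter Topology KinfVal

/-- Exponent vectors of the linear monomials `1` and `X i`. -/
def linExp {σ : Type*} : Option σ → (σ →₀ ℕ)
  | none => 0
  | some i => Finsupp.single i 1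

theorem exists_sum_linExp {σ : Type*} (D : ℕ) (m : σ →₀ ℕ) (hm : m.degree ≤ D) :
    ∃ s : Fin D → Option σ, ∑ k, linExp (s k) = m := by
  classical
  induction D generalizing m with
  | zero =>
    refine ⟨Fin.elim0, ?_⟩
    have : m = 0 := (Finsupp.degree_eq_zero_iff m).1 (by omega)
    simp [this]
  | succ D ih =>
    by_cases h0 : m = 0
    · exact ⟨fun _ => none, by simp [linExp, h0]⟩
    · obtain ⟨i, hi⟩ := Finsupp.ne_iff.1 h0
      have hle : Finsupp.single i 1 ≤ m := by
        rw [Finsupp.single_le_iff]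
        exact Nat.one_le_iff_ne_zero.2 hi
      obtain ⟨m', rfl⟩ := exists_add_of_le hle
      rw [map_add, Finsupp.degree_single] at hm
      obtain ⟨s, hs⟩ := ih m' (by omega)
      refine ⟨Fin.cons (some i) s, ?_⟩
      rw [Fin.sum_univ_succ]
      simp only [Fin.cons_zero, Fin.cons_succ, hs]
      rfl

variable {Fq : Type} [Field Fq] [Fintype Fq]

/-- Algebraic independence of the values at `y = θ⁻¹` of series that are algebraically independent
over `𝔽_q(t, y)` and span, together with `1`, a space stable under `y ↦ y ^ q`. -/
theorem algIndep_values {σ : Type} [Fintype σ] [DecidableEq σ] (w : σ → bdd Fq)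
    (hLI : LinearIndependent (FractionRing Fq[X]) (fun k : (σ →₀ ℕ) × ℕ => fun m : ℕ =>
      algebraMap Fq[X] (FractionRing Fq[X])
        (PowerSeries.coeff m (PowerSeries.X ^ k.2 * ∏ i, (w i).1 ^ k.1 i))))
    (hrow : ∀ i, ∃ a c : ℕ, ∀ d, ∃ r : Option σ → Fq[X],
      (∀ j, (r j).natDegree ≤ c * Fintype.card Fq ^ d) ∧
      theta Fq ^ (a * Fintype.card Fq ^ d) * ev (d + 1) (w i) =
        ∑ j, aeval (theta Fq) (r j) * ev d (j.elim 1 w))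
    (p : MvPolynomial σ Fq[X])
    (hp : p.eval₂ (aeval (theta Fq)).toRingHom (fun i => ev 0 (w i)) = 0) : p = 0 := by
  classical
  have hθ : theta Fq ≠ 0 := theta_ne_zero
  let W : Option σ → bdd Fq := fun j => j.elim 1 w
  -- one application of `y ↦ y ^ q`
  have hsingle : ∃ c, ∀ d, ∃ (s : Kinf Fq) (A : Option σ → Option σ → Fq[X]), s ≠ 0 ∧
      (∀ i j, (A i j).natDegree ≤ c * Fintype.card Fq ^ d) ∧
      ∀ i, s * ev (d + 1) (W i) = ∑ j, aeval (theta Fq) (A i j) * ev d (W j) := by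
    choose a c h using hrow
    refine ⟨∑ i, a i + ∑ i, c i, fun d => ?_⟩
    choose r hr hre using fun i => h i d
    set Q := Fintype.card Fq ^ d
    have ha : ∀ i, a i ≤ ∑ i, a i := fun i =>
      Finset.single_le_sum (f := a) (fun _ _ => Nat.zero_le _) (Finset.mem_univ i)
    have hc : ∀ i, c i ≤ ∑ i, c i := fun i =>
      Finset.single_le_sum (f := c) (fun _ _ => Nat.zero_le _) (Finset.mem_univ i)
    set a0 := ∑ i, a i
    refine ⟨theta Fq ^ (a0 * Q), fun i j => match i with
      | none => if j = none then X ^ (a0 * Q) else 0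
      | some i => X ^ ((a0 - a i) * Q) * r i j, pow_ne_zero _ hθ, ?_, ?_⟩
    · rintro (_ | i) j
      · simp only
        split_ifs
        · rw [natDegree_X_pow, add_mul]; omega
        · simp
      · simp only
        refine natDegree_mul_le.trans ?_
        rw [natDegree_X_pow]
        have h1 := hr i j
        have h2 : (a0 - a i) * Q ≤ a0 * Q := Nat.mul_le_mul_right _ (Nat.sub_le _ _)
        have h3 := Nat.mul_le_mul_right Q (hc i)
        rw [add_mul]
        omega
    · rintro (_ | i)
      · rw [Finset.sum_eq_single none]
        · simp [W]
        · intro j _ hj; simp [hj]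
        · simp
      · have h1 : theta Fq ^ (a0 * Q) = theta Fq ^ ((a0 - a i) * Q) * theta Fq ^ (a i * Q) := by
          rw [← pow_add, ← add_mul, Nat.sub_add_cancel (ha i)]
        rw [h1, mul_assoc]
        change _ * (_ * ev (d + 1) (w i)) = _
        rw [hre, Finset.mul_sum]
        refine Finset.sum_congr rfl fun j _ => ?_
        simp only [map_mul, map_pow, aeval_X, W]
        ring
  obtain ⟨c, hc⟩ := hsingle
  -- iterating
  have hmulti : ∀ d, ∃ (s : Kinf Fq) (A : Option σ → Option σ → Fq[X]), s ≠ 0 ∧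
      (∀ i j, (A i j).natDegree ≤ c * Fintype.card Fq ^ d) ∧
      ∀ i, s * ev d (W i) = ∑ j, aeval (theta Fq) (A i j) * ev 0 (W j) := by
    intro d
    induction d with
    | zero =>
      refine ⟨1, fun i j => if i = j then 1 else 0, one_ne_zero, fun i j => ?_, fun i => ?_⟩
      · beta_reduce
        split_ifs <;> simp
      · rw [Finset.sum_eq_single i]
        · simp
        · intro j _ hj; simp [hj.symm]
        · simp
    | succ d ih =>
      obtain ⟨s, A, hs, hA, he⟩ := ih
      obtain ⟨s', A', hs', hA', he'⟩ := hc d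
      refine ⟨s * s', fun i k => ∑ j, A' i j * A j k, mul_ne_zero hs hs', fun i k => ?_, fun i => ?_⟩
      · refine natDegree_sum_le_of_forall_le _ _ fun j _ => natDegree_mul_le.trans ?_
        have h1 := hA' i j
        have h2 := hA j k
        have h3 : c * Fintype.card Fq ^ d * 2 ≤ c * Fintype.card Fq ^ (d + 1) := by
          rw [pow_succ, ← mul_assoc]
          exact Nat.mul_le_mul_left _ card_ge_two
        omega
      · rw [mul_assoc, he', Finset.mul_sum]
        calc _ = ∑ j, aeval (theta Fq) (A' i j) * (s * ev d (W j)) :=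
              Finset.sum_congr rfl fun j _ => by ring
          _ = ∑ j, ∑ k, aeval (theta Fq) (A' i j) * (aeval (theta Fq) (A j k) * ev 0 (W k)) :=
              Finset.sum_congr rfl fun j _ => by rw [he, Finset.mul_sum]
          _ = _ := by
              rw [Finset.sum_comm]
              refine Finset.sum_congr rfl fun k _ => ?_
              rw [map_sum, Finset.sum_mul]
              exact Finset.sum_congr rfl fun j _ => by rw [map_mul]; ring
  -- monomials
  let D := p.totalDegree
  let π : (Fin D → Option σ) → (σ →₀ ℕ) := fun s => ∑ k, linExp (s k)
  have hW : ∀ (j : Option σ), ∏ i, w i ^ linExp j i = W j := by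
    rintro (_ | j)
    · simp [linExp, W]
    · rw [Finset.prod_eq_single j]
      · simp [linExp, W]
      · intro i _ hi; simp [linExp, hi.symm]
      · simp
  have hπ : ∀ s, ∏ i, w i ^ π s i = ∏ k, W (s k) := by
    intro s
    simp only [π, Finsupp.finsetSum_apply, ← Finset.prod_pow_eq_pow_sum]
    rw [Finset.prod_comm]
    exact Finset.prod_congr rfl fun k _ => hW _
  let ι := Set.range π
  have : Fintype ι := Fintype.ofFinite _
  let ψ : ι → bdd Fq := fun m => ∏ i, w i ^ m.1 i
  have hρ := lifting ψ (fun N => by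
      have := hLI.comp (fun k : ι × Fin (N + 1) => (k.1.1, (k.2 : ℕ))) (by
        rintro ⟨⟨m, hm⟩, k⟩ ⟨⟨m', hm'⟩, k'⟩ h
        simp only [Prod.mk.injEq] at h
        obtain ⟨rfl, h⟩ := h
        rw [Fin.ext h])
      convert this using 1
      funext k m
      simp [ψ, Function.comp]) (D * c) (fun d => by
      obtain ⟨s, A, hs, hA, he⟩ := hmulti d
      refine ⟨s ^ D, fun m m' => ∑ s' with π s' = m'.1, ∏ k, A (m.2.choose k) (s' k),
        pow_ne_zero _ hs, fun m m' => ?_, fun m => ?_⟩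
      · refine natDegree_sum_le_of_forall_le _ _ fun s' _ => (natDegree_prod_le _ _).trans ?_
        refine (Finset.sum_le_sum fun k _ => hA _ _).trans ?_
        simp [mul_assoc]
      · have h1 : ψ m = ∏ k, W (m.2.choose k) := by
          rw [← hπ, m.2.choose_spec]
        calc s ^ D * ev d (ψ m) = ∏ k, (s * ev d (W (m.2.choose k))) := by
              rw [h1, map_prod, Finset.prod_mul_distrib]; simp
          _ = ∑ s' : Fin D → Option σ, (∏ k, aeval (theta Fq) (A (m.2.choose k) (s' k))) *
                ev 0 (∏ i, w i ^ π s' i) := by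
              simp only [he]
              rw [Finset.prod_univ_sum]
              rw [Fintype.piFinset_univ]
              refine Finset.sum_congr rfl fun s' _ => ?_
              rw [Finset.prod_mul_distrib, hπ, map_prod]
          _ = ∑ m' : ι, ∑ s' with π s' = m'.1,
                (∏ k, aeval (theta Fq) (A (m.2.choose k) (s' k))) *
                ev 0 (∏ i, w i ^ π s' i) := by
              rw [← Finset.sum_fiberwise (g := fun s' => (⟨π s', s', rfl⟩ : ι))]
              refine Finset.sum_congr rfl fun m' _ => Finset.sum_congr ?_ fun _ _ => rfl
              ext s'
              simp [Subtype.ext_iff]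
          _ = _ := by
              refine Finset.sum_congr rfl fun m' _ => ?_
              rw [map_sum, Finset.sum_mul]
              refine Finset.sum_congr rfl fun s' hs' => ?_
              rw [(Finset.mem_filter.1 hs').2, map_prod (aeval (R := Fq) (theta Fq))])
    (fun m => p.coeff m.1) (by
      rw [MvPolynomial.eval₂_eq'] at hp
      rw [← hp]
      have hsub : p.support ⊆ Finset.univ.image (fun m : ι => m.1) := by
        intro m hm
        obtain ⟨s, hs⟩ := exists_sum_linExp D m (by
          rw [Finsupp.degree_eq_sum]
          have := MvPolynomial.le_totalDegree hm
          rwa [Finsupp.sum_fintype _ _ (fun _ => rfl)] at this)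
        exact Finset.mem_image.2 ⟨⟨m, s, hs⟩, Finset.mem_univ _, rfl⟩
      rw [Finset.sum_subset hsub (by
        intro m _ hm
        rw [MvPolynomial.notMem_support_iff.1 hm]
        simp)]
      rw [Finset.sum_image (fun a _ b _ h => Subtype.ext h)]
      refine Finset.sum_congr rfl fun m _ => ?_
      simp only [ψ, map_prod, map_pow]
      rfl)
  ext1 m
  by_contra hne
  rw [MvPolynomial.coeff_zero] at hne
  obtain ⟨s, hs⟩ := exists_sum_linExp D m (by
    rw [Finsupp.degree_eq_sum]
    have := MvPolynomial.le_totalDegree (MvPolynomial.mem_support_iff.2 hne)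
    rwa [Finsupp.sum_fintype _ _ (fun _ => rfl)] at this)
  exact hne (congrFun hρ ⟨m, s, hs⟩)

end TwoVar

end

/-! ### The series attached to the period and to the zeta values -/

section
set_option linter.unusedSectionVars false

namespace TwoVar
open Polynomial Filter Topology KinfVal

variable {Fq : Type} [Field Fq] [Fintype Fq]

variable (Fq) in
/-- The series `1 + t y ^ q`. -/
def oneAdd : PowerSeries Fq[X] := 1 + PowerSeries.C X * PowerSeries.X ^ Fintype.card Fq

/-- The series `u` with `u(y ^ q) = (1 + t y ^ q) u(y)`, an infinite product. -/
theorem exists_series_u : ∃ u : bdd Fq, PowerSeries.constantCoeff u.1 = 1 ∧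
    tau Fq u.1 = oneAdd Fq * u.1 := by
  obtain ⟨b1, hb1, hb⟩ := exists_inv_one_add (Fq := Fq)
  set N := Fintype.card Fq with hN
  have hN2 : 2 ≤ N := card_ge_two
  obtain ⟨k, hk⟩ := Nat.exists_eq_add_of_le hN2
  have hH : (-(PowerSeries.C X * PowerSeries.X ^ (k + 1) * b1) : PowerSeries Fq[X]) ∈ bdd Fq := by
    have h1 : (PowerSeries.C X : PowerSeries Fq[X]) ∈ bdd Fq := by
      have := coe_mem (C X : Fq[X][X])
      rwa [coe_C] at this
    exact neg_mem (mul_mem (mul_mem h1 (Deg.X_pow _).mem) hb1.mem)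
  obtain ⟨b, hH⟩ := mem_bdd.1 hH
  have hB : Deg 0 (b1 * PowerSeries.X ^ (k + 1)) := hb1.mul (Deg.X_pow _)
  obtain ⟨v, hv, hve⟩ := exists_fixed (Dvd.dvd.mul_left (dvd_pow_self _ (by omega)) _) hB hH
  refine ⟨⟨1 + PowerSeries.X * v, add_mem (one_mem _) (mul_mem ?_ hv.mem)⟩, by simp, ?_⟩
  · have := Deg.X_pow (Fq := Fq) 1
    rw [pow_one] at this
    exact this.mem
  · have h1 : (1 + PowerSeries.X * v : PowerSeries Fq[X]) = b1 * tau Fq (1 + PowerSeries.X * v) := by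
      rw [map_add, map_one, map_mul, tau_X, ← hN]
      have h2 : (PowerSeries.X : PowerSeries Fq[X]) ^ N =
        PowerSeries.X * PowerSeries.X ^ (k + 1) := by rw [hk]; ring
      rw [h2] at hb ⊢
      nth_rewrite 1 [hve]
      linear_combination (-1 : PowerSeries Fq[X]) * hb
    change tau Fq (1 + PowerSeries.X * v) = oneAdd Fq * (1 + PowerSeries.X * v)
    rw [h1, ← mul_assoc, oneAdd, hb, one_mul, ← h1]

/-- Solutions `F` of `y ^ e F(y ^ q) = (1 + t y ^ q) ^ n (F - H)`. -/
theorem exists_series {e : ℕ} (he : 1 ≤ e) (n : ℕ) (H : bdd Fq) : ∃ F : bdd Fq,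
    PowerSeries.X ^ e * tau Fq F.1 = oneAdd Fq ^ n * (F.1 - H.1) := by
  obtain ⟨b1, hb1, hb⟩ := exists_inv_one_add (Fq := Fq)
  obtain ⟨b, hH⟩ := mem_bdd.1 H.2
  have hB : Deg 0 (b1 ^ n * PowerSeries.X ^ e) := (hb1.pow n).mul (Deg.X_pow _)
  obtain ⟨F, hF, hFe⟩ := exists_fixed (Dvd.dvd.mul_left (dvd_pow_self _ (by omega)) _) hB hH
  refine ⟨⟨F, hF.mem⟩, ?_⟩
  change PowerSeries.X ^ e * tau Fq F = oneAdd Fq ^ n * (F - H.1)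
  have h1 : F - H.1 = b1 ^ n * PowerSeries.X ^ e * tau Fq F := by linear_combination hFe
  rw [h1, ← mul_assoc, ← mul_assoc, ← mul_pow, oneAdd, hb, one_pow, one_mul]

end TwoVar

end

/-! ### The substitution `y ↦ y ^ q` on Laurent series -/

section
set_option linter.unusedSectionVars false

namespace TwoVar
open Polynomial

section Laurent

variable {C : Type*} [Field C]

theorem algebraMap_laurent (r : C) : algebraMap C (LaurentSeries C) r = HahnSeries.C r := by
  rw [HahnSeries.algebraMap_apply']
  exact HahnSeries.ofPowerSeries_C r

/-- Multiplication by `q` on exponents. -/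
def mulHom (q : ℕ) : ℤ →+ ℤ := AddMonoidHom.mulLeft (q : ℤ)

theorem mulHom_injective {q : ℕ} (hq : q ≠ 0) : Function.Injective (mulHom q) := fun _ _ h =>
  mul_left_cancel₀ (Nat.cast_ne_zero.2 hq) h

theorem mulHom_le {q : ℕ} (hq : q ≠ 0) (a b : ℤ) : mulHom q a ≤ mulHom q b ↔ a ≤ b :=
  mul_le_mul_iff_right₀ (by positivity)

/-- The substitution `y ↦ y ^ q` on Laurent series. -/
def tauL (C : Type*) [Field C] (q : ℕ) (hq : q ≠ 0) : LaurentSeries C →ₐ[C] LaurentSeries C :=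
  { HahnSeries.embDomainRingHom (R := C) (mulHom q) (mulHom_injective hq) (mulHom_le hq) with
    commutes' := fun r => by
      rw [algebraMap_laurent]
      exact HahnSeries.embDomainRingHom_C }

theorem coeff_tauL_mul (q : ℕ) (hq : q ≠ 0) (F : LaurentSeries C) (i : ℤ) :
    (tauL C q hq F).coeff (q * i) = F.coeff i :=
  HahnSeries.embDomain_coeff (f := ⟨⟨mulHom q, mulHom_injective hq⟩, mulHom_le hq _ _⟩)

theorem coeff_tauL_of_not_dvd (q : ℕ) (hq : q ≠ 0) (F : LaurentSeries C) {i : ℤ}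
    (hi : ¬ (q : ℤ) ∣ i) : (tauL C q hq F).coeff i = 0 := by
  refine HahnSeries.embDomain_of_notMem_range
    (f := ⟨⟨mulHom q, mulHom_injective hq⟩, mulHom_le hq _ _⟩) ?_
  rintro ⟨j, rfl⟩
  exact hi ⟨j, rfl⟩

theorem tauL_ofPowerSeries (q : ℕ) (hq : q ≠ 0) (F : PowerSeries C) :
    tauL C q hq (HahnSeries.ofPowerSeries ℤ C F) =
      HahnSeries.ofPowerSeries ℤ C (yExpand C q hq F) := by
  ext i
  by_cases hi : (q : ℤ) ∣ i
  · obtain ⟨j, rfl⟩ := hi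
    rw [coeff_tauL_mul, PowerSeries.coeff_coe, PowerSeries.coeff_coe]
    have hq' : (0 : ℤ) < q := by positivity
    by_cases hj : j < 0
    · rw [if_pos hj, if_pos (mul_neg_of_pos_of_neg hq' hj)]
    · rw [if_neg hj, if_neg (not_lt.2 (mul_nonneg hq'.le (not_lt.1 hj)))]
      rw [Int.natAbs_mul, Int.natAbs_natCast, coeff_yExpand_mul]
  · rw [coeff_tauL_of_not_dvd q hq _ hi, PowerSeries.coeff_coe]
    split_ifs
    · rfl
    · rw [coeff_yExpand_of_not_dvd]
      rwa [← Int.natCast_dvd]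

variable (C) in
/-- The variable `x = 1 / y`. -/
def xL : LaurentSeries C := HahnSeries.single (-1) 1

theorem xL_inv : (xL C)⁻¹ = HahnSeries.ofPowerSeries ℤ C PowerSeries.X := by
  rw [HahnSeries.ofPowerSeries_X]
  refine inv_eq_of_mul_eq_one_right ?_
  rw [xL, HahnSeries.single_mul_single]
  simp

theorem xL_ne_zero : xL C ≠ 0 := HahnSeries.single_ne_zero one_ne_zero

theorem tauL_xL (q : ℕ) (hq : q ≠ 0) : tauL C q hq (xL C) = xL C ^ q := by
  refine inv_injective ?_
  rw [← map_inv₀, xL_inv, tauL_ofPowerSeries, yExpand_X, map_pow, ← xL_inv, inv_pow]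

theorem aeval_xL_inv (p : C[X]) :
    aeval (xL C)⁻¹ p = HahnSeries.ofPowerSeries ℤ C (p : PowerSeries C) := by
  have : (aeval (R := C) (xL C)⁻¹).toRingHom =
      (HahnSeries.ofPowerSeries ℤ C).comp (coeToPowerSeries.ringHom (R := C)) := by
    refine Polynomial.ringHom_ext (fun a => ?_) ?_
    · simp [algebraMap_laurent]
    · simp [xL_inv]
  exact congrArg (fun f => f p) this

theorem transcendental_xL_inv : Transcendental C (xL C)⁻¹ := by
  rw [transcendental_iff_injective]
  intro p p' h
  rw [aeval_xL_inv, aeval_xL_inv] at h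
  exact Polynomial.coe_injective _ (HahnSeries.ofPowerSeries_injective h)

theorem transcendental_xL : Transcendental C (xL C) := fun h => transcendental_xL_inv h.inv

theorem order_eq_of {F : LaurentSeries C} {a : ℤ} (h : F.coeff a ≠ 0)
    (h' : ∀ b < a, F.coeff b = 0) : F.order = a := by
  refine le_antisymm (HahnSeries.order_le_of_coeff_ne_zero h) ?_
  by_contra hlt
  have hF : F ≠ 0 := fun h0 => h (by rw [h0]; rfl)
  exact HahnSeries.coeff_order_eq_zero.not.2 hF (h' _ (not_le.1 hlt))

theorem order_tauL (q : ℕ) (hq : q ≠ 0) {F : LaurentSeries C} (hF : F ≠ 0) :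
    (tauL C q hq F).order = q * F.order := by
  refine order_eq_of ?_ fun b hb => ?_
  · rw [coeff_tauL_mul]
    exact HahnSeries.coeff_order_eq_zero.not.2 hF
  · by_cases hd : (q : ℤ) ∣ b
    · obtain ⟨j, rfl⟩ := hd
      rw [coeff_tauL_mul]
      exact HahnSeries.coeff_eq_zero_of_lt_order (lt_of_mul_lt_mul_left hb (by positivity))
    · exact coeff_tauL_of_not_dvd q hq F hd

theorem order_ofPowerSeries {F : PowerSeries C} (hF : PowerSeries.constantCoeff F ≠ 0) :
    (HahnSeries.ofPowerSeries ℤ C F).order = 0 := by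
  refine order_eq_of ?_ fun b hb => ?_
  · rw [PowerSeries.coeff_coe]
    simpa using hF
  · rw [PowerSeries.coeff_coe, if_pos hb]

theorem xL_pow_add {q : ℕ} (t : C) : xL C ^ q + algebraMap C (LaurentSeries C) t =
    xL C ^ q * HahnSeries.ofPowerSeries ℤ C (1 + PowerSeries.C t * PowerSeries.X ^ q) := by
  rw [map_add, map_one, map_mul, HahnSeries.ofPowerSeries_C, map_pow, ← xL_inv, algebraMap_laurent]
  rw [inv_pow, mul_add, mul_one, mul_left_comm, mul_inv_cancel₀ (pow_ne_zero _ xL_ne_zero), mul_one]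

/-- The homogeneous equation has no nonzero solution: comparing orders of both sides gives
`(q - 1) ord δ = -q n 2 ^ e`, and `q - 1`, being prime to `2` and `q`, does not divide `n`. -/
theorem hord_laurent {q : ℕ} (hq2 : 2 ≤ q) (heven : 2 ∣ q) {n : ℕ} (hodd : ¬ (q - 1) ∣ n) (t : C)
    (e : ℕ) (δ : LaurentSeries C) (h : tauL C q (by omega) δ =
      (xL C ^ q + algebraMap C (LaurentSeries C) t) ^ (n * 2 ^ e) * δ) : δ = 0 := by
  by_contra hδ
  have hs : (1 + PowerSeries.C t * PowerSeries.X ^ q : PowerSeries C) ≠ 0 := by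
    intro h0
    have := congrArg PowerSeries.constantCoeff h0
    simp [show q ≠ 0 by omega] at this
  have hs' : HahnSeries.ofPowerSeries ℤ C (1 + PowerSeries.C t * PowerSeries.X ^ q) ≠ 0 := by
    rw [← map_zero (HahnSeries.ofPowerSeries ℤ C)]
    exact HahnSeries.ofPowerSeries_injective.ne hs
  have hord := congrArg HahnSeries.order h
  have hx0 : xL C ^ q ≠ 0 := pow_ne_zero _ xL_ne_zero
  rw [order_tauL _ _ hδ, xL_pow_add, HahnSeries.order_mul (pow_ne_zero _ (mul_ne_zero hx0 hs')) hδ,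
    HahnSeries.order_pow, HahnSeries.order_mul hx0 hs', HahnSeries.order_pow, order_ofPowerSeries
    (by simp [show q ≠ 0 by omega]), xL, HahnSeries.order_single one_ne_zero] at hord
  simp only [nsmul_eq_mul, mul_neg, mul_one, add_zero] at hord
  have hdvd : ((q - 1 : ℕ) : ℤ) ∣ ((n * 2 ^ e * q : ℕ) : ℤ) := by
    refine ⟨-δ.order, ?_⟩
    push_cast [Nat.cast_sub (show 1 ≤ q by omega)] at hord ⊢
    linarith
  rw [Int.natCast_dvd_natCast] at hdvd
  have hc1 : Nat.Coprime (q - 1) q := by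
    rw [Nat.coprime_comm]
    exact (Nat.coprime_self_sub_right (by omega)).2 (Nat.coprime_one_right _)
  have hc2 : Nat.Coprime (q - 1) (2 ^ e) := by
    refine Nat.Coprime.pow_right _ (Nat.Coprime.coprime_dvd_right heven hc1)
  exact hodd (hc2.dvd_of_dvd_mul_right (hc1.dvd_of_dvd_mul_right hdvd))

end Laurent

end TwoVar

end

/-! ### Embedding the series into Laurent series -/

section
set_option linter.unusedSectionVars false

namespace TwoVar
open Polynomial KinfVal

/-- Algebraic independence is preserved by nonzero scalars. -/
theorem algIndep_smul {ι K L : Type*} [Field K] [Field L] [Algebra K L] {v w : ι → L}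
    (hv : AlgebraicIndependent K v) (a : ι → K) (ha : ∀ i, a i ≠ 0)
    (hw : ∀ i, w i = algebraMap K L (a i) * v i) : AlgebraicIndependent K w := by
  have := hv.polynomial_aeval_of_transcendental (f := fun i => C (a i) * X) (fun i => by
    rw [transcendental_iff_injective]
    intro p p' h
    have h1 : ∀ p : K[X], aeval (C (a i) * X : K[X]) p = p.comp (C (a i) * X) := fun p => by
      rw [comp, aeval_def]; rfl
    rw [h1, h1] at h
    have h2 := congrArg (fun p : K[X] => p.comp (C (a i)⁻¹ * X)) h
    simpa [comp_assoc, ← mul_assoc, ← C_mul, ha i] using h2)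
  convert this using 1
  funext i
  simp [hw i]

variable {Fq : Type} [Field Fq] [Fintype Fq]

variable (Fq) in
/-- Series in `𝔽_q[t][[y]]` as Laurent series over `𝔽_q(t)`. -/
def toLau : PowerSeries Fq[X] →+* LaurentSeries (FractionRing Fq[X]) :=
  (HahnSeries.ofPowerSeries ℤ (FractionRing Fq[X])).comp
    (PowerSeries.map (algebraMap Fq[X] (FractionRing Fq[X])))

theorem toLau_apply (F : PowerSeries Fq[X]) : toLau Fq F = HahnSeries.ofPowerSeries ℤ _
    (PowerSeries.map (algebraMap Fq[X] (FractionRing Fq[X])) F) := rfl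

theorem toLau_injective : Function.Injective (toLau Fq) := by
  intro F G h
  rw [toLau_apply, toLau_apply] at h
  have h1 := HahnSeries.ofPowerSeries_injective h
  ext1 m
  have h2 := congrArg (PowerSeries.coeff m) h1
  rw [PowerSeries.coeff_map, PowerSeries.coeff_map] at h2
  exact IsFractionRing.injective Fq[X] (FractionRing Fq[X]) h2

theorem toLau_C (r : Fq[X]) : toLau Fq (PowerSeries.C r) =
    algebraMap (FractionRing Fq[X]) _ (algebraMap Fq[X] (FractionRing Fq[X]) r) := by
  rw [toLau_apply, PowerSeries.map_C, HahnSeries.ofPowerSeries_C, algebraMap_laurent]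

theorem toLau_X : toLau Fq PowerSeries.X = (xL (FractionRing Fq[X]))⁻¹ := by
  rw [toLau_apply, PowerSeries.map_X, xL_inv]

theorem toLau_tau (F : PowerSeries Fq[X]) : toLau Fq (tau Fq F) =
    tauL (FractionRing Fq[X]) (Fintype.card Fq) Fintype.card_ne_zero (toLau Fq F) := by
  rw [toLau_apply, toLau_apply, tauL_ofPowerSeries]
  congr 1
  ext1 m
  rw [PowerSeries.coeff_map]
  by_cases h : Fintype.card Fq ∣ m
  · obtain ⟨k, rfl⟩ := h
    rw [coeff_tau_mul, coeff_yExpand_mul, PowerSeries.coeff_map]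
  · rw [coeff_tau_of_not_dvd _ h, coeff_yExpand_of_not_dvd _ _ _ h, map_zero]

theorem toLau_oneAdd : toLau Fq (oneAdd Fq) =
    1 + algebraMap (FractionRing Fq[X]) _ (algebraMap Fq[X] (FractionRing Fq[X]) X) *
      (xL (FractionRing Fq[X]))⁻¹ ^ Fintype.card Fq := by
  rw [oneAdd, map_add, map_one, map_mul, toLau_C, map_pow, toLau_X]

variable (Fq) in
/-- The structure map of `𝔽_q(t)((y))` over `𝔽_q[t]`. -/
def coefLau : Fq[X] →+* LaurentSeries (FractionRing Fq[X]) :=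
  (algebraMap (FractionRing Fq[X]) _).comp (algebraMap Fq[X] (FractionRing Fq[X]))

theorem toLau_coe (P : Fq[X][X]) :
    toLau Fq P = eval₂ (coefLau Fq) (xL (FractionRing Fq[X]))⁻¹ P := by
  have : (toLau Fq).comp (coeToPowerSeries.ringHom (R := Fq[X])) =
      eval₂RingHom (coefLau Fq) (xL (FractionRing Fq[X]))⁻¹ := by
    refine Polynomial.ringHom_ext (fun a => ?_) ?_
    · simp only [RingHom.comp_apply, coeToPowerSeries.ringHom_apply, coe_C, toLau_C,
        coe_eval₂RingHom, eval₂_C]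
      rfl
    · simp only [RingHom.comp_apply, coeToPowerSeries.ringHom_apply, coe_X, toLau_X,
        coe_eval₂RingHom, eval₂_X]
  exact congrArg (fun f => f P) this

theorem toLau_reflect (P : Fq[X][X]) {N : ℕ} (hN : P.natDegree ≤ N) :
    toLau Fq (reflect N P : Fq[X][X]) * xL (FractionRing Fq[X]) ^ N =
      aeval (xL (FractionRing Fq[X])) (P.map (algebraMap Fq[X] (FractionRing Fq[X]))) := by
  let _ : Invertible (xL (FractionRing Fq[X])) := invertibleOfNonzero xL_ne_zero
  have := eval₂_reflect_mul_pow (coefLau Fq) (xL (FractionRing Fq[X])) N P hN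
  rw [invOf_eq_inv] at this
  rw [toLau_coe, this, aeval_def, eval₂_map]
  rfl

/-- If a `2 ^ e`-th power of `x ^ c f` is a polynomial in `x`, that polynomial does not vanish at
`x = t`, because `f` does not vanish at `t = θ`, `y = θ⁻¹`. -/
theorem hval_laurent (f : bdd Fq) (hf0 : ev 0 f ≠ 0) (c e : ℕ) (A : (FractionRing Fq[X])[X])
    (hA : (xL (FractionRing Fq[X]) ^ c * toLau Fq f.1) ^ 2 ^ e =
      aeval (xL (FractionRing Fq[X])) A) :
    A.eval (algebraMap Fq[X] (FractionRing Fq[X]) X) ≠ 0 := by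
  intro h0
  set x := xL (FractionRing Fq[X]) with hx
  have hx0 : x ≠ 0 := xL_ne_zero
  obtain ⟨s, hs, hA'⟩ := IsLocalization.integerNormalization_spec (nonZeroDivisors Fq[X]) A
  set A' := IsLocalization.integerNormalization (nonZeroDivisors Fq[X]) A
  have hs0 : s ≠ 0 := nonZeroDivisors.ne_zero hs
  have hsm : s • A = Polynomial.C (algebraMap Fq[X] (FractionRing Fq[X]) s) * A := by
    rw [← smul_eq_C_mul, algebraMap_smul]
  rw [hsm] at hA'
  have hev : A'.eval X = 0 := by
    refine IsFractionRing.injective Fq[X] (FractionRing Fq[X]) ?_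
    rw [map_zero, ← eval₂_hom, ← eval_map, hA', eval_mul, h0, mul_zero]
  set a := A'.natDegree
  have h1 : toLau Fq (PowerSeries.C s * PowerSeries.X ^ a * f.1 ^ 2 ^ e) =
      toLau Fq (reflect (a + c * 2 ^ e) A' : Fq[X][X]) := by
    have h2 := toLau_reflect A' (N := a + c * 2 ^ e) (by omega)
    rw [hA', map_mul, aeval_C, ← hx, ← hA, mul_pow, ← pow_mul] at h2
    refine mul_right_cancel₀ (pow_ne_zero (a + c * 2 ^ e) hx0) ?_
    rw [h2, map_mul, map_mul, map_pow, map_pow, toLau_C, toLau_X, ← hx, inv_pow, pow_add]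
    field_simp
  have h2 : ofPoly Fq (Polynomial.C s * X ^ a) * f ^ 2 ^ e =
      ofPoly Fq (reflect (a + c * 2 ^ e) A') := by
    refine Subtype.ext ?_
    rw [Subring.coe_mul, Subring.coe_pow, coe_ofPoly, coe_ofPoly, ← toLau_injective h1,
      Polynomial.coe_mul, coe_C, Polynomial.coe_pow, coe_X]
  have h3 := congrArg (ev 0) h2
  have hθ : theta Fq ≠ 0 := theta_ne_zero
  let _ : Invertible (theta Fq) := invertibleOfNonzero hθ
  have h4 := eval₂_reflect_mul_pow (aeval (theta Fq)).toRingHom (theta Fq) (a + c * 2 ^ e) A'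
    (by omega)
  have h5 : eval₂ (aeval (theta Fq)).toRingHom (theta Fq) A' = 0 := by
    have := congrArg (aeval (theta Fq)) hev
    rw [map_zero] at this
    rw [← this]
    change _ = (aeval (theta Fq)).toRingHom _
    rw [← eval₂_hom]
    congr 1
    exact (aeval_X (R := Fq) (theta Fq)).symm
  rw [h5, invOf_eq_inv] at h4
  have h6 := (mul_eq_zero.1 h4).resolve_right (pow_ne_zero _ hθ)
  rw [map_mul, map_pow, ev_ofPoly, ev_ofPoly, pow_zero, pow_one, h6, eval₂_mul, eval₂_C, eval₂_pow,
    eval₂_X] at h3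
  refine mul_ne_zero (mul_ne_zero ?_ (pow_ne_zero _ (inv_ne_zero hθ))) (pow_ne_zero _ hf0) h3
  exact fun h => hs0 (transcendental_iff.1 transcendental_theta _ h)

end TwoVar

end

/-! ### Algebraic independence of the series -/

section
set_option linter.unusedSectionVars false

namespace TwoVar
open Polynomial KinfVal

variable {Fq : Type} [Field Fq] [Fintype Fq]

theorem linearIndependent_congr' {R M ι : Type} [Semiring R] [AddCommMonoid M] [Module R M]
    {v w : ι → M} (hv : LinearIndependent R v) (h : ∀ i, v i = w i) : LinearIndependent R w :=
  funext h ▸ hv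

theorem linearIndependent_of_semilinear {F A L ι : Type} [Field F] [AddCommGroup A] [Module F A]
    [Field L] [Algebra F L] (φ : A →+ L) (hφ : ∀ r a, φ (r • a) = algebraMap F L r * φ a)
    {v : ι → A} {w : ι → L} (hw : LinearIndependent F w) (h : ∀ i, φ (v i) = w i) :
    LinearIndependent F v :=
  LinearIndependent.of_comp
    ({ φ with map_smul' := fun r a => (hφ r a).trans (Algebra.smul_def _ _).symm } : A →ₗ[F] L)
    (linearIndependent_congr' hw fun i => (h i).symm)

/-- If `v` is algebraically independent over `K` and `y ∈ K` is transcendental over `F`, the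
products of powers of `y` and monomials in `v` are linearly independent over `F`. -/
theorem linearIndependent_tower {F K L σ : Type} [Field F] [Field K] [Field L] [Algebra F K]
    [Algebra K L] [Algebra F L] [IsScalarTower F K L] [Fintype σ] {v : σ → L}
    (hv : AlgebraicIndependent K v) {y : K} (hy : Transcendental F y) :
    LinearIndependent F
      (fun k : (σ →₀ ℕ) × ℕ => algebraMap K L y ^ k.2 * ∏ i, v i ^ k.1 i) := by
  have hmon : LinearIndependent K (fun m : σ →₀ ℕ => ∏ i, v i ^ m i) := by
    have h1 := (MvPolynomial.basisMonomials σ K).linearIndependent.map'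
      (MvPolynomial.aeval (R := K) v).toLinearMap (LinearMap.ker_eq_bot.2 hv)
    refine linearIndependent_congr' h1 fun m => ?_
    simp [MvPolynomial.aeval_monomial, Finsupp.prod_fintype]
  have hpow : LinearIndependent F (fun k : ℕ => y ^ k) := by
    have h1 := (Polynomial.basisMonomials F).linearIndependent.map'
      (aeval (R := F) y).toLinearMap (LinearMap.ker_eq_bot.2 (transcendental_iff_injective.1 hy))
    refine linearIndependent_congr' h1 fun k => ?_
    simp
  have hprod := (linearIndependent_smul hpow hmon).comp (Prod.swap : (σ →₀ ℕ) × ℕ → _)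
    Prod.swap_injective
  refine linearIndependent_congr' hprod fun k => ?_
  simp [Algebra.smul_def]

/-- From algebraic independence over `𝔽_q(t, y)` to linear independence over `𝔽_q(t)` of the
products of monomials with powers of `y`, as sequences of coefficients. -/
theorem linearIndependent_of_algIndep {σ : Type} [Fintype σ] (w : σ → bdd Fq)
    (hw : AlgebraicIndependent
      (IntermediateField.adjoin (FractionRing Fq[X]) {xL (FractionRing Fq[X])})
      (fun i => toLau Fq (w i).1)) :
    LinearIndependent (FractionRing Fq[X]) (fun k : (σ →₀ ℕ) × ℕ => fun m : ℕ =>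
      algebraMap Fq[X] (FractionRing Fq[X])
        (PowerSeries.coeff m (PowerSeries.X ^ k.2 * ∏ i, (w i).1 ^ k.1 i))) := by
  let F := FractionRing Fq[X]
  let x := xL F
  let K := IntermediateField.adjoin F {x}
  let y : K := ⟨x⁻¹, inv_mem (IntermediateField.mem_adjoin_simple_self F x)⟩
  have hy : Transcendental F y := fun h =>
    transcendental_xL_inv (h.algebraMap (A := LaurentSeries F))
  have hprod := linearIndependent_tower hw hy
  let Φ : (ℕ → F) →+ LaurentSeries F :=
    { toFun := fun s => HahnSeries.ofPowerSeries ℤ F (PowerSeries.mk s)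
      map_zero' := by
        rw [← map_zero (HahnSeries.ofPowerSeries ℤ F)]
        congr 1
      map_add' := fun s s' => by
        rw [← map_add]
        congr 1 }
  have hΦ : ∀ r s, Φ (r • s) = algebraMap F (LaurentSeries F) r * Φ s := by
    intro r s
    change HahnSeries.ofPowerSeries ℤ F (PowerSeries.mk (r • s)) =
      _ * HahnSeries.ofPowerSeries ℤ F (PowerSeries.mk s)
    rw [algebraMap_laurent, ← HahnSeries.ofPowerSeries_C, ← map_mul]
    congr 1
    ext1 m
    simp
  refine linearIndependent_of_semilinear Φ hΦ hprod fun k => ?_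
  have h1 : Φ (fun m : ℕ => algebraMap Fq[X] (FractionRing Fq[X])
      (PowerSeries.coeff m (PowerSeries.X ^ k.2 * ∏ i, (w i).1 ^ k.1 i))) =
      toLau Fq (PowerSeries.X ^ k.2 * ∏ i, (w i).1 ^ k.1 i) := by
    rw [toLau_apply]
    change HahnSeries.ofPowerSeries ℤ F _ = _
    congr 1
    ext1 m
    rw [PowerSeries.coeff_mk, PowerSeries.coeff_map]
  refine h1.trans ?_
  rw [map_mul, map_pow, toLau_X, map_prod]
  simp only [map_pow]
  rfl

theorem charP_frac (hp : ringChar Fq = 2) : CharP (FractionRing Fq[X]) 2 := by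
  have : CharP Fq 2 := hp ▸ ringChar.charP Fq
  exact charP_of_injective_algebraMap
    (R := Fq[X]) (IsFractionRing.injective Fq[X] (FractionRing Fq[X])) 2

theorem two_dvd_card (hp : ringChar Fq = 2) : 2 ∣ Fintype.card Fq := by
  have : CharP Fq 2 := hp ▸ ringChar.charP Fq
  exact (CharP.cast_eq_zero_iff Fq 2 _).1 (FiniteField.cast_card_eq_zero Fq)

/-- Solutions `u, f, g` of the difference equations of the period and of the zeta values have
linearly independent monomials over `𝔽_q(t, y)`. With `x = 1/y` and `c` the degree of `h`, the
elements `x ^ c f` and `x ^ (2 * c) g` satisfy the hypotheses of `base_algebraicIndependent`. -/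
theorem series_linearIndependent (hp : ringChar Fq = 2) {n : ℕ} (hn : 1 ≤ n)
    (hodd : ¬ (Fintype.card Fq - 1) ∣ n) (h : Fq[X][X]) {e : ℕ}
    (he : e + (Fintype.card Fq - 1) * h.natDegree = n * Fintype.card Fq) (u f g : bdd Fq)
    (hu0 : PowerSeries.constantCoeff u.1 = 1) (hu : tau Fq u.1 = oneAdd Fq * u.1)
    (hf : PowerSeries.X ^ e * tau Fq f.1 = oneAdd Fq ^ n * (f.1 - (h.reverse : PowerSeries Fq[X])))
    (hg : PowerSeries.X ^ (2 * e) * tau Fq g.1 = oneAdd Fq ^ (2 * n) *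
      (g.1 - (h.reverse : PowerSeries Fq[X]) * (f.1 + (h.reverse : PowerSeries Fq[X]))))
    (hf0 : ev 0 f ≠ 0) :
    LinearIndependent (FractionRing Fq[X]) (fun k : (Fin 3 →₀ ℕ) × ℕ => fun m : ℕ =>
      algebraMap Fq[X] (FractionRing Fq[X])
        (PowerSeries.coeff m (PowerSeries.X ^ k.2 * ∏ i, ((![u, f, g] : Fin 3 → bdd Fq) i).1 ^ k.1 i))) := by
  refine linearIndependent_of_algIndep ![u, f, g] ?_
  let F := FractionRing Fq[X]
  let x := xL F
  have hx0 : x ≠ 0 := xL_ne_zero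
  have hchar : CharP F 2 := charP_frac hp
  have hcharL : CharP (LaurentSeries F) 2 :=
    charP_of_injective_algebraMap (algebraMap F (LaurentSeries F)).injective 2
  let t : F := algebraMap Fq[X] F X
  set c := h.natDegree with hc
  set q := Fintype.card Fq with hq
  have hq2 : 2 ≤ q := card_ge_two
  have hqc : q * c + e = c + q * n := by
    obtain ⟨k, hk⟩ := Nat.exists_eq_add_of_le hq2
    rw [hk] at he ⊢
    rw [show 2 + k - 1 = k + 1 by omega] at he
    linarith
  let h' : F[X] := h.map (algebraMap Fq[X] F)
  have hh : aeval x h' = toLau Fq (h.reverse : Fq[X][X]) * x ^ c := (toLau_reflect h le_rfl).symm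
  have hone : toLau Fq (oneAdd Fq) = 1 + algebraMap F _ t * x⁻¹ ^ q := toLau_oneAdd
  have hxq : x ^ q + algebraMap F (LaurentSeries F) t = x ^ q * toLau Fq (oneAdd Fq) := by
    rw [hone, inv_pow, mul_add, mul_one, mul_left_comm, mul_inv_cancel₀ (pow_ne_zero _ hx0), mul_one]
  have key := DiffAlg.base_algebraicIndependent hq2 (tauL F q Fintype.card_ne_zero)
    (x := x) transcendental_xL (tauL_xL _ _) (t := t) ?_ ?_ hn h'
    (f := x ^ c * toLau Fq f.1) (g := x ^ (2 * c) * toLau Fq g.1) (u := toLau Fq u.1)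
    ?_ ?_ ?_ ?_ (fun e δ hδ => hord_laurent hq2 (two_dvd_card hp) hodd t e δ hδ)
    (fun e A hA => hval_laurent f hf0 c e A hA)
  · let K := IntermediateField.adjoin F {x}
    let y : K := ⟨x⁻¹, inv_mem (IntermediateField.mem_adjoin_simple_self F x)⟩
    have hy0 : y ≠ 0 := fun h => inv_ne_zero hx0 (congrArg Subtype.val h)
    refine algIndep_smul key ![1, y ^ c, y ^ (2 * c)] ?_ ?_
    · intro i
      fin_cases i
      · exact one_ne_zero
      · exact pow_ne_zero _ hy0
      · exact pow_ne_zero _ hy0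
    · have hy : ∀ (k : ℕ) (z : LaurentSeries F),
          z = algebraMap K (LaurentSeries F) (y ^ k) * (x ^ k * z) := by
        intro k z
        rw [map_pow]
        change z = x⁻¹ ^ k * (x ^ k * z)
        rw [inv_pow, inv_mul_cancel_left₀ (pow_ne_zero _ hx0)]
      intro i
      fin_cases i
      · simp
      · exact hy c _
      · exact hy (2 * c) _
  · exact (_root_.map_ne_zero_iff _ (IsFractionRing.injective Fq[X] F)).2 X_ne_zero
  · intro i j hij
    have h1 : (X : Fq[X]) ^ q ^ i = X ^ q ^ j := by
      refine IsFractionRing.injective Fq[X] F ?_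
      simpa only [map_pow] using hij
    have h2 := congrArg natDegree h1
    rw [natDegree_X_pow, natDegree_X_pow] at h2
    exact Nat.pow_right_injective hq2 h2
  · have h1 := congrArg (toLau Fq) hf
    rw [map_mul, map_mul, map_sub, toLau_tau, map_pow, map_pow, toLau_X] at h1
    rw [map_mul, map_pow, tauL_xL, hxq, hh, ← CharTwo.sub_eq_add]
    change x⁻¹ ^ e * _ = _ at h1
    change (x ^ q) ^ c * _ = _
    have h2 : tauL F q Fintype.card_ne_zero (toLau Fq f.1) =
        x ^ e * (toLau Fq (oneAdd Fq) ^ n * (toLau Fq f.1 - toLau Fq (h.reverse : Fq[X][X]))) := by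
      rw [← h1, inv_pow, mul_inv_cancel_left₀ (pow_ne_zero _ hx0)]
    rw [h2, mul_pow, ← pow_mul, ← pow_mul, ← mul_assoc, ← pow_add, hqc, pow_add]
    ring
  · have h1 := congrArg (toLau Fq) hg
    rw [map_mul, map_mul, map_sub, map_mul, map_add, toLau_tau, map_pow, map_pow, toLau_X] at h1
    rw [map_mul, map_pow, tauL_xL, hxq, hh]
    change x⁻¹ ^ (2 * e) * _ = _ at h1
    change (x ^ q) ^ (2 * c) * _ = _
    have h2 : tauL F q Fintype.card_ne_zero (toLau Fq g.1) =
        x ^ (2 * e) * (toLau Fq (oneAdd Fq) ^ (2 * n) * (toLau Fq g.1 -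
          toLau Fq (h.reverse : Fq[X][X]) * (toLau Fq f.1 + toLau Fq (h.reverse : Fq[X][X])))) := by
      rw [← h1, inv_pow, mul_inv_cancel_left₀ (pow_ne_zero _ hx0)]
    rw [CharTwo.sub_eq_add] at h2
    rw [h2, mul_pow, ← pow_mul, ← pow_mul, ← mul_assoc, ← pow_add,
      show q * (2 * c) + 2 * e = 2 * c + q * (2 * n) by linarith, pow_add]
    ring
  · have h1 := congrArg (toLau Fq) hu
    rw [toLau_tau, map_mul, hone] at h1
    exact h1
  · intro h0
    have := toLau_injective (h0.trans (map_zero _).symm)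
    rw [this] at hu0
    simp at hu0

end TwoVar

end

/-! ### Functional equations of the values -/

section
set_option linter.unusedSectionVars false

namespace TwoVar
open Polynomial Filter Topology KinfVal AndersonThakur

variable {Fq : Type} [Field Fq] [Fintype Fq]

/-- A sequence of polynomials whose degrees are `O(q ^ d)`. -/
def LinDeg (r : ℕ → Fq[X]) : Prop := ∃ c, ∀ d, (r d).natDegree ≤ c * Fintype.card Fq ^ d

theorem LinDeg.mul {r s : ℕ → Fq[X]} (hr : LinDeg r) (hs : LinDeg s) :
    LinDeg fun d => r d * s d := by
  obtain ⟨a, ha⟩ := hr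
  obtain ⟨b, hb⟩ := hs
  refine ⟨a + b, fun d => natDegree_mul_le.trans ?_⟩
  rw [add_mul]
  exact add_le_add (ha d) (hb d)

theorem LinDeg.add {r s : ℕ → Fq[X]} (hr : LinDeg r) (hs : LinDeg s) :
    LinDeg fun d => r d + s d := by
  obtain ⟨a, ha⟩ := hr
  obtain ⟨b, hb⟩ := hs
  refine ⟨a + b, fun d => (natDegree_add_le _ _).trans (max_le ?_ ?_)⟩
  · exact (ha d).trans (Nat.mul_le_mul_right _ (Nat.le_add_right _ _))
  · exact (hb d).trans (Nat.mul_le_mul_right _ (Nat.le_add_left _ _))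

theorem LinDeg.neg {r : ℕ → Fq[X]} (hr : LinDeg r) : LinDeg fun d => -r d := by
  obtain ⟨a, ha⟩ := hr
  exact ⟨a, fun d => (natDegree_neg _).le.trans (ha d)⟩

theorem LinDeg.const (r : Fq[X]) : LinDeg fun _ => r :=
  ⟨r.natDegree, fun _ => Nat.le_mul_of_pos_right _ (pow_pos Fintype.card_pos _)⟩

theorem LinDeg.pow {r : ℕ → Fq[X]} (hr : LinDeg r) (n : ℕ) : LinDeg fun d => r d ^ n := by
  obtain ⟨a, ha⟩ := hr
  refine ⟨n * a, fun d => natDegree_pow_le.trans ?_⟩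
  rw [mul_assoc]
  exact Nat.mul_le_mul_left _ (ha d)

theorem LinDeg.X_pow : LinDeg fun d => (X : Fq[X]) ^ Fintype.card Fq ^ d :=
  ⟨1, fun d => by rw [natDegree_X_pow, one_mul]⟩

theorem LinDeg.eval (h : Fq[X][X]) :
    LinDeg fun d => h.eval ((X : Fq[X]) ^ Fintype.card Fq ^ d) := by
  induction h using Polynomial.induction_on' with
  | add p q hp hq => simpa only [eval_add] using hp.add hq
  | monomial k a => simpa only [eval_monomial] using (LinDeg.const a).mul (LinDeg.X_pow.pow k)

theorem aeval_eval (h : Fq[X][X]) (d : ℕ) :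
    aeval (theta Fq) (h.eval ((X : Fq[X]) ^ Fintype.card Fq ^ d)) = evd Fq (theta Fq) d h := by
  induction h using Polynomial.induction_on' with
  | add p q hp hq => rw [eval_add, map_add, map_add, hp, hq]
  | monomial k a =>
    rw [eval_monomial, ← C_mul_X_pow_eq_monomial]
    simp only [map_mul, map_pow, evd_C, evd_X, aeval_X]

/-- The difference equation of `F`, evaluated at `t = θ`, `y = θ ^ (-q ^ d)` and cleared of
denominators. -/
theorem ev_equation {F H : bdd Fq} {e n : ℕ}
    (hF : PowerSeries.X ^ e * tau Fq F.1 = oneAdd Fq ^ n * (F.1 - H.1)) (d : ℕ) :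
    (theta Fq ^ Fintype.card Fq ^ d) ^ (Fintype.card Fq * n) * ev (d + 1) F =
      (theta Fq ^ Fintype.card Fq ^ d) ^ e *
        ((theta Fq ^ Fintype.card Fq ^ d) ^ Fintype.card Fq + theta Fq) ^ n *
          (ev d F - ev d H) := by
  let P : bdd Fq := ofPoly Fq (1 + C X * X ^ Fintype.card Fq)
  have hP : P.1 = oneAdd Fq := by
    rw [coe_ofPoly, oneAdd]
    simp
  have h1 : ofPoly Fq X ^ e * ⟨tau Fq F.1, tau_mem F.2⟩ = P ^ n * (F - H) := by
    refine Subtype.ext ?_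
    push_cast
    rw [hP, coe_ofPoly, Polynomial.coe_X]
    exact hF
  have h2 := congrArg (ev d) h1
  have hθ : theta Fq ^ Fintype.card Fq ^ d ≠ 0 := pow_ne_zero _ theta_ne_zero
  set Θ := theta Fq ^ Fintype.card Fq ^ d with hΘ
  have hPv : ev d P = (Θ ^ Fintype.card Fq)⁻¹ * (Θ ^ Fintype.card Fq + theta Fq) := by
    rw [ev_ofPoly]
    simp only [eval₂_add, eval₂_one, eval₂_mul, eval₂_C, eval₂_pow, eval₂_X]
    rw [mul_add, inv_mul_cancel₀ (pow_ne_zero _ hθ), inv_pow, ← hΘ]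
    simp [mul_comm]
  rw [map_mul, map_mul, map_pow, map_pow, ev_tau, map_sub, hPv, ev_ofPoly, eval₂_X, ← hΘ] at h2
  rw [pow_mul]
  rw [inv_pow, mul_pow, inv_pow] at h2
  have h3 : ev (d + 1) F = Θ ^ e * ((Θ ^ e)⁻¹ * ev (d + 1) F) := by
    rw [mul_inv_cancel_left₀ (pow_ne_zero _ hθ)]
  rw [h3, h2]
  have h4 := mul_inv_cancel₀ (pow_ne_zero n (pow_ne_zero (Fintype.card Fq) hθ))
  linear_combination (Θ ^ e * (Θ ^ Fintype.card Fq + theta Fq) ^ n * (ev d F - ev d H)) * h4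

/-- Reversing `h` in its second variable `X` corresponds to `y = 1 / X`. -/
theorem ev_reverse (h : Fq[X][X]) (d : ℕ) :
    ev d (ofPoly Fq h.reverse) * (theta Fq ^ Fintype.card Fq ^ d) ^ h.natDegree =
      evd Fq (theta Fq) d h := by
  have hθ : theta Fq ^ Fintype.card Fq ^ d ≠ 0 := pow_ne_zero _ theta_ne_zero
  let _ := invertibleOfNonzero hθ
  have := eval₂_reverse_mul_pow (aeval (theta Fq)).toRingHom (theta Fq ^ Fintype.card Fq ^ d) h
  rw [invOf_eq_inv] at this
  rw [ev_ofPoly]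
  exact this

end TwoVar

end

/-! ### The linear recursion for the values -/

section
set_option linter.unusedSectionVars false

namespace TwoVar
open Polynomial Filter Topology KinfVal AndersonThakur

variable {Fq : Type} [Field Fq] [Fintype Fq]

theorem ev_u_equation {u : bdd Fq} (hu : tau Fq u.1 = oneAdd Fq * u.1) (d : ℕ) :
    (theta Fq ^ Fintype.card Fq ^ d) ^ Fintype.card Fq * ev (d + 1) u =
      ((theta Fq ^ Fintype.card Fq ^ d) ^ Fintype.card Fq + theta Fq) * ev d u := by
  have := ev_equation (F := u) (H := 0) (e := 0) (n := 1) (by simpa using hu) d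
  simpa using this

theorem ev_f_equation (h : Fq[X][X]) {e n : ℕ} {f : bdd Fq}
    (hf : PowerSeries.X ^ e * tau Fq f.1 =
      oneAdd Fq ^ n * (f.1 - (h.reverse : PowerSeries Fq[X]))) (d : ℕ) :
    (theta Fq ^ Fintype.card Fq ^ d) ^ (Fintype.card Fq * n + h.natDegree) * ev (d + 1) f =
      (theta Fq ^ Fintype.card Fq ^ d) ^ e *
        ((theta Fq ^ Fintype.card Fq ^ d) ^ Fintype.card Fq + theta Fq) ^ n *
          ((theta Fq ^ Fintype.card Fq ^ d) ^ h.natDegree * ev d f - evd Fq (theta Fq) d h) := by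
  have h1 := ev_equation (H := ofPoly Fq h.reverse) hf d
  rw [← ev_reverse h d, pow_add, mul_right_comm, h1]
  ring

theorem ev_g_equation (h : Fq[X][X]) {e n : ℕ} {f g : bdd Fq}
    (hg : PowerSeries.X ^ (2 * e) * tau Fq g.1 = oneAdd Fq ^ (2 * n) *
      (g.1 - (h.reverse : PowerSeries Fq[X]) * (f.1 + (h.reverse : PowerSeries Fq[X])))) (d : ℕ) :
    (theta Fq ^ Fintype.card Fq ^ d) ^ (2 * (Fintype.card Fq * n + h.natDegree)) * ev (d + 1) g =
      (theta Fq ^ Fintype.card Fq ^ d) ^ (2 * e) *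
        ((theta Fq ^ Fintype.card Fq ^ d) ^ Fintype.card Fq + theta Fq) ^ (2 * n) *
          ((theta Fq ^ Fintype.card Fq ^ d) ^ (2 * h.natDegree) * ev d g -
            evd Fq (theta Fq) d h * ((theta Fq ^ Fintype.card Fq ^ d) ^ h.natDegree * ev d f +
              evd Fq (theta Fq) d h)) := by
  have h1 := ev_equation (H := ofPoly Fq h.reverse * (f + ofPoly Fq h.reverse)) hg d
  rw [map_mul, map_add] at h1
  rw [← ev_reverse h d, show 2 * (Fintype.card Fq * n + h.natDegree) =
    Fintype.card Fq * (2 * n) + 2 * h.natDegree by ring, pow_add, mul_right_comm, h1]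
  ring

/-- Packaging of a recursion expressing the value of `w i` at level `d + 1` through those of
`1, w 0, w 1, w 2` at level `d`, with coefficients of degree `O(q ^ d)`. -/
theorem row_of {w : Fin 3 → bdd Fq} {i : Fin 3} (a : ℕ) (r₀ r₁ r₂ r₃ : ℕ → Fq[X])
    (h₀ : LinDeg r₀) (h₁ : LinDeg r₁) (h₂ : LinDeg r₂) (h₃ : LinDeg r₃)
    (h : ∀ d, (theta Fq ^ Fintype.card Fq ^ d) ^ a * ev (d + 1) (w i) = aeval (theta Fq) (r₀ d) +
      (aeval (theta Fq) (r₁ d) * ev d (w 0) + aeval (theta Fq) (r₂ d) * ev d (w 1) +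
        aeval (theta Fq) (r₃ d) * ev d (w 2))) :
    ∃ a c : ℕ, ∀ d, ∃ r : Option (Fin 3) → Fq[X],
      (∀ j, (r j).natDegree ≤ c * Fintype.card Fq ^ d) ∧
      theta Fq ^ (a * Fintype.card Fq ^ d) * ev (d + 1) (w i) =
        ∑ j, aeval (theta Fq) (r j) * ev d (j.elim 1 w) := by
  obtain ⟨c₀, h₀⟩ := h₀
  obtain ⟨c₁, h₁⟩ := h₁
  obtain ⟨c₂, h₂⟩ := h₂
  obtain ⟨c₃, h₃⟩ := h₃
  refine ⟨a, c₀ + c₁ + c₂ + c₃, fun d =>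
    ⟨fun j => j.elim (r₀ d) ![r₁ d, r₂ d, r₃ d], ?_, ?_⟩⟩
  · rintro (_ | j)
    · exact (h₀ d).trans (Nat.mul_le_mul_right _ (by omega))
    · fin_cases j
      · exact (h₁ d).trans (Nat.mul_le_mul_right _ (by omega))
      · exact (h₂ d).trans (Nat.mul_le_mul_right _ (by omega))
      · exact (h₃ d).trans (Nat.mul_le_mul_right _ (by omega))
  · rw [Fintype.sum_option, Fin.sum_univ_three, mul_comm a, pow_mul, h d]
    simp

/-- The values of `u, f, g` at `y = θ ^ (-q ^ (d + 1))` are affine combinations of those at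
`y = θ ^ (-q ^ d)`, with coefficients of degree `O(q ^ d)` up to a power of `θ`. -/
theorem rows (h : Fq[X][X]) {e n : ℕ} (u f g : bdd Fq) (hu : tau Fq u.1 = oneAdd Fq * u.1)
    (hf : PowerSeries.X ^ e * tau Fq f.1 = oneAdd Fq ^ n * (f.1 - (h.reverse : PowerSeries Fq[X])))
    (hg : PowerSeries.X ^ (2 * e) * tau Fq g.1 = oneAdd Fq ^ (2 * n) *
      (g.1 - (h.reverse : PowerSeries Fq[X]) * (f.1 + (h.reverse : PowerSeries Fq[X]))))
    (i : Fin 3) :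
    ∃ a c : ℕ, ∀ d, ∃ r : Option (Fin 3) → Fq[X],
      (∀ j, (r j).natDegree ≤ c * Fintype.card Fq ^ d) ∧
      theta Fq ^ (a * Fintype.card Fq ^ d) * ev (d + 1) ((![u, f, g] : Fin 3 → bdd Fq) i) =
        ∑ j, aeval (theta Fq) (r j) * ev d (j.elim 1 ![u, f, g]) := by
  let Y : ℕ → Fq[X] := fun d => X ^ Fintype.card Fq ^ d
  let Q : ℕ → Fq[X] := fun d => Y d ^ Fintype.card Fq + X
  let E : ℕ → Fq[X] := fun d => h.eval ((X : Fq[X]) ^ Fintype.card Fq ^ d)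
  have hY : LinDeg Y := LinDeg.X_pow
  have hQ : LinDeg Q := (hY.pow _).add (LinDeg.const X)
  have hE : LinDeg E := LinDeg.eval h
  have hYv : ∀ d, aeval (theta Fq) (Y d) = theta Fq ^ Fintype.card Fq ^ d := fun d => by
    simp only [Y, map_pow, aeval_X]
  have hQv : ∀ d, aeval (theta Fq) (Q d) =
      (theta Fq ^ Fintype.card Fq ^ d) ^ Fintype.card Fq + theta Fq := fun d => by
    simp only [Q, map_add, map_pow, hYv, aeval_X]
  have hEv : ∀ d, aeval (theta Fq) (E d) = evd Fq (theta Fq) d h := aeval_eval h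
  have h0 : LinDeg (fun _ => (0 : Fq[X])) := LinDeg.const 0
  fin_cases i
  · refine row_of _ _ Q _ _ h0 hQ h0 h0 fun d => (ev_u_equation hu d).trans ?_
    simp [hQv]
  · refine row_of _ (fun d => -(Y d ^ e * Q d ^ n * E d)) _
      (fun d => Y d ^ e * Q d ^ n * Y d ^ h.natDegree) _
      (((hY.pow _).mul (hQ.pow _)).mul hE).neg h0 (((hY.pow _).mul (hQ.pow _)).mul (hY.pow _)) h0
      fun d => (ev_f_equation h hf d).trans ?_
    simp only [map_neg, map_mul, map_pow, hYv, hQv, hEv, map_zero, Matrix.cons_val_one,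
      Matrix.cons_val_zero]
    ring
  · refine row_of _ (fun d => -(Y d ^ (2 * e) * Q d ^ (2 * n) * (E d * E d))) _
      (fun d => -(Y d ^ (2 * e) * Q d ^ (2 * n) * (E d * Y d ^ h.natDegree)))
      (fun d => Y d ^ (2 * e) * Q d ^ (2 * n) * Y d ^ (2 * h.natDegree))
      (((hY.pow _).mul (hQ.pow _)).mul (hE.mul hE)).neg h0
      (((hY.pow _).mul (hQ.pow _)).mul (hE.mul (hY.pow _))).neg
      (((hY.pow _).mul (hQ.pow _)).mul (hY.pow _))
      fun d => (ev_g_equation h hg d).trans ?_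
    simp only [map_neg, map_mul, map_pow, hYv, hQv, hEv, map_zero, Matrix.cons_val_one,
      Matrix.cons_val_zero, Matrix.cons_val]
    ring

end TwoVar

end

/-! ### Normalized values and their limits -/

section
set_option linter.unusedSectionVars false

namespace TwoVar
open Polynomial Filter Topology KinfVal AndersonThakur

variable {Fq : Type} [Field Fq] [Fintype Fq]

theorem ev_mem_ordGe (F : bdd Fq) : ∃ b : ℤ, ∀ d, ev d F ∈ ordGe Fq b := by
  obtain ⟨b, hb⟩ := mem_bdd.1 F.2
  refine ⟨-b, fun d => tsum_mem_ordGe fun m => ordGe_anti ?_ (term_mem d F.1 m)⟩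
  have h1 := (Nat.mul_le_mul_right _ card_ge_two).trans (hb m)
  have h2 : m ≤ Fintype.card Fq ^ d * m := Nat.le_mul_of_pos_left m (pow_pos Fintype.card_pos d)
  push_cast
  zify at h1 h2
  omega

theorem ev_mem_ordGe_of_constantCoeff (F : bdd Fq) (hF : PowerSeries.constantCoeff F.1 = 0) :
    ∃ b : ℤ, ∀ d : ℕ, ev d F ∈ ordGe Fq (d + b) := by
  obtain ⟨b, hb⟩ := mem_bdd.1 F.2
  refine ⟨-b, fun d => tsum_mem_ordGe fun m => ?_⟩
  rcases Nat.eq_zero_or_pos m with rfl | hm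
  · have : term d F.1 0 = 0 := by
      rw [term, PowerSeries.coeff_zero_eq_constantCoeff_apply, hF, map_zero, zero_mul]
    rw [this]
    exact zero_mem _
  refine ordGe_anti ?_ (term_mem d F.1 m)
  have h1 := (Nat.mul_le_mul_right _ card_ge_two).trans (hb m)
  have h2 : (d + 1) * m ≤ Fintype.card Fq ^ d * m :=
    Nat.mul_le_mul_right _ (Nat.lt_pow_self card_ge_two)
  have h3 : d ≤ d * m := Nat.le_mul_of_pos_right d hm
  rw [add_mul, one_mul] at h2
  push_cast
  zify at h1 h2 h3
  omega

theorem tendsto_ev_u {u : bdd Fq} (hu0 : PowerSeries.constantCoeff u.1 = 1) :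
    Tendsto (fun d => ev d u - 1) atTop (𝓝 0) := by
  obtain ⟨b, hb⟩ := ev_mem_ordGe_of_constantCoeff (u - 1)
    (by rw [AddSubgroupClass.coe_sub, map_sub, hu0]; simp)
  rw [tendsto_zero_iff]
  intro D
  filter_upwards [eventually_ge_atTop (D - b).toNat] with d hd
  have := hb d
  rw [map_sub, map_one] at this
  exact ordGe_anti (by omega) this

/-- The `1/θ`-adic order of `ell d` is `-ellDeg d`. -/
def ellDeg (q d : ℕ) : ℕ := ∑ j ∈ Finset.range d, q ^ (j + 1)

theorem ellDeg_eq (q d : ℕ) : (q : ℤ) * ellDeg q d + q = ellDeg q d + q * q ^ d := by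
  induction d with
  | zero => simp [ellDeg]
  | succ d ih =>
    rw [ellDeg, Finset.sum_range_succ]
    push_cast at ih ⊢
    rw [ellDeg] at ih
    push_cast at ih
    linear_combination ih

theorem v_theta_sub (j : ℕ) : Valued.v (theta Fq - theta Fq ^ Fintype.card Fq ^ (j + 1)) =
    WithZero.exp ((Fintype.card Fq ^ (j + 1) : ℕ) : ℤ) := by
  have h1 : 1 < Fintype.card Fq ^ (j + 1) := Nat.one_lt_pow (by omega) card_ge_two
  have h2 : (X - X ^ Fintype.card Fq ^ (j + 1) : Fq[X]).natDegree = Fintype.card Fq ^ (j + 1) := by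
    rw [natDegree_sub_eq_right_of_natDegree_lt, natDegree_X_pow]
    rwa [natDegree_X_pow, natDegree_X]
  have h3 : (X - X ^ Fintype.card Fq ^ (j + 1) : Fq[X]) ≠ 0 := by
    intro h
    rw [h, natDegree_zero] at h2
    omega
  have := v_aeval h3
  rw [h2] at this
  rw [← this]
  simp

theorem theta_pow_sub_ne_zero (j : ℕ) : theta Fq ^ Fintype.card Fq ^ (j + 1) - theta Fq ≠ 0 := by
  intro h
  have := v_theta_sub (Fq := Fq) j
  rw [← neg_sub, h, neg_zero, map_zero] at this
  exact WithZero.exp_ne_zero this.symm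

theorem ell_theta_ne_zero (d : ℕ) : ell Fq (theta Fq) d ≠ 0 := ell_ne_zero theta_pow_sub_ne_zero d

theorem v_ell (d : ℕ) :
    Valued.v (ell Fq (theta Fq) d) = WithZero.exp (ellDeg (Fintype.card Fq) d : ℤ) := by
  induction d with
  | zero => simp [ell, ellDeg]
  | succ d ih =>
    rw [ell, Finset.prod_range_succ, map_mul, v_theta_sub, ellDeg, Finset.sum_range_succ,
      Nat.cast_add, WithZero.exp_add]
    rw [ell, ellDeg] at ih
    rw [ih]

theorem inv_ell_mem (d : ℕ) :
    (ell Fq (theta Fq) d)⁻¹ ∈ ordGe Fq (ellDeg (Fintype.card Fq) d : ℤ) := by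
  rw [mem_ordGe, map_inv₀, v_ell, ← WithZero.exp_neg]

theorem pow_mem_ordGe {D : ℤ} {x : Kinf Fq} (hx : x ∈ ordGe Fq D) (k : ℕ) :
    x ^ k ∈ ordGe Fq (k * D) := by
  induction k with
  | zero =>
    simp only [pow_zero, Nat.cast_zero, zero_mul]
    rw [mem_ordGe, map_one]
    simp
  | succ k ih =>
    have := mul_mem_ordGe ih hx
    rw [pow_succ]
    refine ordGe_anti (le_of_eq ?_) this
    push_cast
    ring

/-- The normalisation of `ev d F` which turns the functional equations into summations. -/
def nrm (c n d : ℕ) (F : bdd Fq) : Kinf Fq :=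
  (ell Fq (theta Fq) d)⁻¹ ^ n * (theta Fq ^ Fintype.card Fq ^ d) ^ c * ev d F

/-- The normalized values tend to `0`: the order of `ℓ_d ^ (-n)` grows like `n q ^ (d+1) / (q - 1)`,
which exceeds the pole order `c q ^ d` by `e q ^ d / (q - 1)`. -/
theorem tendsto_nrm {c n e : ℕ} (he1 : 1 ≤ e)
    (he : e + (Fintype.card Fq - 1) * c = n * Fintype.card Fq) (F : bdd Fq) :
    Tendsto (fun d => nrm c n d F) atTop (𝓝 0) := by
  obtain ⟨b, hb⟩ := ev_mem_ordGe F
  rw [tendsto_zero_iff]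
  intro D
  have hq : 2 ≤ Fintype.card Fq := card_ge_two
  obtain ⟨k, hk⟩ := Nat.exists_eq_add_of_le' (show 1 ≤ Fintype.card Fq by omega)
  filter_upwards [eventually_ge_atTop (k * (D - b) + n * Fintype.card Fq).toNat] with d hd
  have h1 : theta Fq ^ Fintype.card Fq ^ d ∈ ordGe Fq (-((Fintype.card Fq ^ d : ℕ) : ℤ)) := by
    have := zpow_mem_ordGe (Fq := Fq) ((Fintype.card Fq ^ d : ℕ) : ℤ)
    rwa [zpow_natCast] at this
  refine ordGe_anti ?_ (mul_mem_ordGe (mul_mem_ordGe (pow_mem_ordGe (inv_ell_mem d) n)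
    (pow_mem_ordGe h1 c)) (hb d))
  have h2 : d < Fintype.card Fq ^ d := Nat.lt_pow_self card_ge_two
  have h3 := ellDeg_eq (Fintype.card Fq) d
  have h4 : (k * (D - b) + n * Fintype.card Fq : ℤ) ≤ d := by omega
  rw [hk] at he h2 h3 h4 ⊢
  rw [Nat.add_sub_cancel] at he
  set N := (k + 1) ^ d with hN
  set L := ellDeg (k + 1) d
  have hk1 : (0 : ℤ) < k := by omega
  have h5 : (d : ℤ) < N := by exact_mod_cast h2
  have h6 : (e : ℤ) + k * c = n * (k + 1) := by exact_mod_cast he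
  have h7 : (N : ℤ) = ((k + 1 : ℕ) : ℤ) ^ d := by rw [hN]; push_cast; rfl
  rw [← h7] at h3
  push_cast at h3 h4
  have h8 : (N : ℤ) ≤ e * N := le_mul_of_one_le_left (by omega) (by exact_mod_cast he1)
  have h9 : (k : ℤ) * (n * L + c * -N + b) = e * N - n * (k + 1) + k * b := by
    linear_combination (n : ℤ) * h3 - N * h6
  refine le_of_mul_le_mul_left ?_ hk1
  rw [h9]
  linarith

end TwoVar

end

/-! ### Zeta values by telescoping -/

section
set_option linter.unusedSectionVars false

namespace TwoVar
open Polynomial Filter Topology KinfVal AndersonThakur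

variable {Fq : Type} [Field Fq] [Fintype Fq]

theorem charP_Kinf (hp : ringChar Fq = 2) : CharP (Kinf Fq) 2 := by
  have : CharP Fq 2 := hp ▸ ringChar.charP Fq
  exact charP_of_injective_algebraMap (algebraMap Fq (Kinf Fq)).injective 2

/-- The normalized values `φ_d` of `f` satisfy `φ_{d+1} = φ_d - ℓ_d ^ (-n) h(θ, θ ^ (q ^ d))`. -/
theorem nrm_f_succ [CharP (Kinf Fq) 2] (h : Fq[X][X]) {e n : ℕ} {f : bdd Fq}
    (he : Fintype.card Fq * h.natDegree + e = h.natDegree + Fintype.card Fq * n)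
    (hf : PowerSeries.X ^ e * tau Fq f.1 =
      oneAdd Fq ^ n * (f.1 - (h.reverse : PowerSeries Fq[X]))) (d : ℕ) :
    nrm h.natDegree n (d + 1) f = nrm h.natDegree n d f -
      (ell Fq (theta Fq) d)⁻¹ ^ n * evd Fq (theta Fq) d h := by
  have h1 := ev_f_equation h hf d
  have hθ : theta Fq ^ Fintype.card Fq ^ d ≠ 0 := pow_ne_zero _ theta_ne_zero
  have hell : ell Fq (theta Fq) (d + 1) = ell Fq (theta Fq) d *
      ((theta Fq ^ Fintype.card Fq ^ d) ^ Fintype.card Fq + theta Fq) := by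
    rw [ell, Finset.prod_range_succ, ← ell, CharTwo.sub_eq_add, pow_succ, pow_mul, add_comm]
  have hP : (theta Fq ^ Fintype.card Fq ^ d) ^ Fintype.card Fq + theta Fq ≠ 0 := fun h0 =>
    ell_theta_ne_zero (Fq := Fq) (d + 1) (by rw [hell, h0, mul_zero])
  rw [nrm, nrm, hell, show theta Fq ^ Fintype.card Fq ^ (d + 1) =
    (theta Fq ^ Fintype.card Fq ^ d) ^ Fintype.card Fq by rw [pow_succ, pow_mul]]
  set Θ := theta Fq ^ Fintype.card Fq ^ d
  set P := Θ ^ Fintype.card Fq + theta Fq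
  set c := h.natDegree
  set l := ell Fq (theta Fq) d
  have h2 : (Θ ^ Fintype.card Fq) ^ c * ev (d + 1) f = P ^ n * (Θ ^ c * ev d f - evd Fq (theta Fq) d h) := by
    refine mul_left_cancel₀ (pow_ne_zero e hθ) ?_
    rw [← mul_assoc, ← mul_assoc, ← pow_mul Θ (Fintype.card Fq), ← pow_add, add_comm e, he, add_comm c, h1]
  rw [mul_inv, mul_pow, mul_assoc, h2, inv_pow P n]
  have h3 := inv_mul_cancel₀ (pow_ne_zero n hP)
  linear_combination (l⁻¹ ^ n * (Θ ^ c * ev d f - evd Fq (theta Fq) d h)) * h3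

/-- The normalized values `γ_d` of `g` satisfy `γ_{d+1} = γ_d - s_d (φ_d + s_d)`, where `φ_d` are
those of `f` and `s_d = ℓ_d ^ (-n) h(θ, θ ^ (q ^ d))`. -/
theorem nrm_g_succ [CharP (Kinf Fq) 2] (h : Fq[X][X]) {e n : ℕ} {f g : bdd Fq}
    (he : Fintype.card Fq * h.natDegree + e = h.natDegree + Fintype.card Fq * n)
    (hg : PowerSeries.X ^ (2 * e) * tau Fq g.1 = oneAdd Fq ^ (2 * n) *
      (g.1 - (h.reverse : PowerSeries Fq[X]) * (f.1 + (h.reverse : PowerSeries Fq[X])))) (d : ℕ) :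
    nrm (2 * h.natDegree) (2 * n) (d + 1) g = nrm (2 * h.natDegree) (2 * n) d g -
      (ell Fq (theta Fq) d)⁻¹ ^ n * evd Fq (theta Fq) d h *
        (nrm h.natDegree n d f + (ell Fq (theta Fq) d)⁻¹ ^ n * evd Fq (theta Fq) d h) := by
  have h1 := ev_g_equation h hg d
  have hθ : theta Fq ^ Fintype.card Fq ^ d ≠ 0 := pow_ne_zero _ theta_ne_zero
  have hell : ell Fq (theta Fq) (d + 1) = ell Fq (theta Fq) d *
      ((theta Fq ^ Fintype.card Fq ^ d) ^ Fintype.card Fq + theta Fq) := by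
    rw [ell, Finset.prod_range_succ, ← ell, CharTwo.sub_eq_add, pow_succ, pow_mul, add_comm]
  have hP : (theta Fq ^ Fintype.card Fq ^ d) ^ Fintype.card Fq + theta Fq ≠ 0 := fun h0 =>
    ell_theta_ne_zero (Fq := Fq) (d + 1) (by rw [hell, h0, mul_zero])
  rw [nrm, nrm, nrm, hell, show theta Fq ^ Fintype.card Fq ^ (d + 1) =
    (theta Fq ^ Fintype.card Fq ^ d) ^ Fintype.card Fq by rw [pow_succ, pow_mul]]
  set Θ := theta Fq ^ Fintype.card Fq ^ d
  set P := Θ ^ Fintype.card Fq + theta Fq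
  set c := h.natDegree
  set l := ell Fq (theta Fq) d
  set H := evd Fq (theta Fq) d h
  have h2 : (Θ ^ Fintype.card Fq) ^ (2 * c) * ev (d + 1) g =
      P ^ (2 * n) * (Θ ^ (2 * c) * ev d g - H * (Θ ^ c * ev d f + H)) := by
    refine mul_left_cancel₀ (pow_ne_zero (2 * e) hθ) ?_
    rw [← mul_assoc, ← mul_assoc, ← pow_mul Θ (Fintype.card Fq), ← pow_add,
      show 2 * e + Fintype.card Fq * (2 * c) = 2 * (Fintype.card Fq * n + c) by linarith, h1]
  rw [mul_inv, mul_pow, mul_assoc, h2, inv_pow P (2 * n)]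
  have h3 := inv_mul_cancel₀ (pow_ne_zero (2 * n) hP)
  linear_combination (l⁻¹ ^ (2 * n) * (Θ ^ (2 * c) * ev d g - H * (Θ ^ c * ev d f + H))) * h3

/-- Telescoping: if `φ (d+1) = φ d - s d` and `φ → 0`, then `φ 0 = ∑ s d`. -/
theorem tendsto_telescope {φ s : ℕ → Kinf Fq} (h : ∀ d, φ (d + 1) = φ d - s d)
    (h0 : Tendsto φ atTop (𝓝 0)) :
    Tendsto (fun K => ∑ d ∈ Finset.range K, s d) atTop (𝓝 (φ 0)) := by
  have h1 : (fun K => ∑ d ∈ Finset.range K, s d) = fun K => φ 0 - φ K := by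
    funext K
    rw [← Finset.sum_range_sub']
    refine Finset.sum_congr rfl fun d _ => ?_
    rw [h]
    ring
  rw [h1]
  simpa using h0.const_sub (φ 0)

/-- Telescoping in depth two, through summation by parts. -/
theorem tendsto_telescope_two {φ γ s : ℕ → Kinf Fq} (hφ : ∀ d, φ (d + 1) = φ d - s d)
    (hγ : ∀ d, γ (d + 1) = γ d - s d * φ (d + 1))
    (hφ0 : Tendsto φ atTop (𝓝 0)) (hγ0 : Tendsto γ atTop (𝓝 0)) :
    Tendsto (fun K => ∑ d ∈ Finset.range K, s d * ∑ d' ∈ Finset.range d, s d') atTop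
      (𝓝 (γ 0)) := by
  have h1 : ∀ K, γ 0 - γ K - (φ 0 - φ K) * φ K =
      ∑ d ∈ Finset.range K, s d * ∑ d' ∈ Finset.range d, s d' := by
    have h2 : ∀ K, ∑ d ∈ Finset.range K, s d = φ 0 - φ K := by
      intro K
      rw [← Finset.sum_range_sub']
      exact Finset.sum_congr rfl fun d _ => by rw [hφ]; ring
    intro K
    induction K with
    | zero => simp
    | succ K ih =>
      rw [Finset.sum_range_succ, ← ih, h2, hγ, hφ]
      ring
  have h3 := (hγ0.const_sub (γ 0)).sub ((hφ0.const_sub (φ 0)).mul hφ0)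
  simp only [h1] at h3
  simpa using h3

/-- A sum over fibres `α d`, with terms of order at least `d`, is the limit of its partial sums. -/
theorem tendsto_sigma (α : ℕ → Type) [∀ d, Fintype (α d)] (f : (Σ d, α d) → Kinf Fq)
    (hf : ∀ x, f x ∈ ordGe Fq x.1) :
    Tendsto (fun K => ∑ d ∈ Finset.range K, ∑ a : α d, f ⟨d, a⟩) atTop (𝓝 (∑' x, f x)) := by
  have hs : Summable f := by
    refine summable_of fun D => ?_
    refine (Set.finite_range (fun x : Σ d : Fin D.toNat, α d =>
      (⟨x.1, x.2⟩ : Σ d, α d))).subset ?_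
    rintro ⟨d, a⟩ hx
    rw [Set.mem_ofPred_eq] at hx
    have : d < D.toNat := by
      by_contra h
      exact hx (ordGe_anti (by change D ≤ (d : ℤ); omega) (hf ⟨d, a⟩))
    exact ⟨⟨⟨d, this⟩, a⟩, rfl⟩
  have h1 : HasSum (fun d => ∑ a : α d, f ⟨d, a⟩) (∑' x, f x) :=
    hs.hasSum.sigma fun d => hasSum_fintype _
  exact h1.tendsto_sum_nat

theorem inv_aeval_mem {a : Fq[X]} (ha : a.Monic) {n : ℕ} (hn : 1 ≤ n) :
    (aeval (theta Fq) a ^ n)⁻¹ ∈ ordGe Fq a.natDegree := by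
  rw [mem_ordGe, map_inv₀, map_pow, v_aeval ha.ne_zero, ← WithZero.exp_nsmul, ← WithZero.exp_neg,
    WithZero.exp_le_exp, nsmul_eq_mul, neg_le_neg_iff]
  exact le_mul_of_one_le_left (by omega) (by exact_mod_cast hn)

/-- `ζ(n)` as a series of power sums. -/
theorem tendsto_zeta_one {n : ℕ} (hn : 1 ≤ n) :
    Tendsto (fun K => ∑ d ∈ Finset.range K, powerSum Fq (theta Fq) d n) atTop
      (𝓝 (mzv Fq 1 ![n])) := by
  have h1 := tendsto_sigma (Fq := Fq) (fun d => Mon Fq d)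
    (fun x => (aeval (theta Fq) x.2.1 ^ n)⁻¹) (fun x => by
      have := inv_aeval_mem x.2.2.1 hn
      rwa [x.2.2.2] at this)
  suffices hm : mzv Fq 1 ![n] = ∑' x : Σ d, Mon Fq d, (aeval (theta Fq) x.2.1 ^ n)⁻¹ by
    rw [hm]
    exact h1
  rw [mzv]
  let T : (Σ d, Mon Fq d) → {a : Fin 1 → Polynomial Fq //
      (∀ i, (a i).Monic) ∧ ∀ i j : Fin 1, i < j → (a j).degree < (a i).degree} :=
    fun x => ⟨fun _ => x.2.1, fun _ => x.2.2.1, fun i j hij => by omega⟩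
  have hT : Function.Bijective T := by
    constructor
    · rintro ⟨d, a, ha, rfl⟩ ⟨d', a', ha', rfl⟩ h
      have : a = a' := congrFun (congrArg Subtype.val h) 0
      subst this
      rfl
    · rintro ⟨a, ha, ha'⟩
      refine ⟨⟨(a 0).natDegree, a 0, ha 0, rfl⟩, Subtype.ext ?_⟩
      funext i
      rw [Subsingleton.elim i 0]
  rw [← (Equiv.ofBijective T hT).tsum_eq]
  refine tsum_congr fun x => ?_
  rw [Fin.prod_univ_one]
  rfl

/-- `ζ(n, n)` as an iterated series of power sums. -/
theorem tendsto_zeta_two {n : ℕ} (hn : 1 ≤ n) :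
    Tendsto (fun K => ∑ d ∈ Finset.range K, powerSum Fq (theta Fq) d n *
      ∑ d' ∈ Finset.range d, powerSum Fq (theta Fq) d' n) atTop
      (𝓝 (mzv Fq 2 ![n, n])) := by
  have h1 := tendsto_sigma (Fq := Fq) (fun d => Mon Fq d × Σ d' : Fin d, Mon Fq d')
    (fun x => (aeval (theta Fq) x.2.1.1 ^ n)⁻¹ * (aeval (theta Fq) x.2.2.2.1 ^ n)⁻¹) (fun x => by
      have h1 := inv_aeval_mem x.2.1.2.1 hn
      have h2 := inv_aeval_mem x.2.2.2.2.1 hn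
      rw [x.2.1.2.2] at h1
      exact ordGe_anti (by omega) (mul_mem_ordGe h1 h2))
  convert h1 using 2
  · refine Finset.sum_congr rfl fun d _ => ?_
    rw [Fintype.sum_prod_type, powerSum, Finset.sum_mul]
    refine Finset.sum_congr rfl fun a _ => ?_
    dsimp only
    rw [← Finset.mul_sum, Fintype.sum_sigma, Finset.sum_range]
    rfl
  · rw [mzv]
    let T : (Σ d, Mon Fq d × Σ d' : Fin d, Mon Fq d') → {a : Fin 2 → Polynomial Fq //
        (∀ i, (a i).Monic) ∧ ∀ i j : Fin 2, i < j → (a j).degree < (a i).degree} :=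
      fun x => ⟨![x.2.1.1, x.2.2.2.1], fun i => by
        fin_cases i
        · exact x.2.1.2.1
        · exact x.2.2.2.2.1, fun i j hij => by
        have hi : i = 0 := by omega
        have hj : j = 1 := by omega
        subst hi hj
        change x.2.2.2.1.degree < x.2.1.1.degree
        rw [degree_eq_natDegree x.2.1.2.1.ne_zero, degree_eq_natDegree x.2.2.2.2.1.ne_zero,
          x.2.1.2.2, x.2.2.2.2.2]
        exact_mod_cast x.2.2.1.2⟩
    have hT : Function.Bijective T := by
      constructor
      · rintro ⟨d, ⟨a, ha, rfl⟩, ⟨e, he⟩, b, hb, hbe⟩ ⟨d', ⟨a', ha', rfl⟩, ⟨e', he'⟩, b', hb', hbe'⟩ h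
        have h0 : a = a' := congrFun (congrArg Subtype.val h) 0
        have h1 : b = b' := congrFun (congrArg Subtype.val h) 1
        change b.natDegree = e at hbe
        change b'.natDegree = e' at hbe'
        subst h0 h1 hbe hbe'
        rfl
      · rintro ⟨a, ha, ha'⟩
        have hdeg := ha' 0 1 (by decide)
        rw [degree_eq_natDegree (ha 0).ne_zero, degree_eq_natDegree (ha 1).ne_zero] at hdeg
        refine ⟨⟨(a 0).natDegree, ⟨a 0, ha 0, rfl⟩, ⟨(a 1).natDegree, by exact_mod_cast hdeg⟩,
          a 1, ha 1, rfl⟩, Subtype.ext ?_⟩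
        funext i
        fin_cases i <;> rfl
    rw [← (Equiv.ofBijective T hT).tsum_eq]
    refine tsum_congr fun x => ?_
    rw [Fin.prod_univ_two, mul_inv]
    rfl

end TwoVar

end

/-! ### The period as a value, and nonvanishing of `ζ(n)` -/

section
set_option linter.unusedSectionVars false

namespace TwoVar
open Polynomial Filter Topology KinfVal AndersonThakur

variable {Fq : Type} [Field Fq] [Fintype Fq]

variable (Fq) in
/-- The one-units `1 + (elements of order at least D)`. -/
def OneUnit (D : ℤ) (x : Kinf Fq) : Prop := x - 1 ∈ ordGe Fq D

theorem OneUnit.v_eq_one {D : ℤ} (hD : 1 ≤ D) {x : Kinf Fq} (hx : OneUnit Fq D x) :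
    Valued.v x = 1 := by
  have h1 : Valued.v (x - 1) < 1 := by
    refine (mem_ordGe.1 hx).trans_lt ?_
    rw [← WithZero.exp_zero, WithZero.exp_lt_exp]
    omega
  have := Valuation.map_one_add_of_lt _ h1
  rwa [add_sub_cancel] at this

theorem OneUnit.ne_zero {D : ℤ} (hD : 1 ≤ D) {x : Kinf Fq} (hx : OneUnit Fq D x) : x ≠ 0 := by
  intro h
  have := hx.v_eq_one hD
  rw [h, map_zero] at this
  exact zero_ne_one this

theorem OneUnit.mul {D : ℤ} (hD : 1 ≤ D) {x y : Kinf Fq} (hx : OneUnit Fq D x)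
    (hy : OneUnit Fq D y) : OneUnit Fq D (x * y) := by
  have h1 : (x - 1) * y ∈ ordGe Fq (D + 0) := mul_mem_ordGe hx (by
    rw [mem_ordGe, hy.v_eq_one hD]; simp)
  rw [add_zero] at h1
  have := add_mem h1 hy
  rw [OneUnit]
  convert this using 1
  ring

theorem OneUnit.inv {D : ℤ} (hD : 1 ≤ D) {x : Kinf Fq} (hx : OneUnit Fq D x) :
    OneUnit Fq D x⁻¹ := by
  have h1 : -(x - 1) * x⁻¹ ∈ ordGe Fq (D + 0) := mul_mem_ordGe (neg_mem hx) (by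
    rw [mem_ordGe, map_inv₀, hx.v_eq_one hD]; simp)
  rw [add_zero] at h1
  rw [OneUnit]
  convert h1 using 1
  rw [neg_sub, sub_mul, one_mul, mul_inv_cancel₀ (hx.ne_zero hD)]

theorem OneUnit.prod {D : ℤ} (hD : 1 ≤ D) {ι : Type} (s : Finset ι) (p : ι → Kinf Fq)
    (hp : ∀ i ∈ s, OneUnit Fq D (p i)) : OneUnit Fq D (∏ i ∈ s, p i) := by
  classical
  induction s using Finset.induction_on with
  | empty => rw [Finset.prod_empty, OneUnit, sub_self]; exact zero_mem _
  | insert a s ha ih =>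
    rw [Finset.prod_insert ha]
    exact (hp a (Finset.mem_insert_self a s)).mul hD
      (ih fun i hi => hp i (Finset.mem_insert_of_mem hi))

/-- The product defining the Carlitz period is the value at `y = θ⁻¹` of the series `u`. -/
theorem tprod_eq_ev_u [CharP (Kinf Fq) 2] {u : bdd Fq}
    (hu0 : PowerSeries.constantCoeff u.1 = 1) (hu : tau Fq u.1 = oneAdd Fq * u.1) :
    ∏' i : ℕ, (1 - theta Fq ^ ((1 : ℤ) - (Fintype.card Fq : ℤ) ^ (i + 1)))⁻¹ = ev 0 u := by
  set p : ℕ → Kinf Fq := fun i => (1 - theta Fq ^ ((1 : ℤ) - (Fintype.card Fq : ℤ) ^ (i + 1)))⁻¹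
    with hp
  have hθ : theta Fq ≠ 0 := theta_ne_zero
  have hpU : ∀ (i : ℕ) (D : ℤ), 1 ≤ D → D ≤ i + 1 → OneUnit Fq D (p i) := by
    intro i D hD hDi
    refine OneUnit.inv hD ?_
    rw [OneUnit, sub_sub_cancel_left]
    refine neg_mem (ordGe_anti ?_ (zpow_mem_ordGe _))
    have : i + 1 < Fintype.card Fq ^ (i + 1) := Nat.lt_pow_self card_ge_two
    zify at this
    omega
  have hp0 : ∀ i, p i ≠ 0 := fun i => (hpU i 1 le_rfl (by omega)).ne_zero le_rfl
  have hrec : ∀ d, p d * ev (d + 1) u = ev d u := by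
    intro d
    have h1 := ev_u_equation hu d
    have h2 : (theta Fq ^ Fintype.card Fq ^ d) ^ Fintype.card Fq ≠ 0 :=
      pow_ne_zero _ (pow_ne_zero _ hθ)
    have h3 : (p d)⁻¹ = 1 + theta Fq * ((theta Fq ^ Fintype.card Fq ^ d) ^ Fintype.card Fq)⁻¹ := by
      rw [hp]
      beta_reduce
      rw [inv_inv, CharTwo.sub_eq_add, zpow_sub₀ hθ, zpow_one, div_eq_mul_inv, ← pow_mul,
        ← pow_succ]
      norm_cast
    have h4 : (p d)⁻¹ * ev d u = ev (d + 1) u := by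
      refine mul_left_cancel₀ h2 ?_
      rw [h1, h3]
      have := mul_inv_cancel₀ h2
      linear_combination (theta Fq * ev d u) * this
    rw [← h4, mul_inv_cancel_left₀ (hp0 d)]
  have hpart : ∀ K, (∏ i ∈ Finset.range K, p i) * ev K u = ev 0 u := by
    intro K
    induction K with
    | zero => simp
    | succ K ih => rw [Finset.prod_range_succ, mul_assoc, hrec, ih]
  refine HasProd.tprod_eq ?_
  obtain ⟨b, hb⟩ := ev_mem_ordGe u
  have hb := hb 0
  rw [HasProd, SummationFilter.unconditional_filter, ← tendsto_sub_nhds_zero_iff, tendsto_zero_iff]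
  intro D
  set D' : ℤ := max 1 (D - b)
  have hD' : 1 ≤ D' := le_max_left _ _
  have h1 := (tendsto_zero_iff.1 (tendsto_ev_u hu0) D').and (eventually_ge_atTop D'.toNat)
  obtain ⟨K, hK, hKD⟩ := h1.exists
  filter_upwards [eventually_ge_atTop (Finset.range K)] with s hs
  have hK' : OneUnit Fq D' (ev K u) := hK
  have h2 : ∏ i ∈ s, p i = ev 0 u * ((ev K u)⁻¹ * ∏ i ∈ s \ Finset.range K, p i) := by
    rw [← hpart K, ← Finset.prod_sdiff hs, mul_comm, mul_assoc,
      mul_inv_cancel_left₀ (hK'.ne_zero hD')]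
  have h3 : OneUnit Fq D' ((ev K u)⁻¹ * ∏ i ∈ s \ Finset.range K, p i) := by
    refine (hK'.inv hD').mul hD' (OneUnit.prod hD' _ _ fun i hi => hpU i D' hD' ?_)
    rw [Finset.mem_sdiff, Finset.mem_range] at hi
    omega
  rw [h2, ← mul_sub_one]
  refine ordGe_anti ?_ (mul_mem_ordGe hb h3)
  have := le_max_right 1 (D - b)
  change D ≤ b + max 1 (D - b)
  omega

/-- The term `a = 1` dominates: `ζ(n)` is `1` plus elements of positive order. -/
theorem mzv_one_ne_zero {n : ℕ} (hn : 1 ≤ n) : mzv Fq 1 ![n] ≠ 0 := by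
  intro h0
  have h1 := tendsto_zeta_one (Fq := Fq) hn
  rw [h0, tendsto_zero_iff] at h1
  obtain ⟨K, hK, hK1⟩ := ((h1 1).and (eventually_ge_atTop 1)).exists
  obtain ⟨m, rfl⟩ := Nat.exists_eq_add_of_le' hK1
  rw [Finset.sum_range_succ'] at hK
  have h2 : ∑ k ∈ Finset.range m, powerSum Fq (theta Fq) (k + 1) n ∈ ordGe Fq 1 := by
    refine sum_mem fun k _ => sum_mem fun a _ => ?_
    have := inv_aeval_mem (Fq := Fq) a.2.1 hn
    rw [a.2.2] at this
    exact ordGe_anti (by omega) this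
  have h3 : powerSum Fq (theta Fq) 0 n = 1 := by
    have : ∀ a : Mon Fq 0, ((aeval (theta Fq) a.1) ^ n)⁻¹ = 1 := by
      intro a
      rw [(Polynomial.Monic.natDegree_eq_zero a.2.1).1 a.2.2]
      simp
    rw [powerSum, Finset.sum_congr rfl fun a _ => this a, Finset.sum_const, Finset.card_univ,
      card_Mon]
    simp
  have h4 := sub_mem hK h2
  rw [add_sub_cancel_left, h3, mem_ordGe, map_one, ← WithZero.exp_zero, WithZero.exp_le_exp] at h4
  omega

end TwoVar

end

/-! ### Passage to independence over `k̄` -/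

section
set_option linter.unusedSectionVars false

namespace TwoVar
open Polynomial Filter Topology KinfVal AndersonThakur

variable {Fq : Type} [Field Fq] [Fintype Fq]

/-- Independence over `𝔽_q[θ]`, with the multizeta values renormalized by elements of `𝔽_q(θ)`:
`Γ(θ) ζ(n)` and `Γ(θ)² ζ(n,n)` are `θ ^ c`, resp. `θ ^ (2 * c)`, times values at `y = 1/θ` of
the series `f`, `g`. -/
theorem exists_algIndep_values (hp : ringChar Fq = 2) {n : ℕ} (hn : 1 ≤ n)
    (hodd : ¬ (Fintype.card Fq - 1) ∣ n) :
    ∃ (x : Fin 3 → Kinf Fq) (Γ : Fq[X]) (c : ℕ), Γ ≠ 0 ∧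
      x 0 = ∏' i : ℕ, (1 - theta Fq ^ ((1 : ℤ) - (Fintype.card Fq : ℤ) ^ (i + 1)))⁻¹ ∧
      theta Fq ^ c * x 1 = aeval (theta Fq) Γ * mzv Fq 1 ![n] ∧
      theta Fq ^ (2 * c) * x 2 = aeval (theta Fq) Γ ^ 2 * mzv Fq 2 ![n, n] ∧
      ∀ p : MvPolynomial (Fin 3) Fq[X],
        p.eval₂ (aeval (theta Fq)).toRingHom x = 0 → p = 0 := by
  have hch := charP_Kinf hp
  have hq1 : 1 ≤ Fintype.card Fq := Fintype.card_pos
  obtain ⟨m, rfl⟩ : ∃ m, n = m + 1 := ⟨n - 1, by omega⟩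
  obtain ⟨Γ, h, hΓ, hdeg, hval⟩ := good_powerSum (θ := theta Fq)
    (fun j => theta_pow_sub_ne_zero j) transcendental_theta m
  have hG : aeval (theta Fq) Γ ≠ 0 := by
    intro h0
    exact transcendental_theta ⟨Γ, hΓ, h0⟩
  obtain ⟨e, he⟩ : ∃ e, e + (Fintype.card Fq - 1) * h.natDegree = (m + 1) * Fintype.card Fq :=
    ⟨(m + 1) * Fintype.card Fq - (Fintype.card Fq - 1) * h.natDegree,
      Nat.sub_add_cancel (hdeg.trans (by nlinarith))⟩
  have he1 : 1 ≤ e := by nlinarith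
  have he' : Fintype.card Fq * h.natDegree + e = h.natDegree + Fintype.card Fq * (m + 1) := by
    obtain ⟨r, hr⟩ : ∃ r, Fintype.card Fq = r + 1 := ⟨Fintype.card Fq - 1, by omega⟩
    rw [hr, Nat.add_sub_cancel] at he
    rw [hr]
    linarith
  obtain ⟨u, hu0, hu⟩ := exists_series_u (Fq := Fq)
  obtain ⟨f, hf⟩ := exists_series he1 (m + 1) (ofPoly Fq h.reverse)
  obtain ⟨g, hg⟩ := exists_series (show 1 ≤ 2 * e by omega) (2 * (m + 1))
    (ofPoly Fq h.reverse * (f + ofPoly Fq h.reverse))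
  have hf' : PowerSeries.X ^ e * tau Fq f.1 =
    oneAdd Fq ^ (m + 1) * (f.1 - (h.reverse : PowerSeries Fq[X])) := hf
  have hg' : PowerSeries.X ^ (2 * e) * tau Fq g.1 = oneAdd Fq ^ (2 * (m + 1)) *
    (g.1 - (h.reverse : PowerSeries Fq[X]) * (f.1 + (h.reverse : PowerSeries Fq[X]))) := hg
  -- the increments in the recursions for `f` and `g` are the power sums, up to the factor `Γ(θ)`
  have hs : ∀ d, (ell Fq (theta Fq) d)⁻¹ ^ (m + 1) * evd Fq (theta Fq) d h =
      aeval (theta Fq) Γ * powerSum Fq (theta Fq) d (m + 1) := by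
    intro d
    rw [← hval d]
    have h1 := pow_ne_zero (m + 1) (ell_theta_ne_zero (Fq := Fq) d)
    beta_reduce
    rw [inv_pow, mul_left_comm, mul_comm (powerSum _ _ _ _), inv_mul_cancel_left₀ h1]
  have hφ : ∀ d, nrm h.natDegree (m + 1) (d + 1) f = nrm h.natDegree (m + 1) d f -
      aeval (theta Fq) Γ * powerSum Fq (theta Fq) d (m + 1) := by
    intro d
    rw [nrm_f_succ h he' hf' d, hs]
  have hγ : ∀ d, nrm (2 * h.natDegree) (2 * (m + 1)) (d + 1) g =
      nrm (2 * h.natDegree) (2 * (m + 1)) d g -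
      aeval (theta Fq) Γ * powerSum Fq (theta Fq) d (m + 1) * nrm h.natDegree (m + 1) (d + 1) f := by
    intro d
    rw [nrm_g_succ h he' hg' d, hs, hφ, CharTwo.sub_eq_add (nrm h.natDegree (m + 1) d f)]
  have hφ0 := tendsto_nrm he1 he f
  have hγ0 := tendsto_nrm (c := 2 * h.natDegree) (n := 2 * (m + 1)) (e := 2 * e)
    (by omega) (by linear_combination 2 * he) g
  have hz1 : nrm h.natDegree (m + 1) 0 f = aeval (theta Fq) Γ * mzv Fq 1 ![m + 1] := by
    refine tendsto_nhds_unique (tendsto_telescope hφ hφ0) ?_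
    simpa only [Finset.mul_sum] using
      (tendsto_zeta_one (Fq := Fq) hn).const_mul (aeval (theta Fq) Γ)
  have hz2 : nrm (2 * h.natDegree) (2 * (m + 1)) 0 g =
      aeval (theta Fq) Γ ^ 2 * mzv Fq 2 ![m + 1, m + 1] := by
    refine tendsto_nhds_unique (tendsto_telescope_two hφ hγ hφ0 hγ0) ?_
    refine ((tendsto_zeta_two (Fq := Fq) hn).const_mul (aeval (theta Fq) Γ ^ 2)).congr fun K => ?_
    rw [Finset.mul_sum]
    refine Finset.sum_congr rfl fun d _ => ?_
    rw [← Finset.mul_sum]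
    ring
  have hn1 : nrm h.natDegree (m + 1) 0 f = theta Fq ^ h.natDegree * ev 0 f := by
    simp [nrm, ell]
  have hn2 : nrm (2 * h.natDegree) (2 * (m + 1)) 0 g =
      theta Fq ^ (2 * h.natDegree) * ev 0 g := by
    simp [nrm, ell]
  have hf0 : ev 0 f ≠ 0 := by
    intro h0
    rw [h0, mul_zero, hz1] at hn1
    exact mul_ne_zero hG (mzv_one_ne_zero hn) hn1
  refine ⟨fun i => ev 0 (![u, f, g] i), Γ, h.natDegree, hΓ, (tprod_eq_ev_u hu0 hu).symm,
    hn1.symm.trans hz1, hn2.symm.trans hz2, ?_⟩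
  exact algIndep_values ![u, f, g]
    (series_linearIndependent hp hn hodd h he u f g hu0 hu hf' hg' hf0)
    (rows h u f g hu hf' hg')

variable (Fq) in
/-- `𝔽_q[θ]` mapped into `k̄_∞`. -/
def polyHom : Fq[X] →+* KinfBar Fq :=
  (algebraMap (Kinf Fq) (KinfBar Fq)).comp (aeval (theta Fq)).toRingHom

theorem polyHom_apply (a : Fq[X]) :
    polyHom Fq a = algebraMap (Kinf Fq) (KinfBar Fq) (aeval (theta Fq) a) := rfl

theorem polyHom_X : polyHom Fq X = thetaBar Fq := by
  rw [polyHom_apply, aeval_X]; rfl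

theorem polyHom_injective : Function.Injective (polyHom Fq) := by
  have h1 := transcendental_iff_injective.1 (transcendental_theta (Fq := Fq))
  exact (algebraMap (Kinf Fq) (KinfBar Fq)).injective.comp h1

theorem polyHom_mem (a : Fq[X]) : polyHom Fq a ∈ kSub Fq := by
  induction a using Polynomial.induction_on' with
  | add a b ha hb => rw [map_add]; exact add_mem ha hb
  | monomial k a =>
    have h1 : polyHom Fq (C a) ∈ kSub Fq := by
      refine Subfield.subset_closure (Or.inl ⟨a, ?_⟩)
      rw [polyHom_apply, aeval_C]
    have h2 : thetaBar Fq ∈ kSub Fq := Subfield.subset_closure (Or.inr rfl)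
    rw [← C_mul_X_pow_eq_monomial, map_mul, map_pow, polyHom_X]
    exact mul_mem h1 (pow_mem h2 k)

/-- Every element of `k` is algebraic over (the copy in `k̄_∞` of) `𝔽_q[θ]`. -/
theorem isAlgebraic_kSub (z : KinfBar Fq) (hz : z ∈ kSub Fq) :
    IsAlgebraic (polyHom Fq).range z := by
  induction hz using Subfield.closure_induction with
  | mem z hz =>
    have hmem : ∀ a, IsAlgebraic (polyHom Fq).range (polyHom Fq a) := fun a =>
      isAlgebraic_algebraMap (⟨polyHom Fq a, ⟨a, rfl⟩⟩ : (polyHom Fq).range)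
    rcases hz with ⟨a, rfl⟩ | rfl
    · have := hmem (C a)
      rwa [polyHom_apply, aeval_C] at this
    · have := hmem X
      rwa [polyHom_X] at this
  | one => exact isAlgebraic_one
  | add _ _ _ _ ha hb => exact ha.add hb
  | neg _ _ ha => exact ha.neg
  | inv _ _ ha => exact ha.inv
  | mul _ _ _ _ ha hb => exact ha.mul hb

/-- Algebraic independence over `k̄` follows from independence over `𝔽_q[θ]`. -/
theorem algIndep_kbar {ι : Type} (x : ι → Kinf Fq)
    (hx : ∀ p : MvPolynomial ι Fq[X], p.eval₂ (aeval (theta Fq)).toRingHom x = 0 → p = 0) :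
    AlgebraicIndependent (kbar Fq) (fun i => algebraMap (Kinf Fq) (KinfBar Fq) (x i)) := by
  have h1 : AlgebraicIndependent (polyHom Fq).range
      (fun i => algebraMap (Kinf Fq) (KinfBar Fq) (x i)) := by
    rw [algebraicIndependent_iff]
    intro p hp
    obtain ⟨P, rfl⟩ := MvPolynomial.map_surjective (polyHom Fq).rangeRestrict
      (polyHom Fq).rangeRestrict_surjective p
    rw [MvPolynomial.aeval_def, MvPolynomial.eval₂_map] at hp
    have h2 : algebraMap (Kinf Fq) (KinfBar Fq)
        (P.eval₂ (aeval (theta Fq)).toRingHom x) = 0 := by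
      rw [← hp, MvPolynomial.hom_eval₂]
      rfl
    rw [hx P ((map_eq_zero _).1 h2), map_zero]
  let i1 : (polyHom Fq).range →+* kSub Fq :=
    Subring.inclusion (S := (polyHom Fq).range) (T := (kSub Fq).toSubring) (by
      rintro _ ⟨a, rfl⟩
      exact polyHom_mem a)
  let _ : Algebra (polyHom Fq).range (kSub Fq) := i1.toAlgebra
  let _ : Algebra (polyHom Fq).range (kbar Fq) := ((algebraMap (kSub Fq) (kbar Fq)).comp i1).toAlgebra
  have _ : IsScalarTower (polyHom Fq).range (kSub Fq) (KinfBar Fq) :=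
    IsScalarTower.of_algebraMap_eq' rfl
  have _ : IsScalarTower (polyHom Fq).range (kbar Fq) (KinfBar Fq) :=
    IsScalarTower.of_algebraMap_eq' rfl
  have _ : Algebra.IsAlgebraic (polyHom Fq).range (kSub Fq) := ⟨fun z => by
    rw [← isAlgebraic_algebraMap_iff (A := KinfBar Fq) (FaithfulSMul.algebraMap_injective _ _)]
    exact isAlgebraic_kSub _ z.2⟩
  have _ : Algebra.IsAlgebraic (polyHom Fq).range (kbar Fq) := ⟨fun z => by
    rw [← isAlgebraic_algebraMap_iff (A := KinfBar Fq) (FaithfulSMul.algebraMap_injective _ _)]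
    have h3 : IsAlgebraic (kSub Fq) (z : KinfBar Fq) := mem_algebraicClosure_iff.1 z.2
    exact h3.restrictScalars (polyHom Fq).range⟩
  exact h1.extendScalars (kbar Fq)

theorem mem_kbar_of_mem_kSub {z : KinfBar Fq} (hz : z ∈ kSub Fq) : z ∈ kbar Fq :=
  (algebraMap (kSub Fq) (kbar Fq) ⟨z, hz⟩).2

end TwoVar

end

/-- If `p = 2`, then for every "odd" integer `n ≥ 1` (i.e. `q − 1 ∤ n`),
the elements `π̃`, `ζ(n)` and `ζ(n,n)` are algebraically independent over `k̄`. -/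
theorem pitilde_zeta_algIndep_of_char_two
    (hp : ringChar Fq = 2)
    (n : ℕ) (hn : 1 ≤ n) (hodd : ¬ (Fintype.card Fq - 1) ∣ n)
    (η : KinfBar Fq) (hη : η ^ (Fintype.card Fq - 1) = -thetaBar Fq) :
    AlgebraicIndependent (kbar Fq)
      ![pitilde Fq η,
        algebraMap (Kinf Fq) (KinfBar Fq) (mzv Fq 1 ![n]),
        algebraMap (Kinf Fq) (KinfBar Fq) (mzv Fq 2 ![n, n])] := by
  obtain ⟨x, Γ, c, hΓ, hx0, hx1, hx2, hx⟩ := TwoVar.exists_algIndep_values hp hn hodd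
  have hθ : thetaBar Fq ≠ 0 :=
    (_root_.map_ne_zero (algebraMap (Kinf Fq) (KinfBar Fq))).2 KinfVal.theta_ne_zero
  have hθk : thetaBar Fq ∈ kSub Fq := TwoVar.polyHom_X (Fq := Fq) ▸ TwoVar.polyHom_mem _
  have hG : TwoVar.polyHom Fq Γ ≠ 0 :=
    (map_ne_zero_iff _ TwoVar.polyHom_injective).2 hΓ
  have hcard : 1 < Fintype.card Fq := Fintype.one_lt_card
  have hη0 : η ≠ 0 := by
    rintro rfl
    rw [zero_pow (by omega)] at hη
    exact hθ (neg_eq_zero.1 hη.symm)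
  have hηk : η ∈ kbar Fq := by
    refine mem_algebraicClosure_iff.2 (IsAlgebraic.of_pow (n := Fintype.card Fq - 1) (by omega) ?_)
    rw [hη]
    exact isAlgebraic_algebraMap (⟨_, neg_mem hθk⟩ : kSub Fq)
  have hrk : thetaBar Fq ^ c / TwoVar.polyHom Fq Γ ∈ kbar Fq :=
    TwoVar.mem_kbar_of_mem_kSub (div_mem (pow_mem hθk c) (TwoVar.polyHom_mem Γ))
  have hr0 : thetaBar Fq ^ c / TwoVar.polyHom Fq Γ ≠ 0 := div_ne_zero (pow_ne_zero _ hθ) hG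
  have e1 := congrArg (algebraMap (Kinf Fq) (KinfBar Fq)) hx1
  have e2 := congrArg (algebraMap (Kinf Fq) (KinfBar Fq)) hx2
  rw [map_mul, map_mul, map_pow, ← TwoVar.polyHom_apply] at e1
  rw [map_mul, map_mul, map_pow, map_pow, ← TwoVar.polyHom_apply] at e2
  refine TwoVar.algIndep_smul (TwoVar.algIndep_kbar x hx)
    ![⟨η, hηk⟩ ^ Fintype.card Fq, ⟨_, hrk⟩, ⟨_, hrk⟩ ^ 2] ?_ ?_
  · have h1 : (⟨η, hηk⟩ : kbar Fq) ≠ 0 := fun h0 => hη0 (congrArg Subtype.val h0)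
    have h2 : (⟨_, hrk⟩ : kbar Fq) ≠ 0 := fun h0 => hr0 (congrArg Subtype.val h0)
    intro i
    fin_cases i
    · exact pow_ne_zero _ h1
    · exact h2
    · exact pow_ne_zero _ h2
  · intro i
    fin_cases i
    · change pitilde Fq η = η ^ Fintype.card Fq * algebraMap (Kinf Fq) (KinfBar Fq) (x 0)
      rw [hx0, pitilde]
    · change _ = thetaBar Fq ^ c / TwoVar.polyHom Fq Γ * algebraMap (Kinf Fq) (KinfBar Fq) (x 1)
      rw [div_mul_eq_mul_div, eq_div_iff hG]
      exact (mul_comm _ _).trans e1.symm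
    · change _ = (thetaBar Fq ^ c / TwoVar.polyHom Fq Γ) ^ 2 *
        algebraMap (Kinf Fq) (KinfBar Fq) (x 2)
      rw [div_pow, div_mul_eq_mul_div, eq_div_iff (pow_ne_zero 2 hG), ← pow_mul, mul_comm c 2]
      exact (mul_comm _ _).trans e2.symm
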